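/- Let n = 3^{k₁} + 3^{k₂} + 3^{k₃} with integers k₁ > k₂ > k₃ ≥ 0, and let Eₙ/Fₙ be the general field extension of degree n over ℚ. Then for every finite field extension F′/Fₙ whose degree [F′ : Fₙ] is coprime to 3, the F′-algebra E′ := F′ ⊗_{Fₙ} Eₙ contains no nonzero element δ with Tr_{E′/F′}(δ) = 0 and Tr_{E′/F′}(δ³) = 0. -/

import Mathlib

noncomputable section

namespace GenExt

/-- `Lₙ = ℚ(x₁, …, xₙ)`, the field of rational functions in `n` variables over `ℚ`. -/
def L (n : ℕ) : Type := FractionRing (MvPolynomial (Fin n) ℚ)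

noncomputable instance (n : ℕ) : Field (L n) :=
  inferInstanceAs (Field (FractionRing (MvPolynomial (Fin n) ℚ)))

noncomputable instance (n : ℕ) : Algebra (MvPolynomial (Fin n) ℚ) (L n) :=
  inferInstanceAs (Algebra (MvPolynomial (Fin n) ℚ) (FractionRing (MvPolynomial (Fin n) ℚ)))

instance (n : ℕ) : IsFractionRing (MvPolynomial (Fin n) ℚ) (L n) :=
  inferInstanceAs
    (IsFractionRing (MvPolynomial (Fin n) ℚ) (FractionRing (MvPolynomial (Fin n) ℚ)))

/-- The automorphism of `Lₙ` induced by a permutation `σ ∈ Sₙ` of the variables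
`x₁, …, xₙ`. -/
noncomputable def permAut (n : ℕ) (σ : Equiv.Perm (Fin n)) : L n ≃+* L n :=
  IsFractionRing.ringEquivOfRingEquiv (MvPolynomial.renameEquiv ℚ σ).toRingEquiv

/-- The subfield of `Lₙ` consisting of elements fixed by all permutations in `S`. -/
noncomputable def fixedSubfield (n : ℕ) (S : Set (Equiv.Perm (Fin n))) : Subfield (L n) where
  carrier := {a | ∀ σ ∈ S, permAut n σ a = a}
  mul_mem' := fun ha hb σ hσ => by rw [map_mul, ha σ hσ, hb σ hσ]
  one_mem' := fun σ _ => map_one _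
  add_mem' := fun ha hb σ hσ => by rw [map_add, ha σ hσ, hb σ hσ]
  zero_mem' := fun σ _ => map_zero _
  neg_mem' := fun ha σ hσ => by rw [map_neg, ha σ hσ]
  inv_mem' := fun a ha σ hσ => by rw [map_inv₀, ha σ hσ]

/-- `Fₙ = Lₙ^{Sₙ}`, the fixed field of the full symmetric group. -/
noncomputable def F (n : ℕ) : Subfield (L n) := fixedSubfield n Set.univ

/-- `Eₙ = Lₙ^{Sₙ₋₁}`, the fixed field of the subgroup of permutations fixing `x₁`
(i.e. permuting only `x₂, …, xₙ`). -/
noncomputable def E (n : ℕ) : Subfield (L n) :=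
  fixedSubfield n {σ | ∀ i : Fin n, (i : ℕ) = 0 → σ i = i}

theorem F_le_E (n : ℕ) : F n ≤ E n := fun _ ha σ _ => ha σ (Set.mem_univ σ)

/-- `Eₙ` is an `Fₙ`-algebra via the inclusion `Fₙ ⊆ Eₙ`. -/
noncomputable instance (n : ℕ) : Algebra (F n) (E n) :=
  (Subfield.inclusion (F_le_E n)).toAlgebra

end GenExt

open scoped TensorProduct

/-!
Suppose first that `δ` is a combination `y₁, y₂, y₃` of the unit elements of three blocks of sizes
`3 ^ k₁, 3 ^ k₂, 3 ^ k₃`. The two trace equations read `∑ 3 ^ kᵢ yᵢ = ∑ 3 ^ kᵢ yᵢ³ = 0`, and these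
have no nonzero rational solution: eliminating `y₃` leads, by `3`-adic descent, to coprime integers
with `X³ + Y³ = 9 ^ b (9 ^ m X + Y)³`. For `b ≡ 0, 2 mod 3` this is excluded by Fermat's last
theorem for cubes and its variant `X³ + Y³ = 3 Z³`; for `b ≡ 1 mod 3` it is a point on the curve
`X³ + Y³ = 9 Z³`, whose group of rational points is generated by `(1 : 2 : 1)`, and divisibility and
size of the coordinates of doubles exclude it.

Next, adjoin variables `t` and their cube roots, so that each block becomes an iterated extension by
cube roots. A field extension of degree prime to `3` carries a discrete valuation over `t = 0` with
ramification index and residue degree prime to `3`, so the monomials `1, t^(1/3), t^(2/3)` have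
valuations distinct modulo `3` and the leading terms of a solution cannot cancel. Hence the system
stays anisotropic at every stage, over every extension of degree prime to `3`.

After sufficiently many steps the blocks contain `n` algebraically independent elements permuted by
the Galois group. Sending the variables `xᵢ` to them specializes the general extension to the
anisotropic one, and trace-zero solutions specialize along.
-/

namespace HermiteJoubert

/-! ### Eisenstein integers -/

/-- The ring `ℤ[ω]`, `ω² = -1 - ω`, of Eisenstein integers; `⟨a, b⟩` stands for `a + b ω`. -/
abbrev EisensteinInt : Type := QuadraticAlgebra ℤ (-1) (-1)

namespace EisensteinInt

open QuadraticAlgebra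

lemma norm_eq (x : EisensteinInt) : norm x = x.re ^ 2 - x.re * x.im + x.im ^ 2 := by
  rw [norm_def]; ring

lemma norm_pos {x : EisensteinInt} (hx : x ≠ 0) : 0 < norm x := by
  rw [norm_eq]
  by_cases him : x.im = 0
  · have hre : x.re ≠ 0 := fun hre ↦ hx (QuadraticAlgebra.ext hre him)
    rw [him]
    have := pow_pos (abs_pos.2 hre) 2
    rw [sq_abs] at this
    linarith
  · have : 0 < x.im ^ 2 := by positivity
    nlinarith [sq_nonneg (2 * x.re - x.im)]

lemma norm_nonneg (x : EisensteinInt) : 0 ≤ norm x := by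
  rcases eq_or_ne x 0 with rfl | hx
  · simp
  · exact (norm_pos hx).le

lemma exists_norm_sub_mul_lt (x : EisensteinInt) {y : EisensteinInt} (hy : y ≠ 0) :
    ∃ q : EisensteinInt, norm (x - y * q) < norm y := by
  have exists_round (p N : ℤ) (hN : 0 < N) : ∃ r : ℤ, (2 * (p - N * r)) ^ 2 ≤ N ^ 2 := by
    refine ⟨(2 * p + N) / (2 * N), sq_le_sq' ?_ ?_⟩ <;>
      nlinarith [Int.emod_add_mul_ediv (2 * p + N) (2 * N),
        Int.emod_nonneg (2 * p + N) (b := 2 * N) (by omega),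
        Int.emod_lt_of_pos (2 * p + N) (b := 2 * N) (by omega)]
  have hN := norm_pos hy
  obtain ⟨r, hr⟩ := exists_round (x * star y).re (norm y) hN
  obtain ⟨s, hs⟩ := exists_round (x * star y).im (norm y) hN
  refine ⟨⟨r, s⟩, lt_of_mul_lt_mul_right ?_ hN.le⟩
  set e := (x * star y).re - norm y * r with he
  set f := (x * star y).im - norm y * s with hf
  have key : norm (x - y * ⟨r, s⟩) * norm y = e ^ 2 - e * f + f ^ 2 := by
    rw [he, hf, norm_eq, norm_eq]
    simp only [re_sub, re_mul, im_sub, im_mul, re_star, im_star]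
    ring
  rw [key]
  nlinarith [sq_nonneg (e + f), mul_pos hN hN]

/-- Division with remainder in `ℤ[ω]`, the norm being the Euclidean function. -/
@[reducible]
def euclideanDomain : EuclideanDomain EisensteinInt := by
  classical
  exact
  { (inferInstance : CommRing EisensteinInt) with
    exists_pair_ne := ⟨0, 1, fun h ↦ zero_ne_one (congrArg re h)⟩
    quotient := fun x y ↦ if hy : y = 0 then 0 else (exists_norm_sub_mul_lt x hy).choose
    remainder := fun x y ↦
      x - y * (if hy : y = 0 then 0 else (exists_norm_sub_mul_lt x hy).choose)
    quotient_zero := fun _ ↦ dif_pos rfl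
    quotient_mul_add_remainder_eq := fun _ _ ↦ by ring
    r := fun x y ↦ (norm x).natAbs < (norm y).natAbs
    r_wellFounded := (measure fun x : EisensteinInt ↦ (norm x).natAbs).wf
    remainder_lt := fun x y hy ↦ by
      rw [dif_neg hy]
      exact Int.natAbs_lt_natAbs_of_nonneg_of_lt (norm_nonneg _)
        (exists_norm_sub_mul_lt x hy).choose_spec
    mul_left_not_lt := fun x y hy ↦ by
      rw [not_lt, map_mul, Int.natAbs_mul]
      exact Nat.le_mul_of_pos_right _ (Int.natAbs_pos.2 (norm_pos hy).ne') }

instance : IsDomain EisensteinInt := euclideanDomain.instIsDomain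

instance : IsPrincipalIdealRing EisensteinInt := euclideanDomain.to_principal_ideal_domain

lemma eq_of_isUnit {u : EisensteinInt} (hu : IsUnit u) :
    u = ⟨1, 0⟩ ∨ u = ⟨-1, 0⟩ ∨ u = ⟨0, 1⟩ ∨ u = ⟨0, -1⟩ ∨ u = ⟨1, 1⟩ ∨ u = ⟨-1, -1⟩ := by
  have hnorm : norm u = 1 :=
    (Int.isUnit_iff.1 (isUnit_iff_norm_isUnit.1 hu)).resolve_right
      fun h ↦ absurd (norm_nonneg u) (by omega)
  rw [norm_eq] at hnorm
  obtain ⟨a, b⟩ := u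
  simp only at hnorm
  obtain ⟨ha, ha'⟩ : -1 ≤ a ∧ a ≤ 1 := by
    constructor <;> nlinarith [sq_nonneg (a - 2 * b)]
  obtain ⟨hb, hb'⟩ : -1 ≤ b ∧ b ≤ 1 := by
    constructor <;> nlinarith [sq_nonneg (2 * a - b)]
  simp only [QuadraticAlgebra.mk.injEq]
  interval_cases a <;> interval_cases b <;> simp_all

lemma mul_star_eq_intCast (m W : ℤ) :
    (⟨m, W⟩ : EisensteinInt) * star ⟨m, W⟩ = ((m ^ 2 - m * W + W ^ 2 : ℤ) : EisensteinInt) := by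
  ext
  · rw [re_intCast, Int.cast_id]; simp only [re_mul, re_star, im_star]; ring
  · rw [im_intCast]; simp only [im_mul, re_star, im_star]; ring

lemma mk_pow_three (s t : ℤ) :
    (⟨s, t⟩ : EisensteinInt) ^ 3 =
      ⟨s ^ 3 + t ^ 3 - 3 * s * t ^ 2, 3 * s * t * (s - t)⟩ := by
  rw [pow_three]
  ext <;> simp only [re_mul, im_mul] <;> ring

lemma isCoprime_star {m W : ℤ} (hmW : IsCoprime m W)
    (h3 : ¬ (3 : ℤ) ∣ m ^ 2 - m * W + W ^ 2) :
    IsCoprime (⟨m, W⟩ : EisensteinInt) (star ⟨m, W⟩) := by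
  set x : EisensteinInt := ⟨m, W⟩ with hx
  obtain ⟨p, q, hpq⟩ := hmW
  obtain ⟨r, s, hrs⟩ := (Int.prime_three.coprime_iff_not_dvd).2 h3
  -- Since `x - x̄ = W √-3` and `√-3 ^ 2 = -3`, the ideal `(x, x̄)` contains `3 W` and `3 m`.
  obtain ⟨α, β, hαβ⟩ : ∃ α β : EisensteinInt, α * x + β * star x = 3 := by
    refine ⟨(p : EisensteinInt) * ⟨1, -1⟩ + (q : EisensteinInt) * ⟨-1, -2⟩,
      (p : EisensteinInt) * ⟨2, 1⟩ - (q : EisensteinInt) * ⟨-1, -2⟩, ?_⟩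
    have three_eq : (3 : EisensteinInt) = ⟨3, 0⟩ := rfl
    rw [three_eq]
    ext
    · simp only [zsmul_val, Int.cast_eq, hx, star_mk, mk_sub_mk, re_add, re_mul, im_add]
      linear_combination 3 * hpq
    · simp only [zsmul_val, Int.cast_eq, hx, star_mk, mk_sub_mk, re_add, im_mul, im_add]
      ring
  refine ⟨r * α, r * β + s * x, ?_⟩
  calc r * α * x + (r * β + s * x) * star x
      = r * (α * x + β * star x) + s * (x * star x) := by ring
    _ = ((r * 3 + s * (m ^ 2 - m * W + W ^ 2) : ℤ) : EisensteinInt) := by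
        rw [hαβ, mul_star_eq_intCast]; push_cast; ring
    _ = 1 := by rw [hrs, Int.cast_one]

end EisensteinInt

/-! ### Descent on sums of two cubes -/

lemma cube_injective : Function.Injective fun a : ℤ ↦ a ^ 3 :=
  (Odd.strictMono_pow (by decide)).injective

lemma not_three_dvd_of_isCoprime {a b : ℤ} (h : IsCoprime a b) (ha : (3 : ℤ) ∣ a) :
    ¬ (3 : ℤ) ∣ b :=
  fun hb ↦ Int.prime_three.not_isUnit (h.isUnit_of_dvd' ha hb)

lemma isCoprime_three_pow_of_not_dvd {a : ℤ} (k : ℕ) (ha : ¬ (3 : ℤ) ∣ a) :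
    IsCoprime ((3 : ℤ) ^ k) a :=
  ((Int.prime_three.coprime_iff_not_dvd).2 ha).pow_left

lemma exists_cubes_of_mul_eq_mul_cube {e u v z : ℤ} (he : e ≠ 0) (hev : IsCoprime e v)
    (huv : IsCoprime u v) (h : u * v = e * z ^ 3) :
    ∃ B C : ℤ, u = e * B ^ 3 ∧ v = C ^ 3 ∧ z = B * C := by
  obtain ⟨w, rfl⟩ : e ∣ u := hev.dvd_of_dvd_mul_right ⟨z ^ 3, h⟩
  have hwv : w * v = z ^ 3 := mul_left_cancel₀ he (by rw [← h]; ring)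
  have hco : IsCoprime w v := huv.of_mul_left_right
  obtain ⟨B, rfl⟩ := Int.eq_pow_of_mul_eq_pow_odd_left hco (by decide : Odd 3) hwv
  obtain ⟨C, rfl⟩ := Int.eq_pow_of_mul_eq_pow_odd_right hco (by decide : Odd 3) hwv
  exact ⟨B, C, rfl, rfl, cube_injective (by simp only; rw [← hwv]; ring)⟩

lemma exists_eq_re_im_cube {m W C : ℤ} (hmW : IsCoprime m W)
    (h : m ^ 2 - m * W + W ^ 2 = C ^ 3) (hW : (3 : ℤ) ∣ W) :
    ∃ s t : ℤ, m = s ^ 3 + t ^ 3 - 3 * s * t ^ 2 ∧ W = 3 * s * t * (s - t) := by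
  have hm : ¬ (3 : ℤ) ∣ m := not_three_dvd_of_isCoprime hmW.symm hW
  obtain ⟨w, rfl⟩ := hW
  have hnorm : ¬ (3 : ℤ) ∣ m ^ 2 - m * (3 * w) + (3 * w) ^ 2 := by
    rintro ⟨k, hk⟩
    exact hm (Int.prime_three.dvd_of_dvd_pow (n := 2) ⟨k + m * w - 3 * w ^ 2, by linarith⟩)
  have hprod : (⟨m, 3 * w⟩ : EisensteinInt) * star ⟨m, 3 * w⟩ = (C : EisensteinInt) ^ 3 := by
    rw [EisensteinInt.mul_star_eq_intCast, h, Int.cast_pow]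
  obtain ⟨⟨s, t⟩, u, hu⟩ :=
    exists_associated_pow_of_mul_eq_pow' (EisensteinInt.isCoprime_star hmW hnorm) hprod
  rw [EisensteinInt.mk_pow_three] at hu
  have hre := congrArg QuadraticAlgebra.re hu
  have him := congrArg QuadraticAlgebra.im hu
  simp only [QuadraticAlgebra.re_mul, QuadraticAlgebra.im_mul] at hre him
  -- The units other than `±1` would force `3 ∣ m`.
  rcases EisensteinInt.eq_of_isUnit u.isUnit with h | h | h | h | h | h <;>
    rw [h] at hre him <;> simp only at hre him
  · exact ⟨s, t, by linarith, by linarith⟩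
  · exact ⟨-s, -t, by linear_combination -hre, by linear_combination -him⟩
  · exact absurd ⟨-(s * t * (s - t)), by linarith⟩ hm
  · exact absurd ⟨s * t * (s - t), by linarith⟩ hm
  · exact absurd ⟨w - s * t * (s - t), by linarith⟩ hm
  · exact absurd ⟨w + s * t * (s - t), by linarith⟩ hm

lemma exists_eq_re_im_cube_three_dvd {m W C : ℤ} (hmW : IsCoprime m W)
    (h : m ^ 2 - m * W + W ^ 2 = C ^ 3) (hW : (9 : ℤ) ∣ W) :
    ∃ s t : ℤ, (3 : ℤ) ∣ t ∧ m = s ^ 3 + t ^ 3 - 3 * s * t ^ 2 ∧ W = 3 * s * t * (s - t) := by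
  obtain ⟨s, t, hm, hst⟩ := exists_eq_re_im_cube hmW h (dvd_trans ⟨3, by norm_num⟩ hW)
  have hdvd : (3 : ℤ) ∣ s * t * (s - t) := by
    obtain ⟨w, hw⟩ := hW
    exact ⟨w, by linarith⟩
  -- Multiplying `s + t ω` by a cube root of unity does not change its cube.
  rcases Int.prime_three.dvd_or_dvd hdvd with hdvd | hdvd
  · rcases Int.prime_three.dvd_or_dvd hdvd with hs | ht
    · exact ⟨t - s, -s, (dvd_neg).2 hs, by rw [hm]; ring, by rw [hst]; ring⟩
    · exact ⟨s, t, ht, hm, hst⟩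
  · exact ⟨-t, s - t, hdvd, by rw [hm]; ring, by rw [hst]; ring⟩

lemma exists_sum_cubes_of_norm_eq_cube {m W C β : ℤ} {k : ℕ} (hk : k ≠ 0) (hmW : IsCoprime m W)
    (h : m ^ 2 - m * W + W ^ 2 = C ^ 3) (hW : W = 3 * (3 ^ k * β ^ 3)) :
    ∃ a b c : ℤ, IsCoprime b c ∧ b ^ 3 + c ^ 3 = 3 ^ k * a ^ 3 ∧ β = -(a * b * c) ∧
      C = b ^ 6 + b ^ 3 * c ^ 3 + c ^ 6 := by
  have hW9 : (9 : ℤ) ∣ W := by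
    rw [hW, show (9 : ℤ) = 3 * 3 by norm_num]
    exact mul_dvd_mul_left 3 (dvd_mul_of_dvd_left (dvd_pow_self 3 hk) _)
  obtain ⟨s, t, h3t, hm, hst⟩ := exists_eq_re_im_cube_three_dvd hmW h hW9
  have hco : IsCoprime s t := by
    obtain ⟨p, q, hpq⟩ := hmW
    exact ⟨p * s ^ 2 + q * (3 * t * (s - t)), p * (t ^ 2 - 3 * s * t),
      by rw [← hpq, hm, hst]; ring⟩
  have h3s : ¬ (3 : ℤ) ∣ s := not_three_dvd_of_isCoprime hco.symm h3t
  have h3d : ¬ (3 : ℤ) ∣ s - t := fun hd ↦ h3s ((dvd_sub_left h3t).1 hd)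
  have hsd : IsCoprime s (s - t) := by
    rw [show s - t = -t + s * 1 by ring]
    exact (IsCoprime.add_mul_left_right_iff).2 hco.neg_right
  have htd : IsCoprime t (s - t) := by
    rw [show s - t = s + t * (-1) by ring]
    exact (IsCoprime.add_mul_left_right_iff).2 hco.symm
  obtain ⟨a, D, hta, hD, hβ⟩ := exists_cubes_of_mul_eq_mul_cube (pow_ne_zero k three_ne_zero)
    (isCoprime_three_pow_of_not_dvd k (Int.prime_three.not_dvd_mul h3s h3d))
    (hco.symm.mul_right htd) (show t * (s * (s - t)) = 3 ^ k * β ^ 3 by linarith)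
  obtain ⟨b, c, hsb, hdc, hbc⟩ := exists_cubes_of_mul_eq_mul_cube one_ne_zero isCoprime_one_left
    hsd (hD.trans (one_mul _).symm)
  obtain rfl : s = b ^ 3 := by rw [hsb, one_mul]
  obtain rfl : t = b ^ 3 - c ^ 3 := by linarith
  refine ⟨a, b, -c, ?_, by linarith, by rw [hβ, hbc]; ring, ?_⟩
  · rw [hdc] at hsd
    exact ((IsCoprime.pow_iff three_pos three_pos).1 hsd).neg_right
  · apply cube_injective
    simp only
    rw [← h, hm, hst]
    ring

lemma three_dvd_add_of_dvd_add_cubes {X Y : ℤ} (h : (3 : ℤ) ∣ X ^ 3 + Y ^ 3) :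
    (3 : ℤ) ∣ X + Y := by
  obtain ⟨c, hc⟩ := h
  exact Int.prime_three.dvd_of_dvd_pow (n := 3)
    ⟨c + X ^ 2 * Y + X * Y ^ 2, by linear_combination hc⟩

/-- In these coordinates, `X ^ 3 + Y ^ 3 = 9 W (m ^ 2 - m W + W ^ 2)`. -/
lemma exists_eq_add_eq_two_mul_sub {X Y : ℤ} (hXY : IsCoprime X Y)
    (h : (3 : ℤ) ∣ X ^ 3 + Y ^ 3) :
    ∃ m W : ℤ, X = m + W ∧ Y = 2 * W - m ∧ IsCoprime m W ∧
      IsCoprime W (m ^ 2 - m * W + W ^ 2) ∧ ¬ (3 : ℤ) ∣ m ^ 2 - m * W + W ^ 2 := by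
  obtain ⟨W, hW⟩ := three_dvd_add_of_dvd_add_cubes h
  obtain ⟨m, rfl⟩ : ∃ m, X = m + W := ⟨X - W, by ring⟩
  obtain rfl : Y = 2 * W - m := by linarith
  have hmW : IsCoprime m W := by
    obtain ⟨p, q, hpq⟩ := hXY
    exact ⟨p - q, p + 2 * q, by rw [← hpq]; ring⟩
  refine ⟨m, W, rfl, rfl, hmW, ?_, fun ⟨k, hk⟩ ↦ ?_⟩
  · rw [show m ^ 2 - m * W + W ^ 2 = m ^ 2 + W * (W - m) by ring]
    exact (IsCoprime.add_mul_left_right_iff).2 hmW.symm.pow_right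
  · have hX : (3 : ℤ) ∣ m + W :=
      Int.prime_three.dvd_of_dvd_pow (n := 2) ⟨k + m * W, by linear_combination hk⟩
    refine not_three_dvd_of_isCoprime hXY hX ?_
    rw [show 2 * W - m = 3 * W - (m + W) by ring]
    exact dvd_sub (dvd_mul_right _ _) hX

lemma eq_zero_of_add_cubes_eq_three_mul_cube {X Y z : ℤ} (hXY : IsCoprime X Y)
    (h : X ^ 3 + Y ^ 3 = 3 * z ^ 3) : z = 0 := by
  induction hN : z.natAbs using Nat.strong_induction_on generalizing X Y z with
  | h N ih =>
    subst hN
    by_contra hz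
    obtain ⟨m, W, rfl, rfl, hmW, hco, h3⟩ := exists_eq_add_eq_two_mul_sub hXY ⟨_, h⟩
    have hz3 : z ^ 3 = 3 * (W * (m ^ 2 - m * W + W ^ 2)) := by linarith
    obtain ⟨z, rfl⟩ : (3 : ℤ) ∣ z := Int.prime_three.dvd_of_dvd_pow ⟨_, hz3⟩
    obtain ⟨B, C, hW, hC, rfl⟩ := exists_cubes_of_mul_eq_mul_cube (e := 3 ^ 2) (by norm_num)
      (isCoprime_three_pow_of_not_dvd 2 h3) hco (show _ = 3 ^ 2 * z ^ 3 by linarith)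
    obtain ⟨a, b, c, hbc, hsum, rfl, -⟩ := exists_sum_cubes_of_norm_eq_cube one_ne_zero hmW hC
      (show W = 3 * (3 ^ 1 * B ^ 3) by rw [hW]; ring)
    have hlt : a.natAbs < (3 * (-(a * b * c) * C)).natAbs := by
      have hle : a.natAbs ≤ (-(a * b * c) * C).natAbs :=
        Int.natAbs_le_of_dvd_ne_zero ⟨-(b * c) * C, by ring⟩ (right_ne_zero_of_mul hz)
      omega
    obtain rfl := ih _ hlt hbc (by linarith) rfl
    exact hz (by ring)

lemma exists_cubes_of_add_cubes_eq_nine_mul_cube {X Y z : ℤ} (hXY : IsCoprime X Y)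
    (h : X ^ 3 + Y ^ 3 = 9 * z ^ 3) :
    ∃ m B C : ℤ, X = m + B ^ 3 ∧ Y = 2 * B ^ 3 - m ∧ z = B * C ∧ IsCoprime m (B ^ 3) ∧
      m ^ 2 - m * B ^ 3 + (B ^ 3) ^ 2 = C ^ 3 ∧ ¬ (3 : ℤ) ∣ C := by
  obtain ⟨m, W, rfl, rfl, hmW, hco, h3⟩ :=
    exists_eq_add_eq_two_mul_sub hXY ⟨3 * z ^ 3, by linarith⟩
  obtain ⟨B, C, hB, hC, hz⟩ := exists_cubes_of_mul_eq_mul_cube one_ne_zero isCoprime_one_left hco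
    (show _ = 1 * z ^ 3 by linarith)
  rw [one_mul] at hB
  subst hB
  exact ⟨m, B, C, rfl, rfl, hz, hmW, hC, fun hd ↦ h3 (hC ▸ dvd_pow hd three_ne_zero)⟩

lemma exists_trisection {X Y z : ℤ} (hXY : IsCoprime X Y) (h : X ^ 3 + Y ^ 3 = 9 * z ^ 3)
    (hz : (3 : ℤ) ∣ z) :
    ∃ a b c : ℤ, IsCoprime b c ∧ b ^ 3 + c ^ 3 = 9 * a ^ 3 ∧
      z = -(3 * a * b * c) * (b ^ 6 + b ^ 3 * c ^ 3 + c ^ 6) ∧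
      X + Y = 3 * (-(3 * a * b * c)) ^ 3 ∧
      X ^ 2 - X * Y + Y ^ 2 = 3 * (b ^ 6 + b ^ 3 * c ^ 3 + c ^ 6) ^ 3 := by
  obtain ⟨m, B, C, rfl, rfl, rfl, hmB, hC, h3C⟩ := exists_cubes_of_add_cubes_eq_nine_mul_cube hXY h
  obtain ⟨β, rfl⟩ : (3 : ℤ) ∣ B := (Int.prime_three.dvd_or_dvd hz).resolve_right h3C
  obtain ⟨a, b, c, hbc, hsum, rfl, rfl⟩ := exists_sum_cubes_of_norm_eq_cube two_ne_zero hmB hC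
    (show (3 * β) ^ 3 = 3 * (3 ^ 2 * β ^ 3) by ring)
  exact ⟨a, b, c, hbc, by linarith, by ring, by ring, by rw [← hC]; ring⟩

/-! ### The elliptic curve `X ^ 3 + Y ^ 3 = 9 z ^ 3` -/

open WeierstrassCurve

/-- The elliptic curve `y ^ 2 = x ^ 3 - 48` over `ℚ`, a Weierstrass model of the plane cubic
`X ^ 3 + Y ^ 3 = 9 z ^ 3`. -/
def curve : WeierstrassCurve.Affine ℚ := ⟨0, 0, 0, 0, -48⟩

lemma curve_equation_iff (x y : ℚ) : curve.Equation x y ↔ y ^ 2 = x ^ 3 - 48 := by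
  rw [Affine.equation_iff]
  simp [curve, sub_eq_add_neg]

lemma curve_nonsingular {x y : ℚ} (h : y ^ 2 = x ^ 3 - 48) : curve.Nonsingular x y := by
  apply (Affine.equation_iff_nonsingular_of_Δ_ne_zero _).1 ((curve_equation_iff x y).2 h)
  simp [curve, Δ, b₂, b₄, b₆, b₈]

/-- The point `Q` is affine with `x`-coordinate `x`; this determines `Q` up to sign. -/
def HasX (Q : curve.Point) (x : ℚ) : Prop := ∃ y h, Q = .some x y h

namespace HasX

variable {Q Q' : curve.Point} {x x' : ℚ}

lemma eq_or_eq_neg (h : HasX Q x) (h' : HasX Q' x) : Q = Q' ∨ Q = -Q' := by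
  obtain ⟨y, hy, rfl⟩ := h
  obtain ⟨y', hy', rfl⟩ := h'
  exact Affine.Point.X_eq_iff.1 rfl

lemma unique (h : HasX Q x) (h' : HasX Q x') : x = x' := by
  obtain ⟨y, hy, rfl⟩ := h
  obtain ⟨y', hy', heq⟩ := h'
  exact (Affine.Point.some.inj heq).1

lemma mem_of_mem (h : HasX Q x) (h' : HasX Q' x) {G : AddSubgroup curve.Point} (hG : Q' ∈ G) :
    Q ∈ G := by
  rcases h.eq_or_eq_neg h' with rfl | rfl
  · exact hG
  · exact neg_mem hG

lemma ne_zero (h : HasX Q x) : Q ≠ 0 := by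
  obtain ⟨y, hy, rfl⟩ := h
  exact Affine.Point.some_ne_zero _

end HasX

lemma hasX_add {x₁ y₁ x₂ y₂ : ℚ} (h₁ : curve.Nonsingular x₁ y₁) (h₂ : curve.Nonsingular x₂ y₂)
    (hx : x₁ ≠ x₂) :
    HasX (Affine.Point.some x₁ y₁ h₁ + Affine.Point.some x₂ y₂ h₂)
      (((y₁ - y₂) / (x₁ - x₂)) ^ 2 - x₁ - x₂) := by
  have hX : ((y₁ - y₂) / (x₁ - x₂)) ^ 2 - x₁ - x₂ =
      curve.addX x₁ x₂ (curve.slope x₁ x₂ y₁ y₂) := by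
    rw [Affine.slope_of_X_ne hx]
    simp [Affine.addX, curve]
  rw [Affine.Point.add_of_X_ne hx, hX]
  exact ⟨_, _, rfl⟩

lemma some_add_self {x y : ℚ} (h : curve.Nonsingular x y) (hy : y ≠ 0) :
    ∃ h', Affine.Point.some x y h + Affine.Point.some x y h =
      Affine.Point.some ((3 * x ^ 2 / (2 * y)) ^ 2 - 2 * x)
        (-(3 * x ^ 2 / (2 * y) * ((3 * x ^ 2 / (2 * y)) ^ 2 - 3 * x) + y)) h' := by
  have hy' : y ≠ curve.negY x y := by
    intro h'
    have : curve.negY x y = -y := by simp [Affine.negY, curve]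
    exact hy (by linarith)
  have hX : (3 * x ^ 2 / (2 * y)) ^ 2 - 2 * x = curve.addX x x (curve.slope x x y y) := by
    rw [Affine.slope_of_Y_ne rfl hy']
    simp only [Affine.addX, Affine.negY, curve]
    ring
  have hY : -(3 * x ^ 2 / (2 * y) * ((3 * x ^ 2 / (2 * y)) ^ 2 - 3 * x) + y) =
      curve.addY x x y (curve.slope x x y y) := by
    rw [Affine.slope_of_Y_ne rfl hy']
    simp only [Affine.addY, Affine.negAddY, Affine.addX, Affine.negY, curve]
    ring
  rw [Affine.Point.add_self_of_Y_ne hy', hX, hY]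
  exact ⟨_, rfl⟩

lemma hasX_three_nsmul {x y : ℚ} (h : curve.Nonsingular x y) (hy : y ≠ 0) (hx : x ≠ 0)
    (hx3 : x ^ 3 - 192 ≠ 0) :
    HasX (3 • Affine.Point.some x y h)
      ((x ^ 9 + 4608 * x ^ 6 + 110592 * x ^ 3 - 7077888) / (9 * x ^ 2 * (x ^ 3 - 192) ^ 2)) := by
  have hxy : y ^ 2 = x ^ 3 - 48 := (curve_equation_iff x y).1 h.1
  obtain ⟨h', hdbl⟩ := some_add_self h hy
  rw [show 3 • Affine.Point.some x y h =
    Affine.Point.some x y h + Affine.Point.some x y h + Affine.Point.some x y h by abel, hdbl]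
  set l := 3 * x ^ 2 / (2 * y) with hl
  have hdiff : l ^ 2 - 3 * x = -(3 * x * (x ^ 3 - 192)) / (4 * y ^ 2) := by
    rw [hl]
    field_simp
    linear_combination (-16) * hxy
  have hdiff0 : l ^ 2 - 3 * x ≠ 0 := by
    rw [hdiff]
    exact div_ne_zero (neg_ne_zero.2 (mul_ne_zero (mul_ne_zero three_ne_zero hx) hx3))
      (by positivity)
  have hne : l ^ 2 - 2 * x ≠ x := fun heq ↦ hdiff0 (by linarith)
  have hslope : (-(l * (l ^ 2 - 3 * x) + y) - y) / (l ^ 2 - 2 * x - x) =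
      -l + 8 * y ^ 3 / (3 * x * (x ^ 3 - 192)) := by
    rw [show l ^ 2 - 2 * x - x = l ^ 2 - 3 * x by ring, hdiff]
    field_simp
    ring
  have hy2 : x ^ 3 - 48 ≠ 0 := by rw [← hxy]; positivity
  have hsq : (-l + 8 * y ^ 3 / (3 * x * (x ^ 3 - 192))) ^ 2 =
      9 * x ^ 4 / (4 * y ^ 2) - 8 * x * y ^ 2 / (x ^ 3 - 192) +
        64 * (y ^ 2) ^ 3 / (9 * x ^ 2 * (x ^ 3 - 192) ^ 2) := by
    rw [hl]
    field_simp
    ring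
  have hX : (x ^ 9 + 4608 * x ^ 6 + 110592 * x ^ 3 - 7077888) / (9 * x ^ 2 * (x ^ 3 - 192) ^ 2) =
      ((-(l * (l ^ 2 - 3 * x) + y) - y) / (l ^ 2 - 2 * x - x)) ^ 2 - (l ^ 2 - 2 * x) - x := by
    rw [hslope, hsq, show l ^ 2 - 2 * x = x + (l ^ 2 - 3 * x) by ring, hdiff, hxy]
    field_simp
    ring
  rw [hX]
  exact hasX_add h' h hne

/-- `(X : Y : z)` is a point of the plane cubic `X ^ 3 + Y ^ 3 = 9 z ^ 3`, other than the origin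
`(1 : -1 : 0)` of its group law. -/
structure OnCubic {R : Type*} [CommRing R] (X Y z : R) : Prop where
  eq : X ^ 3 + Y ^ 3 = 9 * z ^ 3
  ne_zero : z ≠ 0

/-- The first coordinate of the isomorphism from `X ^ 3 + Y ^ 3 = 9 z ^ 3` to `curve`. -/
def xCoord (X Y z : ℚ) : ℚ := 12 * z / (X + Y)

/-- The second coordinate of the isomorphism from `X ^ 3 + Y ^ 3 = 9 z ^ 3` to `curve`. -/
def yCoord (X Y : ℚ) : ℚ := 12 * (X - Y) / (X + Y)

lemma xCoord_comm (X Y z : ℚ) : xCoord X Y z = xCoord Y X z := by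
  rw [xCoord, xCoord, add_comm]

lemma xCoord_mul {g : ℚ} (hg : g ≠ 0) (X Y z : ℚ) :
    xCoord (g * X) (g * Y) (g * z) = xCoord X Y z := by
  rw [xCoord, xCoord, ← mul_add, mul_left_comm, mul_div_mul_left _ _ hg]

lemma yCoord_mul {g : ℚ} (hg : g ≠ 0) (X Y : ℚ) : yCoord (g * X) (g * Y) = yCoord X Y := by
  rw [yCoord, yCoord, ← mul_add, ← mul_sub, mul_left_comm, mul_div_mul_left _ _ hg]

lemma xCoord_one_two_one : xCoord 1 2 1 = 4 := by norm_num [xCoord]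

lemma yCoord_one_two : yCoord 1 2 = -4 := by norm_num [yCoord]

namespace OnCubic

section CommRing

variable {R : Type*} [CommRing R] {X Y z : R}

lemma swap (h : OnCubic X Y z) : OnCubic Y X z := ⟨by rw [← h.eq]; ring, h.ne_zero⟩

lemma double [IsDomain R] (h : OnCubic X Y z) (hXY : X ^ 3 ≠ Y ^ 3) :
    OnCubic (X * (X ^ 3 + 2 * Y ^ 3)) (-(Y * (2 * X ^ 3 + Y ^ 3))) (z * (X ^ 3 - Y ^ 3)) :=
  ⟨by linear_combination (X ^ 3 - Y ^ 3) ^ 3 * h.eq, mul_ne_zero h.ne_zero (sub_ne_zero.2 hXY)⟩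

end CommRing

lemma cast {X Y z : ℤ} (h : OnCubic X Y z) : OnCubic (X : ℚ) Y z :=
  ⟨by exact_mod_cast h.eq, by exact_mod_cast h.ne_zero⟩

lemma of_cast {X Y z : ℤ} (h : OnCubic (X : ℚ) Y z) : OnCubic X Y z :=
  ⟨by exact_mod_cast h.eq, by exact_mod_cast h.ne_zero⟩

variable {X Y z X' Y' z' : ℚ}

lemma add_ne_zero (h : OnCubic X Y z) : X + Y ≠ 0 := by
  intro hadd
  have : z ^ 3 = 0 := by linear_combination (X ^ 2 - X * Y + Y ^ 2) / 9 * hadd - h.eq / 9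
  exact h.ne_zero (pow_eq_zero_iff three_ne_zero |>.1 this)

lemma yCoord_sq (h : OnCubic X Y z) : yCoord X Y ^ 2 = xCoord X Y z ^ 3 - 48 := by
  have := h.add_ne_zero
  rw [yCoord, xCoord]
  field_simp
  linear_combination 192 * h.eq

/-- The image of `(X : Y : z)` on `curve`. -/
def point (h : OnCubic X Y z) : curve.Point :=
  .some (xCoord X Y z) (yCoord X Y) (curve_nonsingular h.yCoord_sq)

lemma hasX_point (h : OnCubic X Y z) : HasX h.point (xCoord X Y z) := ⟨_, _, rfl⟩

lemma one_two_one : OnCubic (1 : ℚ) 2 1 := ⟨by norm_num, one_ne_zero⟩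

lemma eq_or_swap_of_xCoord_eq (h : OnCubic X Y z) (h' : OnCubic X' Y' z')
    (hx : xCoord X Y z = xCoord X' Y' z') :
    z * X' = z' * X ∧ z * Y' = z' * Y ∨ z * X' = z' * Y ∧ z * Y' = z' * X := by
  rw [xCoord, xCoord, div_eq_div_iff h.add_ne_zero h'.add_ne_zero] at hx
  have hsum : z * (X' + Y') = z' * (X + Y) := by linarith
  have hcubes : (z * X') ^ 3 + (z * Y') ^ 3 = (z' * X) ^ 3 + (z' * Y) ^ 3 := by
    linear_combination z ^ 3 * h'.eq - z' ^ 3 * h.eq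
  have hprod : z * X' * (z * Y') = z' * X * (z' * Y) := by
    apply mul_left_cancel₀ (mul_ne_zero three_ne_zero (mul_ne_zero h'.ne_zero h.add_ne_zero))
    calc 3 * (z' * (X + Y)) * (z * X' * (z * Y'))
        = (z * (X' + Y')) ^ 3 - ((z * X') ^ 3 + (z * Y') ^ 3) := by rw [← hsum]; ring
      _ = 3 * (z' * (X + Y)) * (z' * X * (z' * Y)) := by rw [hsum, hcubes]; ring
  have hfactor : (z * X' - z' * X) * (z * X' - z' * Y) = 0 := by
    linear_combination z * X' * hsum - hprod
  rcases mul_eq_zero.1 hfactor with h0 | h0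
  · left; constructor <;> linarith
  · right; constructor <;> linarith

lemma eq_two_mul_of_xCoord_eq_four (h : OnCubic X Y z) (hx : xCoord X Y z = 4) :
    Y = 2 * X ∨ X = 2 * Y := by
  rw [← xCoord_one_two_one] at hx
  rcases h.eq_or_swap_of_xCoord_eq one_two_one hx with ⟨h1, h2⟩ | ⟨h1, h2⟩
  · left; linarith
  · right; linarith

lemma yCoord_ne_zero (h : OnCubic X Y z) (hXY : X ≠ Y) : yCoord X Y ≠ 0 :=
  div_ne_zero (mul_ne_zero (by norm_num) (sub_ne_zero.2 hXY)) h.add_ne_zero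

lemma hasX_two_nsmul_point (h : OnCubic X Y z) (hXY : X ≠ Y) :
    HasX (2 • h.point) (xCoord (X * (X ^ 3 + 2 * Y ^ 3)) (-(Y * (2 * X ^ 3 + Y ^ 3)))
      (z * (X ^ 3 - Y ^ 3))) := by
  have hs := h.add_ne_zero
  have hd := sub_ne_zero.2 hXY
  obtain ⟨h', hdbl⟩ := some_add_self (curve_nonsingular h.yCoord_sq) (h.yCoord_ne_zero hXY)
  have hsum : X * (X ^ 3 + 2 * Y ^ 3) + -(Y * (2 * X ^ 3 + Y ^ 3)) = (X + Y) * (X - Y) ^ 3 := by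
    ring
  have hslope : 3 * xCoord X Y z ^ 2 / (2 * yCoord X Y) = 18 * z ^ 2 / ((X + Y) * (X - Y)) := by
    rw [xCoord, yCoord]
    field_simp
    ring
  have hx : xCoord (X * (X ^ 3 + 2 * Y ^ 3)) (-(Y * (2 * X ^ 3 + Y ^ 3))) (z * (X ^ 3 - Y ^ 3)) =
      (3 * xCoord X Y z ^ 2 / (2 * yCoord X Y)) ^ 2 - 2 * xCoord X Y z := by
    rw [hslope, xCoord, xCoord, hsum,
      show X ^ 3 - Y ^ 3 = (X - Y) * (X ^ 2 + X * Y + Y ^ 2) by ring]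
    field_simp
    linear_combination 36 * z * h.eq
  rw [two_nsmul, hx]
  exact ⟨_, h', hdbl⟩

lemma hasX_three_nsmul_point (h : OnCubic X Y z) (hX : X ≠ 0) (hY : Y ≠ 0) (hXY : X ≠ Y) :
    HasX (3 • h.point)
      (4 * (X ^ 6 + X ^ 3 * Y ^ 3 + Y ^ 6) / (9 * z ^ 2 * X ^ 2 * Y ^ 2)) := by
  have hs := h.add_ne_zero
  have hz := h.ne_zero
  have hx : xCoord X Y z ≠ 0 := div_ne_zero (mul_ne_zero (by norm_num) hz) hs
  have hx3 : xCoord X Y z ^ 3 = 192 * (X ^ 2 - X * Y + Y ^ 2) / (X + Y) ^ 2 := by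
    rw [xCoord, div_pow, div_eq_div_iff (pow_ne_zero _ hs) (pow_ne_zero _ hs)]
    linear_combination -192 * (X + Y) ^ 2 * h.eq
  have hx3' : xCoord X Y z ^ 3 - 192 = -576 * X * Y / (X + Y) ^ 2 := by
    rw [hx3]; field_simp; ring
  have hx3_ne : xCoord X Y z ^ 3 - 192 ≠ 0 := by
    rw [hx3']
    exact div_ne_zero (mul_ne_zero (mul_ne_zero (by norm_num) hX) hY) (pow_ne_zero _ hs)
  have key := hasX_three_nsmul (curve_nonsingular h.yCoord_sq) (h.yCoord_ne_zero hXY) hx hx3_ne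
  have hX : (xCoord X Y z ^ 9 + 4608 * xCoord X Y z ^ 6 + 110592 * xCoord X Y z ^ 3 - 7077888) /
      (9 * xCoord X Y z ^ 2 * (xCoord X Y z ^ 3 - 192) ^ 2) =
      4 * (X ^ 6 + X ^ 3 * Y ^ 3 + Y ^ 6) / (9 * z ^ 2 * X ^ 2 * Y ^ 2) := by
    rw [hx3', show xCoord X Y z ^ 9 = (xCoord X Y z ^ 3) ^ 3 by ring,
      show xCoord X Y z ^ 6 = (xCoord X Y z ^ 3) ^ 2 by ring, hx3, xCoord]
    field_simp
    ring
  rwa [hX] at key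

end OnCubic

/-- The point `(1 : 2 : 1)`, which generates the group of rational points of `curve`. -/
def generator : curve.Point := OnCubic.one_two_one.point

namespace OnCubic

variable {X Y z : ℚ}

lemma add_generator (h : OnCubic X Y z) (hx : xCoord X Y z ≠ 4) :
    OnCubic (2 * X ^ 2 - Y * z) (Y ^ 2 - 4 * X * z) (2 * z ^ 2 - X * Y) := by
  refine ⟨by linear_combination (8 * X ^ 3 + Y ^ 3 + 8 * z ^ 3 - 12 * X * Y * z) * h.eq,
    fun h0 ↦ hx ?_⟩
  have hfactor : (8 * X ^ 3 - Y ^ 3) * (X ^ 3 - 8 * Y ^ 3) = 0 := by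
    have : (X * Y) ^ 3 = 8 * z ^ 6 := by rw [show X * Y = 2 * z ^ 2 by linarith]; ring
    linear_combination (8 * (X ^ 3 + Y ^ 3) + 72 * z ^ 3) * h.eq - 81 * this
  have cube_inj {a b : ℚ} (hab : a ^ 3 = b ^ 3) : a = b :=
    (Odd.strictMono_pow (by decide : Odd 3)).injective hab
  have hs := h.add_ne_zero
  rw [xCoord, div_eq_iff hs]
  rcases mul_eq_zero.1 hfactor with h1 | h1
  · obtain rfl : Y = 2 * X := cube_inj (by linarith)
    obtain rfl : z = X := cube_inj (by linarith [h.eq])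
    ring
  · obtain rfl : X = 2 * Y := cube_inj (by linarith)
    obtain rfl : z = Y := cube_inj (by linarith [h.eq])
    ring

lemma hasX_point_add_generator (h : OnCubic X Y z) (hx : xCoord X Y z ≠ 4) :
    HasX (h.point + generator)
      (xCoord (2 * X ^ 2 - Y * z) (Y ^ 2 - 4 * X * z) (2 * z ^ 2 - X * Y)) := by
  have hs := h.add_ne_zero
  have hs' := (h.add_generator hx).add_ne_zero
  have hxP : xCoord X Y z ≠ xCoord 1 2 1 := by rwa [xCoord_one_two_one]
  have key := hasX_add (curve_nonsingular h.yCoord_sq) (curve_nonsingular one_two_one.yCoord_sq) hxP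
  have hd : 3 * z - X - Y ≠ 0 := by
    intro h0
    exact hx (by rw [xCoord, div_eq_iff hs]; linarith)
  have hslope : (yCoord X Y - -4) / (xCoord X Y z - 4) = 2 * (2 * X - Y) / (3 * z - X - Y) := by
    have hxd : xCoord X Y z - 4 = 4 * (3 * z - X - Y) / (X + Y) := by
      rw [xCoord]; field_simp; ring
    rw [hxd, yCoord]
    field_simp
    ring
  have hX : ((yCoord X Y - yCoord 1 2) / (xCoord X Y z - xCoord 1 2 1)) ^ 2 - xCoord X Y z -
      xCoord 1 2 1 = xCoord (2 * X ^ 2 - Y * z) (Y ^ 2 - 4 * X * z) (2 * z ^ 2 - X * Y) := by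
    rw [xCoord_one_two_one, yCoord_one_two, hslope, xCoord, xCoord, div_pow,
      sub_sub, div_add' _ _ _ hs, div_sub_div _ _ (pow_ne_zero 2 hd) hs,
      div_eq_div_iff (mul_ne_zero (pow_ne_zero 2 hd) hs) hs']
    linear_combination -4 * (-6 * X ^ 2 + 3 * X * Y + 6 * X * z - 3 * Y * z) * h.eq
  rwa [hX] at key

end OnCubic

/-! ### The Mordell–Weil group of `X ^ 3 + Y ^ 3 = 9 z ^ 3` -/

open WeierstrassCurve

/-- A primitive integral representative of a nonzero point of the cubic `X ^ 3 + Y ^ 3 = 9 z ^ 3`.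
Coprimality of `X` and `Y` is equivalent to coprimality of the triple, since a common prime factor
of `X` and `Y` divides `z`. -/
structure PrimitiveSol (X Y z : ℤ) : Prop extends OnCubic X Y z where
  isCoprime : IsCoprime X Y

lemma OnCubic.exists_primitiveSol {A B C : ℤ} (h : OnCubic A B C) :
    ∃ g X Y z : ℤ, g ≠ 0 ∧ PrimitiveSol X Y z ∧ A = g * X ∧ B = g * Y ∧ C = g * z := by
  have hA_or_hB : A ≠ 0 ∨ B ≠ 0 := by
    by_contra! h0
    exact h.ne_zero (by simpa [h0.1, h0.2] using h.eq)
  obtain ⟨g, X, Y, hg, hXY, hA, hB⟩ := Int.exists_gcd_one' (Int.gcd_pos_iff.2 hA_or_hB)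
  have hg0 : (g : ℤ) ≠ 0 := by positivity
  have hcube : (3 * C) ^ 3 = (g : ℤ) ^ 3 * (3 * (X ^ 3 + Y ^ 3)) := by
    linear_combination -3 * h.eq + 3 * (congrArg (· ^ 3) hA + congrArg (· ^ 3) hB)
  obtain ⟨k, hk⟩ : (g : ℤ) ∣ 3 * C := (Int.pow_dvd_pow_iff three_ne_zero).1 ⟨_, hcube⟩
  have hk3 : k ^ 3 = 3 * (X ^ 3 + Y ^ 3) :=
    mul_left_cancel₀ (pow_ne_zero 3 hg0) (by rw [← hcube, hk]; ring)
  obtain ⟨z, rfl⟩ := Int.prime_three.dvd_of_dvd_pow (n := 3) ⟨_, hk3⟩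
  have hC : C = g * z := by linarith
  refine ⟨g, X, Y, z, hg0, ⟨⟨by linarith, ?_⟩, Int.isCoprime_iff_gcd_eq_one.2 hXY⟩,
    by rw [hA, mul_comm], by rw [hB, mul_comm], hC⟩
  rintro rfl
  exact h.ne_zero (by rw [hC, mul_zero])

namespace PrimitiveSol

variable {X Y z X' Y' z' : ℤ}

lemma swap (h : PrimitiveSol X Y z) : PrimitiveSol Y X z :=
  ⟨h.toOnCubic.swap, h.isCoprime.symm⟩

lemma ne (h : PrimitiveSol X Y z) : X ≠ Y := by
  rintro rfl
  have heq := h.eq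
  rcases Int.isUnit_iff.1 (isCoprime_self.1 h.isCoprime) with rfl | rfl <;> omega

lemma left_ne_zero (h : PrimitiveSol X Y z) : X ≠ 0 := by
  rintro rfl
  have heq := h.eq
  rcases Int.isUnit_iff.1 (isCoprime_zero_left.1 h.isCoprime) with rfl | rfl <;> omega

lemma right_ne_zero (h : PrimitiveSol X Y z) : Y ≠ 0 := h.swap.left_ne_zero

lemma three_dvd_add (h : PrimitiveSol X Y z) : (3 : ℤ) ∣ X + Y :=
  three_dvd_add_of_dvd_add_cubes ⟨3 * z ^ 3, by rw [h.eq]; ring⟩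

lemma not_three_dvd_left (h : PrimitiveSol X Y z) : ¬ (3 : ℤ) ∣ X := fun hX ↦
  not_three_dvd_of_isCoprime h.isCoprime hX ((dvd_add_right hX).1 h.three_dvd_add)

lemma eq_units_mul (h : PrimitiveSol X Y z) (h' : PrimitiveSol X' Y' z')
    (hX : z * X' = z' * X) (hY : z * Y' = z' * Y) :
    ∃ e : ℤˣ, X' = e * X ∧ Y' = e * Y ∧ z' = e * z := by
  have dvd : z ∣ z' := by
    obtain ⟨p, q, hpq⟩ := h.isCoprime
    exact ⟨p * X' + q * Y', by linear_combination (-z') * hpq - p * hX - q * hY⟩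
  have dvd' : z' ∣ z := by
    obtain ⟨p, q, hpq⟩ := h'.isCoprime
    exact ⟨p * X + q * Y, by linear_combination (-z) * hpq + p * hX + q * hY⟩
  obtain ⟨e, rfl⟩ := associated_of_dvd_dvd dvd dvd'
  exact ⟨e, mul_left_cancel₀ h.ne_zero (by rw [hX]; ring),
    mul_left_cancel₀ h.ne_zero (by rw [hY]; ring), mul_comm _ _⟩

lemma double (h : PrimitiveSol X Y z) :
    PrimitiveSol (X * (X ^ 3 + 2 * Y ^ 3)) (-(Y * (2 * X ^ 3 + Y ^ 3)))
      (z * (X ^ 3 - Y ^ 3)) := by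
  refine ⟨h.toOnCubic.double fun hXY ↦ h.ne (cube_injective hXY), ?_⟩
  have hXY := h.isCoprime
  have hX : IsCoprime X (2 * X ^ 3 + Y ^ 3) := by
    rw [show 2 * X ^ 3 + Y ^ 3 = Y ^ 3 + (2 * X ^ 2) * X by ring]
    exact IsCoprime.add_mul_right_right_iff.2 hXY.pow_right
  have hY : IsCoprime (X ^ 3 + 2 * Y ^ 3) Y := by
    rw [show X ^ 3 + 2 * Y ^ 3 = X ^ 3 + (2 * Y ^ 2) * Y by ring]
    exact IsCoprime.add_mul_right_left_iff.2 hXY.pow_left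
  have h3 : IsCoprime (X ^ 3 + 2 * Y ^ 3) 3 := by
    refine (isCoprime_three_pow_of_not_dvd 1 fun hd ↦ h.swap.not_three_dvd_left ?_).symm
    rw [show X ^ 3 + 2 * Y ^ 3 = 3 * (3 * z ^ 3) + Y ^ 3 by linear_combination h.eq] at hd
    exact Int.prime_three.dvd_of_dvd_pow ((dvd_add_right (dvd_mul_right _ _)).1 hd)
  have hfactors : IsCoprime (X ^ 3 + 2 * Y ^ 3) (2 * X ^ 3 + Y ^ 3) := by
    rw [show 2 * X ^ 3 + Y ^ 3 = -(3 * Y ^ 3) + 2 * (X ^ 3 + 2 * Y ^ 3) by ring]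
    exact IsCoprime.add_mul_right_right_iff.2 (h3.mul_right hY.pow_right).neg_right
  exact ((hXY.mul_right hX).mul_left (hY.mul_right hfactors)).neg_right

lemma hasX_two_nsmul_point (h : PrimitiveSol X Y z) :
    HasX (2 • h.cast.point) (xCoord (X * (X ^ 3 + 2 * Y ^ 3) : ℤ)
      (-(Y * (2 * X ^ 3 + Y ^ 3)) : ℤ) (z * (X ^ 3 - Y ^ 3) : ℤ)) := by
  push_cast
  exact h.cast.hasX_two_nsmul_point (by exact_mod_cast h.ne)

lemma exists_hasX_three_nsmul (h : PrimitiveSol X Y z) (hz : (3 : ℤ) ∣ z) :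
    ∃ b c a : ℤ, ∃ h' : PrimitiveSol b c a, HasX (3 • h'.cast.point) (xCoord X Y z) ∧
      X ^ 2 - X * Y + Y ^ 2 = 3 * (b ^ 6 + b ^ 3 * c ^ 3 + c ^ 6) ^ 3 := by
  obtain ⟨a, b, c, hbc, heq, rfl, hsum, hnorm⟩ := exists_trisection h.isCoprime h.eq hz
  have ha : a ≠ 0 := by
    rintro rfl
    exact h.ne_zero (by ring)
  have h' : PrimitiveSol b c a := ⟨⟨heq, ha⟩, hbc⟩
  refine ⟨b, c, a, h', ?_, hnorm⟩
  have haQ : (a : ℚ) ≠ 0 := by exact_mod_cast ha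
  have hbQ : (b : ℚ) ≠ 0 := by exact_mod_cast h'.left_ne_zero
  have hcQ : (c : ℚ) ≠ 0 := by exact_mod_cast h'.right_ne_zero
  have hsumQ : (X + Y : ℚ) = 3 * (-(3 * a * b * c)) ^ 3 := by exact_mod_cast hsum
  have hx : xCoord X Y (-(3 * a * b * c) * (b ^ 6 + b ^ 3 * c ^ 3 + c ^ 6) : ℤ) =
      4 * (b ^ 6 + b ^ 3 * c ^ 3 + c ^ 6) / (9 * a ^ 2 * b ^ 2 * c ^ 2) := by
    rw [xCoord, hsumQ]
    push_cast
    field_simp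
    ring
  rw [hx]
  exact h'.cast.hasX_three_nsmul_point hbQ hcQ (by exact_mod_cast h'.ne)

lemma two_le_of_abs_le {H : ℤ} (h : PrimitiveSol X Y z) (hX : |X| ≤ H) (hY : |Y| ≤ H) :
    2 ≤ H := by
  by_contra! hH
  have heq := h.eq
  have hX0 := h.left_ne_zero
  have hY0 := h.right_ne_zero
  have hz3 : z ^ 3 ≠ 0 := pow_ne_zero _ h.ne_zero
  rw [abs_le] at hX hY
  obtain rfl | rfl : X = -1 ∨ X = 1 := by omega
  all_goals obtain rfl | rfl : Y = -1 ∨ Y = 1 := by omega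
  all_goals omega

lemma abs_le_of_abs_le {H : ℤ} (h : PrimitiveSol X Y z) (hX : |X| ≤ H) (hY : |Y| ≤ H) :
    |z| ≤ H := by
  have hH : 0 ≤ H := (abs_nonneg X).trans hX
  refine le_of_pow_le_pow_left₀ three_ne_zero hH ?_
  have hcubes : 9 * |z| ^ 3 ≤ 2 * H ^ 3 := by
    calc 9 * |z| ^ 3 = |X ^ 3 + Y ^ 3| := by rw [h.eq, abs_mul, abs_pow]; rfl
      _ ≤ |X| ^ 3 + |Y| ^ 3 := by rw [← abs_pow, ← abs_pow]; exact abs_add_le _ _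
      _ ≤ H ^ 3 + H ^ 3 := by gcongr
      _ = 2 * H ^ 3 := by ring
  have := pow_nonneg hH 3
  linarith

end PrimitiveSol

lemma exists_int_eq_mul (x y : ℚ) :
    ∃ d U V : ℤ, (d : ℚ) ≠ 0 ∧ (U : ℚ) = d * x ∧ (V : ℚ) = d * y :=
  ⟨x.den * y.den, x.num * y.den, y.num * x.den, by positivity,
    by push_cast; rw [← Rat.mul_den_eq_num x]; ring,
    by push_cast; rw [← Rat.mul_den_eq_num y]; ring⟩

lemma exists_primitiveSol_point_eq {Q : curve.Point} (hQ : Q ≠ 0) :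
    ∃ X Y z : ℤ, ∃ h : PrimitiveSol X Y z, Q = h.cast.point := by
  rcases Q with _ | ⟨x, y, hxy⟩
  · exact absurd rfl hQ
  have heq : y ^ 2 = x ^ 3 - 48 := (curve_equation_iff x y).1 hxy.1
  have hx : x ≠ 0 := by
    rintro rfl
    nlinarith [sq_nonneg y]
  obtain ⟨d, U, V, hd, hU, hV⟩ := exists_int_eq_mul x y
  have hcubic : OnCubic (12 * d + V) (12 * d - V) (2 * U) := by
    refine .of_cast ⟨?_, ?_⟩ <;> push_cast <;> rw [hU]
    · rw [hV]
      linear_combination 72 * (d : ℚ) ^ 3 * heq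
    · exact mul_ne_zero two_ne_zero (mul_ne_zero hd hx)
  obtain ⟨g, X, Y, z, hg, h, hX, hY, hz⟩ := hcubic.exists_primitiveSol
  have hgQ : (g : ℚ) ≠ 0 := by exact_mod_cast hg
  have hXQ : (g * X : ℚ) = 12 * d + d * y := by rw [← hV]; exact_mod_cast hX.symm
  have hYQ : (g * Y : ℚ) = 12 * d - d * y := by rw [← hV]; exact_mod_cast hY.symm
  have hzQ : (g * z : ℚ) = 2 * (d * x) := by rw [← hU]; exact_mod_cast hz.symm
  refine ⟨X, Y, z, h, ?_⟩
  simp only [OnCubic.point, Affine.Point.some.injEq]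
  rw [← xCoord_mul hgQ, ← yCoord_mul hgQ, hXQ, hYQ, hzQ, xCoord, yCoord]
  constructor <;> field_simp <;> ring

lemma abs_lt_of_three_mul_cube_le {H b c : ℤ} (hH : 2 ≤ H)
    (h : 3 * (b ^ 6 + b ^ 3 * c ^ 3 + c ^ 6) ^ 3 ≤ 49 * H ^ 4) : |b| < H := by
  by_contra! hb
  set C := b ^ 6 + b ^ 3 * c ^ 3 + c ^ 6 with hC
  have hbC : 3 * |b| ^ 6 ≤ 4 * C := by
    rw [Even.pow_abs (by decide)]
    linarith [sq_nonneg (2 * c ^ 3 + b ^ 3), show 4 * C - 3 * b ^ 6 = (2 * c ^ 3 + b ^ 3) ^ 2 by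
      rw [hC]; ring]
  have hHC : 3 * H ^ 4 ≤ C := by
    have : 2 ^ 2 * H ^ 4 ≤ |b| ^ 6 := by
      calc 2 ^ 2 * H ^ 4 ≤ H ^ 2 * H ^ 4 := by gcongr
        _ = H ^ 6 := by ring
        _ ≤ |b| ^ 6 := by gcongr
    linarith
  have hH4 : 2 ^ 4 ≤ H ^ 4 := by gcongr
  have hC3 : 48 ^ 2 * C ≤ C ^ 3 := by
    calc 48 ^ 2 * C ≤ C ^ 2 * C := by gcongr <;> linarith
      _ = C ^ 3 := by ring
  linarith

lemma norm_add_generator_le {X Y z H : ℤ} (hX : |X| ≤ H) (hY : |Y| ≤ H) (hz : |z| ≤ H) :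
    (2 * X ^ 2 - Y * z) ^ 2 - (2 * X ^ 2 - Y * z) * (Y ^ 2 - 4 * X * z) +
      (Y ^ 2 - 4 * X * z) ^ 2 ≤ 49 * H ^ 4 := by
  have abs_mul_le {u v : ℤ} (hu : |u| ≤ H) (hv : |v| ≤ H) : |u * v| ≤ H ^ 2 := by
    rw [abs_mul, sq]
    exact mul_le_mul hu hv (abs_nonneg v) ((abs_nonneg u).trans hu)
  have hXX := abs_mul_le hX hX
  have hYY := abs_mul_le hY hY
  have hYz := abs_mul_le hY hz
  have hXz := abs_mul_le hX hz
  rw [abs_le] at hXX hYY hYz hXz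
  have hA : |2 * X ^ 2 - Y * z| ≤ 3 * H ^ 2 := abs_le.2 ⟨by linarith, by linarith⟩
  have hB : |Y ^ 2 - 4 * X * z| ≤ 5 * H ^ 2 := abs_le.2 ⟨by linarith, by linarith⟩
  generalize 2 * X ^ 2 - Y * z = A at hA ⊢
  generalize Y ^ 2 - 4 * X * z = B at hB ⊢
  calc A ^ 2 - A * B + B ^ 2 ≤ |A| ^ 2 + |A| * |B| + |B| ^ 2 := by
        rw [sq_abs, sq_abs, ← abs_mul]
        linarith [neg_le_abs (A * B)]
    _ ≤ (3 * H ^ 2) ^ 2 + 3 * H ^ 2 * (5 * H ^ 2) + (5 * H ^ 2) ^ 2 := by gcongr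
    _ = 49 * H ^ 4 := by ring

namespace PrimitiveSol

variable {X Y z : ℤ}

open AddSubgroup (zmultiples mem_zmultiples)

/-- One step of the descent: if `3 ∣ z`, the point is three times a smaller one. -/
lemma point_mem_zmultiples_of_three_dvd {H : ℤ} (hH : 2 ≤ H)
    (ih : ∀ {b c a : ℤ} (h : PrimitiveSol b c a), |b| < H → |c| < H →
      h.cast.point ∈ zmultiples generator)
    (h : PrimitiveSol X Y z) (hz : (3 : ℤ) ∣ z) (hXY : X ^ 2 - X * Y + Y ^ 2 ≤ 49 * H ^ 4) :
    h.cast.point ∈ zmultiples generator := by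
  obtain ⟨b, c, a, h', hx, hnorm⟩ := h.exists_hasX_three_nsmul hz
  rw [hnorm] at hXY
  have hb : |b| < H := abs_lt_of_three_mul_cube_le hH hXY
  have hc : |c| < H := abs_lt_of_three_mul_cube_le hH (b := c) (c := b) (by linarith)
  exact h.cast.hasX_point.mem_of_mem hx (nsmul_mem (ih h' hb hc) 3)

lemma exists_add_generator (h : PrimitiveSol X Y z) (hx : xCoord X Y z ≠ 4)
    (hzX : (3 : ℤ) ∣ z + X) :
    ∃ X' Y' z' : ℤ, PrimitiveSol X' Y' z' ∧ (3 : ℤ) ∣ z' ∧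
      HasX (h.cast.point + generator) (xCoord X' Y' z') ∧
      X' ^ 2 - X' * Y' + Y' ^ 2 ≤
        (2 * X ^ 2 - Y * z) ^ 2 - (2 * X ^ 2 - Y * z) * (Y ^ 2 - 4 * X * z) +
          (Y ^ 2 - 4 * X * z) ^ 2 := by
  have hadd : OnCubic (2 * X ^ 2 - Y * z) (Y ^ 2 - 4 * X * z) (2 * z ^ 2 - X * Y) :=
    .of_cast (by push_cast; exact h.cast.add_generator hx)
  obtain ⟨g, X', Y', z', hg, h', hA, hB, hC⟩ := hadd.exists_primitiveSol
  refine ⟨X', Y', z', h', ?_, ?_, ?_⟩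
  · obtain ⟨u, hu⟩ := hzX
    obtain ⟨w, hw⟩ := h.three_dvd_add
    obtain rfl : z = 3 * u - X := by linarith
    obtain rfl : Y = 3 * w - X := by linarith
    refine (Int.prime_three.dvd_or_dvd (a := g) ⟨6 * u ^ 2 - 4 * u * X + X ^ 2 - X * w, ?_⟩)
      |>.resolve_left fun hg3 ↦ h.not_three_dvd_left ?_
    · rw [← hC]; ring
    · refine Int.prime_three.dvd_of_dvd_pow (n := 2) ?_
      have hX2 : X ^ 2 = g * X' - 3 * (X * w + X * u - 3 * u * w) := by rw [← hA]; ring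
      rw [hX2]
      exact dvd_sub (hg3.mul_right _) (dvd_mul_right _ _)
  · have hx' := h.cast.hasX_point_add_generator hx
    have hgQ : (g : ℚ) ≠ 0 := by exact_mod_cast hg
    rw [show (2 * X ^ 2 - Y * z : ℚ) = g * X' by exact_mod_cast hA,
      show (Y ^ 2 - 4 * X * z : ℚ) = g * Y' by exact_mod_cast hB,
      show (2 * z ^ 2 - X * Y : ℚ) = g * z' by exact_mod_cast hC, xCoord_mul hgQ] at hx'
    exact hx'
  · rw [hA, hB]
    have hg2 : 1 ≤ g ^ 2 := by have : 0 < g ^ 2 := by positivity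
                               omega
    have hnorm : 0 ≤ X' ^ 2 - X' * Y' + Y' ^ 2 := by
      nlinarith [sq_nonneg (X' - Y'), sq_nonneg X', sq_nonneg Y']
    linarith [mul_nonneg (sub_nonneg.2 hg2) hnorm]

/-- Translating by the generator, with a suitable sign, makes `z` divisible by `3`. -/
lemma point_mem_zmultiples_of_three_dvd_add {H : ℤ}
    (ih : ∀ {b c a : ℤ} (h : PrimitiveSol b c a), |b| < H → |c| < H →
      h.cast.point ∈ zmultiples generator)
    (h : PrimitiveSol X Y z) (hX : |X| ≤ H) (hY : |Y| ≤ H) (hzX : (3 : ℤ) ∣ z + X) :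
    h.cast.point ∈ zmultiples generator := by
  by_cases hx : xCoord X Y z = 4
  · have hgen : HasX generator (xCoord X Y z) := by
      rw [hx, ← xCoord_one_two_one]
      exact OnCubic.one_two_one.hasX_point
    exact h.cast.hasX_point.mem_of_mem hgen (mem_zmultiples _)
  obtain ⟨X', Y', z', h', hz', hxadd, hnorm⟩ := h.exists_add_generator hx hzX
  have hmem' : h'.cast.point ∈ zmultiples generator :=
    h'.point_mem_zmultiples_of_three_dvd (h.two_le_of_abs_le hX hY) ih hz'
      (hnorm.trans (norm_add_generator_le hX hY (h.abs_le_of_abs_le hX hY)))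
  have hmem := hxadd.mem_of_mem h'.cast.hasX_point hmem'
  rwa [add_mem_cancel_right (mem_zmultiples generator)] at hmem

theorem point_mem_zmultiples_generator (h : PrimitiveSol X Y z) :
    h.cast.point ∈ zmultiples generator := by
  obtain ⟨N, hX, hY⟩ : ∃ N : ℕ, |X| ≤ N ∧ |Y| ≤ N :=
    ⟨X.natAbs + Y.natAbs, by push_cast; linarith [abs_nonneg Y],
      by push_cast; linarith [abs_nonneg X]⟩
  induction N generalizing X Y z with
  | zero =>
    have := h.two_le_of_abs_le hX hY
    norm_num at this
  | succ N ih =>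
    have ih' {b c a : ℤ} (h : PrimitiveSol b c a) (hb : |b| < (N + 1 : ℕ))
        (hc : |c| < (N + 1 : ℕ)) : h.cast.point ∈ zmultiples generator :=
      ih h (by push_cast at hb; linarith) (by push_cast at hc; linarith)
    have hX3 := h.not_three_dvd_left
    have hXY3 := h.three_dvd_add
    obtain hz | hz | hz : (3 : ℤ) ∣ z ∨ (3 : ℤ) ∣ z + X ∨ (3 : ℤ) ∣ z + Y := by
      have hX1 : X % 3 = 1 ∨ X % 3 = 2 := by omega
      omega
    · refine h.point_mem_zmultiples_of_three_dvd (h.two_le_of_abs_le hX hY) ih' hz ?_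
      have hnorm : X ^ 2 - X * Y + Y ^ 2 ≤ 3 * ((N + 1 : ℕ) : ℤ) ^ 2 := by
        have hX2 : X ^ 2 ≤ ((N + 1 : ℕ) : ℤ) ^ 2 := sq_le_sq.2 (hX.trans (le_abs_self _))
        have hY2 : Y ^ 2 ≤ ((N + 1 : ℕ) : ℤ) ^ 2 := sq_le_sq.2 (hY.trans (le_abs_self _))
        nlinarith [sq_nonneg (X + Y)]
      have hpow : ((N + 1 : ℕ) : ℤ) ^ 2 ≤ ((N + 1 : ℕ) : ℤ) ^ 4 :=
        pow_le_pow_right₀ (by simp) (by simp)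
      have hpos : 0 ≤ ((N + 1 : ℕ) : ℤ) ^ 2 := sq_nonneg _
      linarith
    · exact h.point_mem_zmultiples_of_three_dvd_add ih' hX hY hz
    · have hx : HasX h.swap.cast.point (xCoord X Y z) := by
        rw [xCoord_comm]; exact h.swap.cast.hasX_point
      exact h.cast.hasX_point.mem_of_mem hx
        (h.swap.point_mem_zmultiples_of_three_dvd_add ih' hY hX hz)

end PrimitiveSol

/-! ### Doubles -/

lemma not_four_dvd_of_isCoprime {a b : ℤ} (hab : IsCoprime a b) :
    ¬ (4 : ℤ) ∣ a * (a ^ 3 + 2 * b ^ 3) + 2 * (b * (2 * a ^ 3 + b ^ 3)) := by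
  intro h4
  rcases Int.even_or_odd' a with ⟨k, rfl | rfl⟩
  · have hb : Odd b := by
      rw [← Int.not_even_iff_odd]
      intro hb
      exact Int.prime_two.not_isUnit (hab.isUnit_of_dvd' ⟨k, rfl⟩ hb.two_dvd)
    obtain ⟨l, rfl⟩ := hb
    ring_nf at h4
    omega
  · ring_nf at h4
    omega

lemma exists_eq_double_of_hasX_two_nsmul {X Y z : ℚ} (h : OnCubic X Y z) {S : curve.Point}
    (hS : HasX (2 • S) (xCoord X Y z)) :
    ∃ a b c : ℤ, PrimitiveSol a b c ∧
      z * (a * (a ^ 3 + 2 * b ^ 3) : ℤ) = (c * (a ^ 3 - b ^ 3) : ℤ) * X ∧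
      z * (-(b * (2 * a ^ 3 + b ^ 3)) : ℤ) = (c * (a ^ 3 - b ^ 3) : ℤ) * Y := by
  have hS0 : S ≠ 0 := by
    rintro rfl
    exact hS.ne_zero (nsmul_zero 2)
  obtain ⟨a, b, c, hc, rfl⟩ := exists_primitiveSol_point_eq hS0
  rcases h.eq_or_swap_of_xCoord_eq hc.double.cast (hS.unique hc.hasX_two_nsmul_point) with
    ⟨hX, hY⟩ | ⟨hX, hY⟩
  · exact ⟨a, b, c, hc, hX, hY⟩
  · refine ⟨b, a, c, hc.swap, ?_, ?_⟩ <;> push_cast at hX hY ⊢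
    · linear_combination -hY
    · linear_combination -hX

namespace PrimitiveSol

variable {X Y z : ℤ}

lemma exists_eq_double (h : PrimitiveSol X Y z) {S : curve.Point} (hS : h.cast.point = 2 • S) :
    ∃ (a b c : ℤ) (e : ℤˣ), PrimitiveSol a b c ∧ X = e * (a * (a ^ 3 + 2 * b ^ 3)) ∧
      z = e * (c * (a ^ 3 - b ^ 3)) := by
  obtain ⟨a, b, c, hc, hX, hY⟩ :=
    exists_eq_double_of_hasX_two_nsmul h.cast (hS ▸ h.cast.hasX_point)
  norm_cast at hX hY
  obtain ⟨e, hX', -, hz'⟩ := hc.double.eq_units_mul h hX.symm hY.symm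
  exact ⟨a, b, c, e, hc, hX', hz'⟩

lemma point_add_generator_ne_two_nsmul (h : PrimitiveSol X Y z) (hX : Odd X) (hY : Odd Y)
    (hz : (4 : ℤ) ∣ z) (S : curve.Point) : h.cast.point + generator ≠ 2 • S := by
  intro hS
  have hx : xCoord X Y z ≠ 4 := by
    intro hx
    rcases h.cast.eq_two_mul_of_xCoord_eq_four hx with hXY | hXY <;> norm_cast at hXY
    · exact Int.not_odd_iff_even.2 ⟨X, by linarith⟩ hY
    · exact Int.not_odd_iff_even.2 ⟨Y, by linarith⟩ hX
  have hadd := h.cast.add_generator hx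
  obtain ⟨a, b, c, hc, hA, hB⟩ :=
    exists_eq_double_of_hasX_two_nsmul hadd (hS ▸ h.cast.hasX_point_add_generator hx)
  have hcross : a * (a ^ 3 + 2 * b ^ 3) * (Y ^ 2 - 4 * X * z) =
      -(b * (2 * a ^ 3 + b ^ 3)) * (2 * X ^ 2 - Y * z) := by
    have : (((a * (a ^ 3 + 2 * b ^ 3) : ℤ) : ℚ)) * (Y ^ 2 - 4 * X * z) =
        ((-(b * (2 * a ^ 3 + b ^ 3)) : ℤ) : ℚ) * (2 * X ^ 2 - Y * z) := by
      apply mul_left_cancel₀ hadd.ne_zero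
      linear_combination (Y ^ 2 - 4 * X * z : ℚ) * hA - (2 * X ^ 2 - Y * z : ℚ) * hB
    exact_mod_cast this
  obtain ⟨x, rfl⟩ := hX
  obtain ⟨y, rfl⟩ := hY
  obtain ⟨w, rfl⟩ := hz
  refine not_four_dvd_of_isCoprime hc.isCoprime
    ⟨-(b * (2 * a ^ 3 + b ^ 3)) * (2 * x ^ 2 + 2 * x - (2 * y + 1) * w) -
      a * (a ^ 3 + 2 * b ^ 3) * (y ^ 2 + y - 4 * (2 * x + 1) * w), ?_⟩
  linear_combination hcross

lemma exists_eq_double_of_odd_of_four_dvd (h : PrimitiveSol X Y z) (hX : Odd X)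
    (hz : (4 : ℤ) ∣ z) :
    ∃ (a b c : ℤ) (e : ℤˣ), PrimitiveSol a b c ∧ X = e * (a * (a ^ 3 + 2 * b ^ 3)) ∧
      z = e * (c * (a ^ 3 - b ^ 3)) := by
  have hY : Odd Y := by
    have hsum : Even (X ^ 3 + Y ^ 3) := by
      rw [h.eq]
      exact (((even_iff_two_dvd.2 (Dvd.dvd.trans (by norm_num) hz)).pow_of_ne_zero
        three_ne_zero)).mul_left 9
    rw [Int.even_add, ← Int.not_odd_iff_even, ← Int.not_odd_iff_even, not_iff_not] at hsum
    exact (Int.odd_pow' three_ne_zero).1 (hsum.1 hX.pow)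
  obtain ⟨k, hk⟩ := h.point_mem_zmultiples_generator
  simp only at hk
  rcases Int.even_or_odd' k with ⟨m, rfl | rfl⟩
  · exact h.exists_eq_double (S := m • generator) (by rw [← hk]; module)
  · refine (h.point_add_generator_ne_two_nsmul hX hY hz ((m + 1) • generator) ?_).elim
    rw [← hk]
    module

end PrimitiveSol

/-! ### Rational points of the weighted cubic -/

namespace PrimitiveSol

variable {X Y z : ℤ}

lemma eight_dvd_add (h : PrimitiveSol X Y z) (hz : (3 : ℤ) ∣ z) : (8 : ℤ) ∣ X + Y := by
  obtain ⟨a, b, c, -, heq, -, hsum, -⟩ := exists_trisection h.isCoprime h.eq hz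
  have heven : Even (a * b * c) := by
    by_contra hodd
    simp only [Int.not_even_iff_odd, Int.odd_mul] at hodd
    obtain ⟨⟨ha, hb⟩, hc⟩ := hodd
    have hodd9 : Odd (9 * a ^ 3) := Odd.mul (by decide) ha.pow
    rw [← heq, ← Int.not_even_iff_odd] at hodd9
    exact hodd9 (hb.pow.add_odd hc.pow)
  obtain ⟨k, hk⟩ := heven.two_dvd
  exact ⟨-81 * k ^ 3, by rw [hsum, show 3 * a * b * c = 3 * (a * b * c) by ring, hk]; ring⟩

lemma three_mul_pow_dvd_add (h : PrimitiveSol X Y z) {k : ℕ} (hz : (3 : ℤ) ^ k ∣ z) :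
    3 * ((3 : ℤ) ^ k) ^ 3 ∣ X + Y := by
  obtain ⟨m, B, C, rfl, rfl, rfl, -, -, hC⟩ :=
    exists_cubes_of_add_cubes_eq_nine_mul_cube h.isCoprime h.eq
  have hB : (3 : ℤ) ^ k ∣ B := (isCoprime_three_pow_of_not_dvd k hC).dvd_of_dvd_mul_right hz
  rw [show m + B ^ 3 + (2 * B ^ 3 - m) = 3 * B ^ 3 by ring]
  exact mul_dvd_mul_left 3 (pow_dvd_pow_of_dvd hB 3)

lemma not_three_dvd_sub_cubes (h : PrimitiveSol X Y z) : ¬ (3 : ℤ) ∣ X ^ 3 - Y ^ 3 := by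
  intro hd
  refine h.not_three_dvd_left (Int.prime_three.dvd_of_dvd_pow (n := 3) ?_)
  obtain ⟨k, hk⟩ := hd
  exact ⟨X ^ 3 - 3 * z ^ 3 - k, by linarith [h.eq]⟩

lemma add_ne_zero (h : PrimitiveSol X Y z) : X + Y ≠ 0 := by
  exact_mod_cast h.cast.add_ne_zero

end PrimitiveSol

lemma abs_add_lt_of_abs_le {a b T : ℤ} (hT : 3 ≤ T) (ha : a ≠ 0) (haT : |a| ≤ T)
    (h : |a * (a ^ 3 + 2 * b ^ 3)| < 9 * T) : |a + b| < 3 * T := by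
  suffices hb : |b| < 2 * T by linarith [abs_add_le a b]
  by_contra! hb
  have hfactor : |a ^ 3 + 2 * b ^ 3| < 9 * T := by
    rw [abs_mul] at h
    exact (le_mul_of_one_le_left (abs_nonneg _) (Int.one_le_abs ha)).trans_lt h
  have hcubes : 2 * |b| ^ 3 ≤ |a ^ 3 + 2 * b ^ 3| + |a| ^ 3 := by
    have := abs_sub (a ^ 3 + 2 * b ^ 3) (a ^ 3)
    rwa [add_sub_cancel_left, abs_mul, abs_pow, abs_pow, abs_two] at this
  have haT3 : |a| ^ 3 ≤ T ^ 3 := by gcongr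
  have hbT3 : (2 * T) ^ 3 ≤ |b| ^ 3 := by gcongr
  have hT3 : 3 ^ 2 * T ≤ T ^ 3 := by
    calc 3 ^ 2 * T ≤ T ^ 2 * T := by gcongr
      _ = T ^ 3 := by ring
  linarith

lemma abs_add_lt_of_lt {a b T : ℤ} (hT : 9 ≤ T) (haT : T < a) (hne : a ^ 3 + 2 * b ^ 3 ≠ 0)
    (h : |a * (a ^ 3 + 2 * b ^ 3)| < 9 * T) : |a + b| < 3 * T := by
  have ha : 0 < a := by linarith
  rw [abs_mul, abs_of_pos ha] at h
  have haT9 : a < 9 * T := (le_mul_of_one_le_right ha.le (Int.one_le_abs hne)).trans_lt h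
  have hfactor : |a ^ 3 + 2 * b ^ 3| < 9 := by
    by_contra! h9
    nlinarith
  rw [abs_lt] at hfactor
  have ha3 : 81 * a ≤ a ^ 3 := by
    calc 81 * a = 9 ^ 2 * a := by ring
      _ ≤ a ^ 2 * a := by gcongr; linarith
      _ = a ^ 3 := by ring
  have cube_le {u v : ℤ} (huv : u ≤ v) : u ^ 3 ≤ v ^ 3 :=
    (Odd.strictMono_pow (by decide : Odd 3)).monotone huv
  have hlower : 2 * a < 3 * (-b) := by
    by_contra! hb
    nlinarith [cube_le hb]
  have hupper : -b < a := by
    by_contra! hb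
    nlinarith [cube_le hb]
  rw [abs_of_pos (by linarith)]
  linarith

lemma abs_add_lt {a b T : ℤ} (hT : 9 ≤ T) (ha : a ≠ 0) (hne : a ^ 3 + 2 * b ^ 3 ≠ 0)
    (h : |a * (a ^ 3 + 2 * b ^ 3)| < 9 * T) : |a + b| < 3 * T := by
  rcases le_or_gt |a| T with haT | haT
  · exact abs_add_lt_of_abs_le (by linarith) ha haT h
  rcases lt_abs.1 haT with haT | haT
  · exact abs_add_lt_of_lt hT haT hne h
  · have := abs_add_lt_of_lt (a := -a) (b := -b) hT haT
      (fun h0 ↦ hne (by linear_combination -h0)) (by convert h using 2; ring)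
    rwa [← neg_add, abs_neg] at this

/-- With `q = 3 ^ k`, the solution is twice a point `(a : b : c)` with `3 q ^ 3 ∣ a + b`, too large
for `X = ± a (a ^ 3 + 2 b ^ 3) ∣ 9 q ^ 3 - 1`. -/
lemma not_primitiveSol_of_one_le {X Y P : ℤ} {k : ℕ} (hk : 1 ≤ k) (hP : (4 : ℤ) ∣ P - 1) :
    ¬ PrimitiveSol X Y (3 ^ k * (P * X + Y)) := by
  intro h
  set q : ℤ := 3 ^ k
  have hq3 : 3 ≤ q := le_self_pow₀ (by norm_num) (by omega)
  have hT : 27 ≤ q ^ 3 := by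
    calc (27 : ℤ) = 3 ^ 3 := by norm_num
      _ ≤ q ^ 3 := by gcongr
  have hXdvd : X ∣ 9 * q ^ 3 - 1 := by
    refine (h.isCoprime.pow_right (n := 3)).dvd_of_dvd_mul_left
      ⟨X ^ 2 - 9 * q ^ 3 * (P * (P ^ 2 * X ^ 2 + 3 * P * X * Y + 3 * Y ^ 2)), ?_⟩
    linear_combination -h.eq
  have hXlt : |X| < 9 * q ^ 3 := by
    have := Int.le_of_dvd (by linarith) ((abs_dvd X _).2 hXdvd)
    linarith
  have h8 : (8 : ℤ) ∣ X + Y := h.eight_dvd_add ((dvd_pow_self 3 (by omega)).mul_right _)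
  have hXodd : Odd X := by
    rw [← Int.not_even_iff_odd]
    intro hX
    have hY : (2 : ℤ) ∣ Y := (dvd_add_right hX.two_dvd).1 (Dvd.dvd.trans (by norm_num) h8)
    exact Int.prime_two.not_isUnit (h.isCoprime.isUnit_of_dvd' hX.two_dvd hY)
  have hz4 : (4 : ℤ) ∣ q * (P * X + Y) := by
    rw [show P * X + Y = (P - 1) * X + (X + Y) by ring]
    exact (dvd_add (hP.mul_right X) (Dvd.dvd.trans (by norm_num) h8)).mul_left q
  obtain ⟨a, b, c, e, hc, hX, hz⟩ := h.exists_eq_double_of_odd_of_four_dvd hXodd hz4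
  have hqc : q ∣ c := by
    refine (isCoprime_three_pow_of_not_dvd k hc.not_three_dvd_sub_cubes).dvd_of_dvd_mul_right ?_
    exact (Units.dvd_mul_left (u := e)).1 (hz ▸ dvd_mul_right q _)
  have hsum : 3 * q ^ 3 ≤ |a + b| :=
    Int.le_of_dvd (abs_pos.2 hc.add_ne_zero) ((dvd_abs _ _).2 (hc.three_mul_pow_dvd_add hqc))
  refine hsum.not_gt (abs_add_lt (by linarith) hc.left_ne_zero ?_ ?_)
  · intro h0
    exact h.left_ne_zero (by rw [hX, h0]; ring)
  · rw [hX, abs_mul, Int.isUnit_iff_abs_eq.1 e.isUnit, one_mul] at hXlt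
    exact hXlt

lemma exists_eq_cube_of_dvd_eight {X Y : ℤ} (hXY : IsCoprime X Y) (hX : X ∣ 8)
    (h : (8 : ℤ) ∣ X * Y * (X + Y)) : ∃ ξ : ℤ, X = ξ ^ 3 := by
  rcases Int.even_or_odd X with heven | hodd
  · have h2Y : IsCoprime 2 Y := hXY.of_isCoprime_of_dvd_left heven.two_dvd
    have h2XY : IsCoprime 2 (X + Y) := by
      obtain ⟨x, rfl⟩ := heven.two_dvd
      rw [add_comm]
      exact IsCoprime.add_mul_left_right_iff.2 h2Y
    have h8X : (8 : ℤ) ∣ X := by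
      have h8 : ((2 : ℤ) ^ 3) ∣ X * Y * (X + Y) := h
      exact h2Y.pow_left.dvd_of_dvd_mul_right (h2XY.pow_left.dvd_of_dvd_mul_right h8)
    obtain ⟨e, rfl⟩ := associated_of_dvd_dvd h8X hX
    refine ⟨2 * e, ?_⟩
    rw [mul_pow, ← Units.val_pow_eq_pow_val, Int.units_pow_eq_pow_mod_two]
    norm_num
  · have hunit : IsUnit X := by
      have hX2 : IsCoprime X ((2 : ℤ) ^ 3) := (Int.isCoprime_two_right.2 hodd).pow_right
      exact hX2.isUnit_of_dvd' dvd_rfl hX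
    obtain ⟨e, rfl⟩ := hunit
    exact ⟨e, by rw [← Units.val_pow_eq_pow_val, Int.units_pow_eq_pow_mod_two]; norm_num⟩

/-- Here `X` is a cube, so factoring the solution gives a solution of the Fermat cubic. -/
lemma not_primitiveSol_of_pos {X Y P : ℤ} (hP0 : 0 < P) (hP : (8 : ℤ) ∣ P - 1) :
    ¬ PrimitiveSol X Y (P * X + Y) := by
  intro h
  obtain ⟨w, hw⟩ := hP
  obtain rfl : P = 8 * w + 1 := by linarith
  have hX8 : X ∣ 8 := by
    refine (h.isCoprime.pow_right (n := 3)).dvd_of_dvd_mul_left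
      ⟨X ^ 2 - 9 * ((8 * w + 1) * ((8 * w + 1) ^ 2 * X ^ 2 + 3 * (8 * w + 1) * X * Y + 3 * Y ^ 2)),
        ?_⟩
    linear_combination -h.eq
  have h8 : (8 : ℤ) ∣ X * Y * (X + Y) := by
    refine (show IsCoprime (8 : ℤ) 3 from ⟨-1, 3, by norm_num⟩).dvd_of_dvd_mul_left
      ⟨-(X + Y) ^ 3 -
        9 * (w * X * (64 * w ^ 2 * X ^ 2 + 24 * w * X * (X + Y) + 3 * (X + Y) ^ 2)), ?_⟩
    linear_combination -h.eq
  obtain ⟨ξ, hξ⟩ := exists_eq_cube_of_dvd_eight h.isCoprime hX8 h8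
  obtain ⟨m, B, C, hX, hY, hz, -, hC, -⟩ :=
    exists_cubes_of_add_cubes_eq_nine_mul_cube h.isCoprime h.eq
  have hfermat : m ^ 3 + (B ^ 3) ^ 3 = (ξ * C) ^ 3 := by
    rw [mul_pow, ← hξ, ← hC, hX]; ring
  have hBC : B ≠ 0 ∧ C ≠ 0 := mul_ne_zero_iff.1 (hz ▸ h.ne_zero)
  have hξ0 : ξ ≠ 0 := by
    rintro rfl
    exact h.left_ne_zero (by rw [hξ]; norm_num)
  have hm : m ≠ 0 := by
    rintro rfl
    obtain rfl : Y = 2 * X := by linarith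
    have hzX : (8 * w + 1) * X + 2 * X = X := cube_injective (by simp only; linarith [h.eq])
    exact mul_ne_zero (show 8 * w + 2 ≠ 0 by omega) h.left_ne_zero (by linear_combination hzX)
  exact fermatLastTheoremFor_iff_int.1 fermatLastTheoremThree m (B ^ 3) (ξ * C) hm
    (pow_ne_zero 3 hBC.1) (mul_ne_zero hξ0 hBC.2) hfermat

lemma add_cubes_ne_nine_pow_mul_cube {X Y : ℤ} {b m : ℕ} (hb : b ≠ 0) (hm : m ≠ 0)
    (hXY : IsCoprime X Y) : X ^ 3 + Y ^ 3 ≠ 9 ^ b * (9 ^ m * X + Y) ^ 3 := by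
  intro h
  have h3 : (3 : ℤ) ∣ X + Y := by
    apply three_dvd_add_of_dvd_add_cubes
    rw [h]
    exact (Dvd.dvd.trans (by norm_num) (dvd_pow_self 9 hb)).mul_right _
  have hX3 : ¬ (3 : ℤ) ∣ X := fun hX ↦
    not_three_dvd_of_isCoprime hXY hX ((dvd_add_right hX).1 h3)
  have hX : X ≠ 0 := fun hX ↦ hX3 (hX ▸ dvd_zero 3)
  have hY : Y ≠ 0 := fun hY ↦ hX3 (by rwa [hY, add_zero] at h3)
  have h9m : (1 : ℤ) < 9 ^ m := one_lt_pow₀ (by norm_num) hm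
  have hz : 9 ^ m * X + Y ≠ 0 := by
    intro h0
    have hXY' : X = -Y := cube_injective (by simp only; rw [h0] at h; linear_combination h)
    exact mul_ne_zero (sub_pos.2 h9m).ne' hX (by linear_combination h0 - hXY')
  have h8 : (8 : ℤ) ∣ 9 ^ m - 1 := by simpa using sub_dvd_pow_sub_pow (9 : ℤ) 1 m
  obtain ⟨β, rfl | rfl | rfl⟩ : ∃ β, b = 3 * β ∨ b = 3 * β + 1 ∨ b = 3 * β + 2 :=
    ⟨b / 3, by omega⟩
  · exact fermatLastTheoremFor_iff_int.1 fermatLastTheoremThree X Y (9 ^ β * (9 ^ m * X + Y)) hX hY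
      (mul_ne_zero (by positivity) hz) (by rw [h, pow_mul']; ring)
  · have hsol : PrimitiveSol X Y (3 ^ (2 * β) * (9 ^ m * X + Y)) := by
      refine ⟨⟨?_, mul_ne_zero (by positivity) hz⟩, hXY⟩
      rw [h, pow_mul, pow_succ, pow_mul']; ring
    rcases Nat.eq_zero_or_pos β with rfl | hβ
    · exact not_primitiveSol_of_pos (by positivity) h8 (by simpa using hsol)
    · exact not_primitiveSol_of_one_le (by omega) (Dvd.dvd.trans (by norm_num) h8) hsol
  · have hthree : X ^ 3 + Y ^ 3 = 3 * (3 * 9 ^ β * (9 ^ m * X + Y)) ^ 3 := by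
      rw [h, pow_add, pow_mul']; ring
    exact mul_ne_zero (by positivity) hz (eq_zero_of_add_cubes_eq_three_mul_cube hXY hthree)

lemma weighted_add_cubes_ne {b d j : ℕ} (hb : b ≠ 0) (hdj : d + j ≠ 0) {x y : ℤ}
    (hxy : IsCoprime x y) :
    3 ^ d * x ^ 3 + y ^ 3 ≠ 9 ^ b * (3 ^ (d + 2 * j) * x + y) ^ 3 := by
  intro h
  obtain ⟨b, rfl⟩ := Nat.exists_eq_add_one_of_ne_zero hb
  induction d using Nat.strong_induction_on generalizing j y with
  | _ d ih =>
    rcases Nat.eq_zero_or_pos d with rfl | hd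
    · refine add_cubes_ne_nine_pow_mul_cube hb (show j ≠ 0 by omega) hxy ?_
      rw [zero_add, pow_mul] at h
      simpa using h
    obtain ⟨d, rfl⟩ := Nat.exists_eq_add_one_of_ne_zero hd.ne'
    obtain ⟨y, rfl⟩ : (3 : ℤ) ∣ y := by
      refine Int.prime_three.dvd_of_dvd_pow (n := 3)
        ⟨3 * 9 ^ b * (3 ^ (d + 1 + 2 * j) * x + y) ^ 3 - 3 ^ d * x ^ 3, ?_⟩
      rw [pow_succ, pow_succ 9] at h
      linear_combination h
    have hx3 : ¬ (3 : ℤ) ∣ x := fun hx ↦ not_three_dvd_of_isCoprime hxy hx (dvd_mul_right 3 y)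
    match d with
    | 0 =>
      refine hx3 (Int.prime_three.dvd_of_dvd_pow (n := 3)
        ⟨9 ^ (b + 1) * 3 * (3 ^ (2 * j) * x + y) ^ 3 - 3 * y ^ 3, ?_⟩)
      simp only [pow_add] at h ⊢
      linarith
    | 1 =>
      refine hx3 (Int.prime_three.dvd_of_dvd_pow (n := 3)
        ⟨9 ^ (b + 1) * (3 * 3 ^ (2 * j) * x + y) ^ 3 - y ^ 3, ?_⟩)
      simp only [pow_add] at h ⊢
      linarith
    | d + 2 =>
      refine ih d (by omega) (j := j + 1) (by omega) hxy.of_mul_right_right ?_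
      have hpow : (3 : ℤ) ^ (d + 2 + 1 + 2 * j) = 3 * 3 ^ (d + 2 * (j + 1)) := by
        rw [← pow_succ']
        congr 1
        ring
      rw [hpow, add_assoc, pow_add 3 d] at h
      have h27 : (27 : ℤ) ≠ 0 := by norm_num
      exact mul_left_cancel₀ h27 (by linear_combination h)

lemma eq_zero_of_weighted_add_cubes_eq {b d : ℕ} (hb : b ≠ 0) (hd : d ≠ 0) {x y : ℤ}
    (h : 3 ^ d * x ^ 3 + y ^ 3 = 9 ^ b * (3 ^ d * x + y) ^ 3) : x = 0 ∧ y = 0 := by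
  by_contra hxy
  obtain ⟨g, X, Y, hg, hXY, rfl, rfl⟩ := Int.exists_gcd_one' (Int.gcd_pos_iff.2 (by tauto))
  refine weighted_add_cubes_ne (j := 0) hb hd (Int.isCoprime_iff_gcd_eq_one.2 hXY) ?_
  have hg3 : (g : ℤ) ^ 3 ≠ 0 := pow_ne_zero 3 (by exact_mod_cast hg.ne')
  refine mul_left_cancel₀ hg3 ?_
  simp only [mul_zero, add_zero]
  linear_combination h

theorem eq_zero_of_weighted_sums_eq_zero {k₁ k₂ k₃ : ℕ} (h₂₁ : k₂ < k₁) (h₃₂ : k₃ < k₂)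
    {y₁ y₂ y₃ : ℚ} (hsum : 3 ^ k₁ * y₁ + 3 ^ k₂ * y₂ + 3 ^ k₃ * y₃ = 0)
    (hcubes : 3 ^ k₁ * y₁ ^ 3 + 3 ^ k₂ * y₂ ^ 3 + 3 ^ k₃ * y₃ ^ 3 = 0) :
    y₁ = 0 ∧ y₂ = 0 ∧ y₃ = 0 := by
  obtain ⟨b, hb, rfl⟩ : ∃ b, b ≠ 0 ∧ k₂ = k₃ + b := ⟨k₂ - k₃, by omega, by omega⟩
  obtain ⟨d, hd, rfl⟩ : ∃ d, d ≠ 0 ∧ k₁ = k₃ + b + d := ⟨k₁ - (k₃ + b), by omega, by omega⟩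
  simp only [pow_add] at hsum hcubes
  have hk : (3 : ℚ) ^ k₃ ≠ 0 := by positivity
  have hy₃ : y₃ = -(3 ^ b * (3 ^ d * y₁ + y₂)) :=
    mul_left_cancel₀ hk (by linear_combination hsum)
  have helim : 3 ^ d * y₁ ^ 3 + y₂ ^ 3 = 9 ^ b * (3 ^ d * y₁ + y₂) ^ 3 := by
    have hkb : (3 : ℚ) ^ k₃ * 3 ^ b ≠ 0 := by positivity
    refine mul_left_cancel₀ hkb ?_
    rw [show (9 : ℚ) ^ b = 3 ^ b * 3 ^ b by rw [← mul_pow]; norm_num]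
    rw [hy₃] at hcubes
    linear_combination hcubes
  obtain ⟨D, x, y, hD, hx, hy⟩ := exists_int_eq_mul y₁ y₂
  obtain ⟨rfl, rfl⟩ : x = 0 ∧ y = 0 := by
    refine eq_zero_of_weighted_add_cubes_eq hb hd ?_
    have : (3 : ℚ) ^ d * x ^ 3 + y ^ 3 = 9 ^ b * (3 ^ d * x + y) ^ 3 := by
      rw [hx, hy]
      linear_combination (D : ℚ) ^ 3 * helim
    exact_mod_cast this
  obtain rfl : y₁ = 0 := by simpa [hD] using hx
  obtain rfl : y₂ = 0 := by simpa [hD] using hy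
  exact ⟨rfl, rfl, by rw [hy₃]; ring⟩

/-! ### A discrete valuation ring above `X = 0` -/

section DiscreteValuationRing

open IsDiscreteValuationRing Polynomial
open IsLocalRing (ResidueField)

lemma exists_primesOver_not_dvd {R : Type*} [CommRing R] [IsDomain R] (p : Ideal R) [p.IsPrime]
    (S : Type*) [CommRing S] [Algebra R S] [Module.Finite R S] [Module.Flat R S]
    [Finite (p.primesOver S)] {l : ℕ} (hS : ¬ l ∣ Module.finrank R S) :
    ∃ q ∈ p.primesOver S, ¬ l ∣ q.ramificationIdx R ∧ ¬ l ∣ q.inertiaDeg R := by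
  have := Fintype.ofFinite (p.primesOver S)
  by_contra! hdvd
  refine hS (p.sum_ramification_inertia_eq_finrank S ▸ Finset.dvd_sum fun q _ ↦ ?_)
  by_cases he : l ∣ q.1.ramificationIdx R
  · exact he.mul_right _
  · exact (hdvd q q.2 he).mul_left _

lemma natCast_le_addVal_iff {O : Type*} [CommRing O] [IsDomain O] [IsDiscreteValuationRing O]
    {a : O} {n : ℕ} : (n : ℕ∞) ≤ addVal O a ↔ a ∈ IsLocalRing.maximalIdeal O ^ n := by
  obtain ⟨ϖ, hϖ⟩ := exists_irreducible O
  rw [hϖ.maximalIdeal_eq, Ideal.span_singleton_pow, Ideal.mem_span_singleton,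
    ← addVal_le_iff_dvd, hϖ.addVal_pow]

lemma addVal_algebraMap_eq_emultiplicity {S : Type*} [CommRing S] [IsDedekindDomain S]
    (P : Ideal S) [P.IsMaximal] (O : Type*) [CommRing O] [IsDomain O] [IsDiscreteValuationRing O]
    [Algebra S O] [IsLocalization.AtPrime O P] (a : S) :
    addVal O (algebraMap S O a) = emultiplicity P (Ideal.span {a}) := by
  refine ENat.eq_of_forall_natCast_le_iff fun n ↦ ?_
  rw [natCast_le_addVal_iff, ← Ideal.mem_under, IsLocalization.AtPrime.under_maximalIdeal_pow P,
    ← pow_dvd_iff_le_emultiplicity, Ideal.dvd_span_singleton]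

lemma bijective_mk_span_X_comp_C (K : Type*) [Field K] :
    Function.Bijective ((Ideal.Quotient.mk (Ideal.span {(X : K[X])})).comp C) := by
  have : Nontrivial (K[X] ⧸ Ideal.span {(X : K[X])}) :=
    Ideal.Quotient.nontrivial_iff.mpr (by simp [Ideal.span_singleton_eq_top, not_isUnit_X])
  refine ⟨RingHom.injective _, Ideal.Quotient.mk_surjective.forall.mpr fun p ↦ ⟨p.coeff 0, ?_⟩⟩
  rw [RingHom.comp_apply, Ideal.Quotient.eq, Ideal.mem_span_singleton, X_dvd_iff]
  simp

lemma isMaximal_span_X (K : Type*) [Field K] : (Ideal.span {(X : K[X])}).IsMaximal :=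
  PrincipalIdealRing.isMaximal_of_irreducible irreducible_X

lemma finrank_residueField_eq_inertiaDeg {K : Type*} [Field K] {S : Type*} [CommRing S]
    [Algebra K[X] S] [Algebra K S] [IsScalarTower K K[X] S] (P : Ideal S) [P.IsMaximal]
    [P.LiesOver (Ideal.span {(X : K[X])})] (O : Type*) [CommRing O] [IsLocalRing O] [Algebra S O]
    [Algebra K O] [IsScalarTower K S O] [IsLocalization.AtPrime O P] :
    Module.finrank K (ResidueField O) = P.inertiaDeg K[X] := by
  have := isMaximal_span_X K
  rw [Ideal.inertiaDeg_eq_of_isMaximal (Ideal.span {(X : K[X])}) P]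
  refine Algebra.finrank_eq_of_equiv_equiv (.ofBijective _ (bijective_mk_span_X_comp_C K))
    (IsLocalization.AtPrime.equivQuotMaximalIdeal P O).symm (RingHom.ext fun a ↦ ?_)
  have ha : algebraMap K (ResidueField O) a = IsLocalization.AtPrime.equivQuotMaximalIdeal P O
      (Ideal.Quotient.mk P (algebraMap K[X] S (C a))) := by
    rw [IsLocalization.AtPrime.equivQuotMaximalIdeal_apply_mk, ← algebraMap_eq,
      ← IsScalarTower.algebraMap_apply K K[X] S, ← IsScalarTower.algebraMap_apply K S O]
    rfl
  rw [RingHom.comp_apply, RingHom.comp_apply, ha]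
  exact (RingEquiv.symm_apply_apply _ (Ideal.Quotient.mk P (algebraMap K[X] S (C a)))).symm

theorem exists_subalgebra_isDiscreteValuationRing (K K' : Type*) [Field K] [Field K'] [Algebra K K']
    [Algebra (RatFunc K) K'] [IsScalarTower K (RatFunc K) K'] [FiniteDimensional (RatFunc K) K']
    [Algebra.IsSeparable (RatFunc K) K'] {l : ℕ} (hl : ¬ l ∣ Module.finrank (RatFunc K) K') :
    ∃ (O : Subalgebra K K') (_ : IsFractionRing O K') (_ : IsDiscreteValuationRing O),
      Module.Finite K (ResidueField O) ∧ ¬ l ∣ Module.finrank K (ResidueField O) ∧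
      ∃ (x : O) (e : ℕ), algebraMap O K' x = algebraMap (RatFunc K) K' RatFunc.X ∧
        addVal O x = e ∧ ¬ l ∣ e := by
  let : Algebra K[X] K' := Algebra.compHom K' (algebraMap K[X] (RatFunc K))
  have : IsScalarTower K[X] (RatFunc K) K' := .of_algebraMap_eq fun _ ↦ rfl
  have : IsScalarTower K K[X] K' := .to₁₂₄ K K[X] (RatFunc K) K'
  let S := integralClosure K[X] K'
  have : IsFractionRing S K' := integralClosure.isFractionRing_of_finite_extension (RatFunc K) K'
  have : IsDedekindDomain S := integralClosure.isDedekindDomain K[X] (RatFunc K) K'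
  have : Module.Finite K[X] S := IsIntegralClosure.finite K[X] (RatFunc K) K' S
  have : Module.IsTorsionFree K[X] K' := .trans_faithfulSMul K[X] (RatFunc K) K'
  let p : Ideal K[X] := Ideal.span {X}
  have : p.IsMaximal := isMaximal_span_X K
  have hp : p ≠ ⊥ := by simp [p]
  have hrank : Module.finrank K[X] S = Module.finrank (RatFunc K) K' :=
    IsIntegralClosure.rank K[X] (RatFunc K) K' S
  obtain ⟨P, ⟨_, _⟩, he, hf⟩ := exists_primesOver_not_dvd p S (hrank ▸ hl)
  have : P.IsMaximal := .of_liesOver_isMaximal P p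
  have hP : P ≠ ⊥ := Ideal.ne_bot_of_liesOver_of_ne_bot hp P
  let O := Localization.subalgebra.ofField K' P.primeCompl P.primeCompl_le_nonZeroDivisors
  have : IsLocalization.AtPrime O P := Localization.subalgebra.isLocalization_ofField K' _ _
  have : IsDiscreteValuationRing O :=
    IsLocalization.AtPrime.isDiscreteValuationRing_of_dedekind_domain S hP O
  have hfin : Module.finrank K (ResidueField O) = P.inertiaDeg K[X] :=
    finrank_residueField_eq_inertiaDeg P O
  refine ⟨O.restrictScalars K, inferInstanceAs (IsFractionRing O K'),
    inferInstanceAs (IsDiscreteValuationRing O), ?_, hfin ▸ hf,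
    algebraMap S O (algebraMap K[X] S X), P.ramificationIdx K[X], ?_, ?_, he⟩
  · exact Module.finite_of_finrank_pos (hfin ▸ Nat.pos_of_ne_zero fun h ↦ hf (h ▸ dvd_zero l))
  · change algebraMap (RatFunc K) K' (algebraMap K[X] (RatFunc K) X) = _
    rw [RatFunc.algebraMap_X]
  · have hpS : p.map (algebraMap K[X] S) ≠ ⊥ := Ideal.map_ne_bot_of_ne_bot hp
    have hfinite : FiniteMultiplicity P (Ideal.span {algebraMap K[X] S X}) := by
      rw [← Set.image_singleton, ← Ideal.map_span]
      exact .of_prime_left (Ideal.prime_of_isPrime hP inferInstance) hpS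
    rw [Ideal.IsDedekindDomain.ramificationIdx_eq_multiplicity p P hpS, Ideal.map_span,
      Set.image_singleton, ← hfinite.emultiplicity_eq_multiplicity]
    exact addVal_algebraMap_eq_emultiplicity P O (algebraMap K[X] S X)

end DiscreteValuationRing

/-! ### Trace forms of towers of cube roots -/

section TraceForms

variable {A B : Type*} [CommRing A] [CommRing B] {k : ℕ}

/-- The trace of `θ ^ m`, divided by `3`, in the cubic algebra generated by `θ` with `θ ^ 3 = t`. -/
def cubeRootTrace (t : A) (m : ℕ) : A := if 3 ∣ m then t ^ (m / 3) else 0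

/-- The trace of `c * c' * c''`, divided by `3 ^ k`, in the algebra of rank `3 ^ k` generated by
cube roots `θ j` of the `t j`. Its elements are written in the basis of the monomials
`∏ j, θ j ^ (e j : ℕ)`, so that their own normalised trace is the coefficient at `e = 0`. -/
def triTrace (t : Fin k → A) (c c' c'' : (Fin k → Fin 3) → A) : A :=
  ∑ e, ∑ e', ∑ e'', (∏ j, cubeRootTrace (t j) (e j + e' j + e'' j : ℕ)) * (c e * c' e' * c'' e'')

/-- The normalised trace of the cube of an element of a tower of cube roots; see `triTrace`. -/
def cubeTrace (t : Fin k → A) (c : (Fin k → Fin 3) → A) : A :=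
  triTrace t c c c

lemma map_cubeRootTrace (f : A →+* B) (t : A) (m : ℕ) :
    f (cubeRootTrace t m) = cubeRootTrace (f t) m := by
  unfold cubeRootTrace
  split_ifs <;> simp

lemma map_triTrace (f : A →+* B) (t : Fin k → A) (c c' c'' : (Fin k → Fin 3) → A) :
    f (triTrace t c c' c'') = triTrace (f ∘ t) (f ∘ c) (f ∘ c') (f ∘ c'') := by
  simp only [triTrace, map_sum, map_mul, map_prod, map_cubeRootTrace, Function.comp_apply]

lemma map_cubeTrace (f : A →+* B) (t : Fin k → A) (c : (Fin k → Fin 3) → A) :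
    f (cubeTrace t c) = cubeTrace (f ∘ t) (f ∘ c) :=
  map_triTrace f t c c c

lemma triTrace_left_comm (t : Fin k → A) (c c' c'' : (Fin k → Fin 3) → A) :
    triTrace t c c' c'' = triTrace t c' c c'' := by
  simp only [triTrace]
  rw [Finset.sum_comm]
  simp only [mul_comm (c _) (c' _), add_comm]

lemma triTrace_right_comm (t : Fin k → A) (c c' c'' : (Fin k → Fin 3) → A) :
    triTrace t c c' c'' = triTrace t c c'' c' := by
  simp only [triTrace]
  refine Finset.sum_congr rfl fun _ _ ↦ ?_
  rw [Finset.sum_comm]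
  simp only [mul_right_comm (c _) (c' _), add_right_comm]

lemma triTrace_zero_mid (t : Fin k → A) (c c'' : (Fin k → Fin 3) → A) :
    triTrace t c 0 c'' = 0 := by
  simp [triTrace]

lemma cubeTrace_smul (t : Fin k → A) (r : A) (c : (Fin k → Fin 3) → A) :
    cubeTrace t (r • c) = r ^ 3 * cubeTrace t c := by
  simp only [cubeTrace, triTrace, Finset.mul_sum, Pi.smul_apply, smul_eq_mul]
  refine Finset.sum_congr rfl fun _ _ ↦ Finset.sum_congr rfl fun _ _ ↦
    Finset.sum_congr rfl fun _ _ ↦ ?_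
  ring

lemma cubeTrace_zero (t : Fin k → A) : cubeTrace t 0 = 0 := triTrace_zero_mid t 0 0

lemma cubeTrace_fin_zero (t : Fin 0 → A) (c : (Fin 0 → Fin 3) → A) :
    cubeTrace t c = c 0 ^ 3 := by
  simp only [cubeTrace, triTrace, Fintype.sum_unique, Finset.univ_eq_empty, Finset.prod_empty,
    one_mul, Subsingleton.elim _ (0 : Fin 0 → Fin 3), pow_three, mul_assoc]

/-- The coefficients of an element of a tower of `k + 1` cube roots at the monomials in which the
first cube root has exponent `a`. -/
def slice {A : Type*} (c : (Fin (k + 1) → Fin 3) → A) (a : Fin 3) : (Fin k → Fin 3) → A :=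
  fun e ↦ c (Fin.cons a e)

lemma slice_bijective {A : Type*} :
    Function.Bijective (slice : ((Fin (k + 1) → Fin 3) → A) → Fin 3 → (Fin k → Fin 3) → A) :=
  (((Fin.consEquiv fun _ ↦ Fin 3).symm.arrowCongr (.refl A)).trans
    (.curry (Fin 3) (Fin k → Fin 3) A)).bijective

lemma eq_zero_of_slice_eq_zero {A : Type*} [Zero A] {c : (Fin (k + 1) → Fin 3) → A}
    (h₀ : slice c 0 = 0) (h₁ : slice c 1 = 0) (h₂ : slice c 2 = 0) : c = 0 :=
  slice_bijective.injective <| funext fun a ↦ by fin_cases a; exacts [h₀, h₁, h₂]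

lemma slice_zero_zero {A : Type*} (c : (Fin (k + 1) → Fin 3) → A) : slice c 0 0 = c 0 :=
  congrArg c (Fin.cons_self_tail 0)

lemma sum_fin_succ_pi (f : (Fin (k + 1) → Fin 3) → A) :
    ∑ e, f e = ∑ a, ∑ e, f (Fin.cons a e) := by
  rw [← Fintype.sum_prod_type']
  exact ((Fin.consEquiv fun _ ↦ Fin 3).sum_comp f).symm

lemma triTrace_cons (x : A) (t : Fin k → A) (c c' c'' : (Fin (k + 1) → Fin 3) → A) :
    triTrace (Fin.cons x t) c c' c'' =
      ∑ a : Fin 3, ∑ a' : Fin 3, ∑ a'' : Fin 3, cubeRootTrace x (a + a' + a'' : ℕ) *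
        triTrace t (slice c a) (slice c' a') (slice c'' a'') := by
  simp only [triTrace, sum_fin_succ_pi, Finset.mul_sum]
  refine Finset.sum_congr rfl fun a _ ↦ ?_
  rw [Finset.sum_comm]
  refine Finset.sum_congr rfl fun a' _ ↦ ?_
  simp only [Finset.sum_comm (s := (Finset.univ : Finset (Fin k → Fin 3)))
    (t := (Finset.univ : Finset (Fin 3)))]
  simp only [Fin.prod_univ_succ, Fin.cons_zero, Fin.cons_succ, slice, mul_assoc]

theorem cubeTrace_cons (x : A) (t : Fin k → A) (c : (Fin (k + 1) → Fin 3) → A) :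
    cubeTrace (Fin.cons x t) c = cubeTrace t (slice c 0) +
      (x * cubeTrace t (slice c 1) + x ^ 2 * cubeTrace t (slice c 2) +
        6 * x * triTrace t (slice c 0) (slice c 1) (slice c 2)) := by
  have h₀₂₁ := triTrace_right_comm t (slice c 0) (slice c 2) (slice c 1)
  have h₁₀₂ := triTrace_left_comm t (slice c 1) (slice c 0) (slice c 2)
  have h₂₀₁ := (triTrace_left_comm t (slice c 2) (slice c 0) (slice c 1)).trans h₀₂₁
  have h₁₂₀ := (triTrace_right_comm t (slice c 1) (slice c 2) (slice c 0)).trans h₁₀₂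
  have h₂₁₀ := (triTrace_right_comm t (slice c 2) (slice c 1) (slice c 0)).trans h₂₀₁
  simp only [cubeTrace, triTrace_cons, Fin.sum_univ_three, h₀₂₁, h₁₀₂, h₂₀₁, h₁₂₀, h₂₁₀,
    cubeRootTrace, Fin.val_zero, Fin.val_one, Fin.val_two]
  norm_num
  ring

lemma exists_slice_zero_eq (c : (Fin k → Fin 3) → A) :
    ∃ c' : (Fin (k + 1) → Fin 3) → A, slice c' 0 = c ∧
      ∀ (x : A) (t : Fin k → A), cubeTrace (Fin.cons x t) c' = cubeTrace t c := by
  obtain ⟨c', hc'⟩ := slice_bijective.surjective ![c, 0, 0]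
  refine ⟨c', by simp [hc'], fun x t ↦ ?_⟩
  rw [cubeTrace_cons, hc']
  simp [cubeTrace_zero, triTrace_zero_mid]

end TraceForms

/-! ### Anisotropy over extensions of degree prime to three -/

section AddVal

open IsDiscreteValuationRing

lemma add_ne_zero_of_forall_lt {R Γ : Type*} [Ring R] [LinearOrderedAddCommMonoidWithTop Γ]
    (v : AddValuation R Γ) {a b c d : R} (hb : v a < v b) (hc : v a < v c) (hd : v a < v d) :
    a + (b + c + d) ≠ 0 := fun h ↦
  (v.map_lt_add (v.map_lt_add hb hc) hd).ne <| by
    rw [eq_neg_of_add_eq_zero_left h, v.map_neg]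

/-- The first three valuations are pairwise incongruent modulo `3` when finite, and the last one is
their average. -/
lemma exists_lt_of_not_three_dvd {m₀ m₁ m₂ : ℕ∞} {e : ℕ} (he : ¬ 3 ∣ e)
    (hm : ¬ (m₀ = ⊤ ∧ m₁ = ⊤ ∧ m₂ = ⊤)) :
    (3 * m₀ < e + 3 * m₁ ∧ 3 * m₀ < 2 * e + 3 * m₂ ∧ 3 * m₀ < e + (m₀ + m₁ + m₂)) ∨
    (e + 3 * m₁ < 3 * m₀ ∧ e + 3 * m₁ < 2 * e + 3 * m₂ ∧ e + 3 * m₁ < e + (m₀ + m₁ + m₂)) ∨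
    (2 * e + 3 * m₂ < 3 * m₀ ∧ 2 * e + 3 * m₂ < e + 3 * m₁ ∧
      2 * e + 3 * m₂ < e + (m₀ + m₁ + m₂)) := by
  have top : (3 : ℕ∞) * ⊤ = ⊤ := rfl
  cases m₀ <;> cases m₁ <;> cases m₂ <;>
    simp only [top, add_top, top_add, not_top_lt, false_and, and_false, false_or, or_false,
      ENat.natCast_ne_top, not_true, and_self] at hm ⊢ <;>
    norm_cast <;> (try simp only [ENat.natCast_lt_top, true_and, and_true]) <;> grind

variable {O : Type*} [CommRing O] [IsDomain O] [IsDiscreteValuationRing O]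

lemma iInf_addVal_eq_top_iff {ι : Type*} {u : ι → O} : ⨅ i, addVal O (u i) = ⊤ ↔ u = 0 := by
  simp [iInf_eq_top, funext_iff, addVal_eq_top_iff]

lemma exists_eq_smul_of_ne_zero {ι : Type*} [Finite ι] {u : ι → O} (hu : u ≠ 0) :
    ∃ (r : O) (a : ι → O), r ≠ 0 ∧ u = r • a ∧ (∃ i, IsUnit (a i)) ∧
      addVal O r = ⨅ i, addVal O (u i) := by
  have : Nonempty ι := not_isEmpty_iff.mp fun _ ↦ hu (Subsingleton.elim _ _)
  obtain ⟨i₀, hi₀⟩ := Finite.exists_min fun i ↦ addVal O (u i)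
  have hinf : addVal O (u i₀) = ⨅ i, addVal O (u i) := le_antisymm (le_iInf hi₀) (iInf_le _ i₀)
  have hr : u i₀ ≠ 0 := fun h ↦ hu <| iInf_addVal_eq_top_iff.mp (by rw [← hinf, h, addVal_zero])
  choose a ha using fun i ↦ addVal_le_iff_dvd.mp (hi₀ i)
  exact ⟨u i₀, a, hr, funext ha, ⟨i₀, by simp [mul_left_cancel₀ hr ((ha i₀).symm.trans
    (mul_one _).symm)]⟩, hinf⟩

lemma addVal_eq_mul_iInf_addVal {ι : Type*} [Finite ι] {f : (ι → O) → O} {d : ℕ} (hd : d ≠ 0)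
    (hf : ∀ (r : O) a, f (r • a) = r ^ d * f a) {u : ι → O}
    (hu : ∀ (r : O) a, r ≠ 0 → u = r • a → (∃ i, IsUnit (a i)) → IsUnit (f a)) :
    addVal O (f u) = d * ⨅ i, addVal O (u i) := by
  rcases eq_or_ne u 0 with rfl | h₀
  · have hf₀ : f 0 = 0 := by simpa [hd] using hf 0 0
    rw [hf₀, addVal_zero, iInf_addVal_eq_top_iff.mpr rfl, ENat.mul_top (by exact_mod_cast hd)]
  · obtain ⟨r, a, hr, rfl, ha, hinf⟩ := exists_eq_smul_of_ne_zero h₀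
    rw [← hinf, hf, addVal_mul, addVal_pow, addVal_eq_zero_iff.mpr (hu r a hr rfl ha), add_zero,
      nsmul_eq_mul]

lemma iInf_addVal_le_addVal_triTrace {k : ℕ} (t : Fin k → O) (c₀ c₁ c₂ : (Fin k → Fin 3) → O) :
    (⨅ i, addVal O (c₀ i)) + (⨅ i, addVal O (c₁ i)) + (⨅ i, addVal O (c₂ i)) ≤
      addVal O (triTrace t c₀ c₁ c₂) := by
  refine AddValuation.map_le_sum _ fun e _ ↦ AddValuation.map_le_sum _ fun e' _ ↦
    AddValuation.map_le_sum _ fun e'' _ ↦ ?_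
  rw [addVal_mul, addVal_mul, addVal_mul]
  exact le_add_left (add_le_add (add_le_add (iInf_le _ e) (iInf_le _ e')) (iInf_le _ e''))

lemma eq_zero_of_add_unit_mul_eq_zero {x : O} {e : ℕ} (hx : addVal O x = e) (he : ¬ 3 ∣ e) {k : ℕ}
    {t : Fin k → O} (ht : ∀ a : (Fin k → Fin 3) → O, (∃ i, IsUnit (a i)) → IsUnit (cubeTrace t a))
    {w g : O} (hw : IsUnit w) {m : ℕ∞} (hg : addVal O g = 3 * m)
    {c₀ c₁ c₂ : (Fin k → Fin 3) → O} (hm : m ≤ ⨅ i, addVal O (c₀ i))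
    (h : g + w * (x * cubeTrace t c₁ + x ^ 2 * cubeTrace t c₂ +
      6 * x * triTrace t c₀ c₁ c₂) = 0) :
    m = ⊤ ∧ c₁ = 0 ∧ c₂ = 0 := by
  have hcube (c : (Fin k → Fin 3) → O) :
      addVal O (cubeTrace t c) = 3 * ⨅ i, addVal O (c i) :=
    addVal_eq_mul_iInf_addVal three_ne_zero (cubeTrace_smul t) fun _ a _ _ ↦ ht a
  have hw₀ : addVal O w = 0 := addVal_eq_zero_iff.mpr hw
  have h₁ : addVal O (w * (x * cubeTrace t c₁)) = e + 3 * ⨅ i, addVal O (c₁ i) := by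
    rw [addVal_mul, addVal_mul, hw₀, hx, hcube, zero_add]
  have h₂ : addVal O (w * (x ^ 2 * cubeTrace t c₂)) = 2 * e + 3 * ⨅ i, addVal O (c₂ i) := by
    rw [addVal_mul, addVal_mul, addVal_pow, hw₀, hx, hcube, zero_add, nsmul_eq_mul, Nat.cast_ofNat]
  have h₃ : e + (m + (⨅ i, addVal O (c₁ i)) + ⨅ i, addVal O (c₂ i)) ≤
      addVal O (w * (6 * x * triTrace t c₀ c₁ c₂)) := by
    rw [addVal_mul, addVal_mul, addVal_mul, hw₀, hx, zero_add]
    exact add_le_add (le_add_left le_rfl)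
      (le_trans (by gcongr) (iInf_addVal_le_addVal_triTrace t c₀ c₁ c₂))
  by_contra hne
  rw [← iInf_addVal_eq_top_iff, ← iInf_addVal_eq_top_iff] at hne
  obtain ⟨lt₁, lt₂, lt₃⟩ | ⟨lt₁, lt₂, lt₃⟩ | ⟨lt₁, lt₂, lt₃⟩ := exists_lt_of_not_three_dvd he hne
  · rw [← hg] at lt₁ lt₂ lt₃
    refine add_ne_zero_of_forall_lt (addVal O) (h₁ ▸ lt₁) (h₂ ▸ lt₂) (lt₃.trans_le h₃) ?_
    linear_combination h
  · rw [← h₁] at lt₁ lt₂ lt₃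
    refine add_ne_zero_of_forall_lt (addVal O) (hg ▸ lt₁) (h₂ ▸ lt₂) (lt₃.trans_le h₃) ?_
    linear_combination h
  · rw [← h₂] at lt₁ lt₂ lt₃
    refine add_ne_zero_of_forall_lt (addVal O) (hg ▸ lt₁) (h₁ ▸ lt₂) (lt₃.trans_le h₃) ?_
    linear_combination h

end AddVal

section Anisotropy

open IsDiscreteValuationRing
open IsLocalRing (ResidueField residue residue_eq_zero_iff mem_maximalIdeal)
open Module (finrank)

universe u

/-- Over every extension of `K` of degree prime to `3`, an element of the tower of cube roots of `t`
whose cube has trace zero is zero. -/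
def IsAnisotropic (K : Type u) [Field K] {k : ℕ} (t : Fin k → K) : Prop :=
  ∀ (K' : Type u) [Field K'] [Algebra K K'] [FiniteDimensional K K'], ¬ 3 ∣ finrank K K' →
    ∀ c : (Fin k → Fin 3) → K', cubeTrace (algebraMap K K' ∘ t) c = 0 → c = 0

/-- Over every extension of `K` of degree prime to `3`, an element of the product of the towers of
cube roots of `t₁`, `t₂`, `t₃` is zero as soon as it and its cube have trace zero, where the
normalised traces on the three factors are weighted by `w₁`, `w₂`, `w₃`. -/
def IsJointlyAnisotropic (K : Type u) [Field K] (w₁ w₂ w₃ : ℕ) {k₁ k₂ k₃ : ℕ} (t₁ : Fin k₁ → K)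
    (t₂ : Fin k₂ → K) (t₃ : Fin k₃ → K) : Prop :=
  ∀ (K' : Type u) [Field K'] [Algebra K K'] [FiniteDimensional K K'], ¬ 3 ∣ finrank K K' →
    ∀ (c₁ : (Fin k₁ → Fin 3) → K') (c₂ : (Fin k₂ → Fin 3) → K') (c₃ : (Fin k₃ → Fin 3) → K'),
      w₁ * c₁ 0 + w₂ * c₂ 0 + w₃ * c₃ 0 = 0 →
      w₁ * cubeTrace (algebraMap K K' ∘ t₁) c₁ + w₂ * cubeTrace (algebraMap K K' ∘ t₂) c₂ +
        w₃ * cubeTrace (algebraMap K K' ∘ t₃) c₃ = 0 →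
      c₁ = 0 ∧ c₂ = 0 ∧ c₃ = 0

variable {K : Type u} [Field K] {w₁ w₂ w₃ k k₁ k₂ k₃ : ℕ} {t : Fin k → K} {t₁ : Fin k₁ → K}
  {t₂ : Fin k₂ → K} {t₃ : Fin k₃ → K}

lemma IsJointlyAnisotropic.rotate (h : IsJointlyAnisotropic K w₁ w₂ w₃ t₁ t₂ t₃) :
    IsJointlyAnisotropic K w₂ w₃ w₁ t₂ t₃ t₁ := by
  intro K' _ _ _ hK' c₂ c₃ c₁ hlin hcube
  obtain ⟨h₁, h₂, h₃⟩ :=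
    h K' hK' c₁ c₂ c₃ (by linear_combination hlin) (by linear_combination hcube)
  exact ⟨h₂, h₃, h₁⟩

lemma isUnit_natCast_of_algebra (K : Type*) [Field K] [CharZero K] {A : Type*} [Semiring A]
    [Algebra K A] {w : ℕ} (hw : w ≠ 0) : IsUnit (w : A) := by
  simpa using (Nat.cast_ne_zero.mpr hw : (w : K) ≠ 0).isUnit.map (algebraMap K A)

section Residue

variable {O : Type u} [CommRing O] [IsDomain O] [IsDiscreteValuationRing O] [Algebra K O]
  [Module.Finite K (ResidueField O)]

lemma IsAnisotropic.isUnit_cubeTrace (ht : IsAnisotropic K t)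
    (hO : ¬ 3 ∣ finrank K (ResidueField O)) {a : (Fin k → Fin 3) → O} (ha : ∃ i, IsUnit (a i)) :
    IsUnit (cubeTrace (algebraMap K O ∘ t) a) := by
  contrapose! ha with hcube
  rw [← mem_nonunits_iff, ← mem_maximalIdeal, ← residue_eq_zero_iff, map_cubeTrace] at hcube
  intro i hi
  exact (hi.map (residue O)).ne_zero (congrFun (ht (ResidueField O) hO _ hcube) i)

lemma IsJointlyAnisotropic.isUnit_sum_cubeTrace (ht : IsJointlyAnisotropic K w₁ w₂ w₃ t₁ t₂ t₃)
    (hO : ¬ 3 ∣ finrank K (ResidueField O))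
    {a : (Fin k₁ → Fin 3) ⊕ (Fin k₂ → Fin 3) ⊕ (Fin k₃ → Fin 3) → O}
    (hlin : w₁ * a (.inl 0) + w₂ * a (.inr (.inl 0)) + w₃ * a (.inr (.inr 0)) = 0)
    (ha : ∃ i, IsUnit (a i)) :
    IsUnit (w₁ * cubeTrace (algebraMap K O ∘ t₁) (a ∘ .inl) +
      w₂ * cubeTrace (algebraMap K O ∘ t₂) (a ∘ .inr ∘ .inl) +
      w₃ * cubeTrace (algebraMap K O ∘ t₃) (a ∘ .inr ∘ .inr)) := by
  contrapose! ha with hcube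
  rw [← mem_nonunits_iff, ← mem_maximalIdeal, ← residue_eq_zero_iff] at hcube
  replace hlin := congrArg (residue O) hlin
  simp only [map_add, map_mul, map_natCast, map_cubeTrace, map_zero] at hcube hlin
  obtain ⟨h₁, h₂, h₃⟩ := ht (ResidueField O) hO _ _ _ hlin hcube
  rintro (i | i | i) hi
  · exact (hi.map (residue O)).ne_zero (congrFun h₁ i)
  · exact (hi.map (residue O)).ne_zero (congrFun h₂ i)
  · exact (hi.map (residue O)).ne_zero (congrFun h₃ i)

lemma IsAnisotropic.eq_zero_of_cubeTrace_cons (ht : IsAnisotropic K t)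
    (hO : ¬ 3 ∣ finrank K (ResidueField O)) {x : O} {e : ℕ} (hx : addVal O x = e) (he : ¬ 3 ∣ e)
    {c : (Fin (k + 1) → Fin 3) → O} (hc : cubeTrace (Fin.cons x (algebraMap K O ∘ t)) c = 0) :
    c = 0 := by
  have hunit (a : (Fin k → Fin 3) → O) (ha : ∃ i, IsUnit (a i)) :
      IsUnit (cubeTrace (algebraMap K O ∘ t) a) := ht.isUnit_cubeTrace hO ha
  have hval := addVal_eq_mul_iInf_addVal (u := slice c 0) three_ne_zero
    (cubeTrace_smul (algebraMap K O ∘ t)) fun _ a _ _ ↦ hunit a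
  rw [cubeTrace_cons, ← one_mul (_ + _ + _)] at hc
  obtain ⟨h₀, h₁, h₂⟩ := eq_zero_of_add_unit_mul_eq_zero hx he hunit isUnit_one hval le_rfl hc
  exact eq_zero_of_slice_eq_zero (iInf_addVal_eq_top_iff.mp h₀) h₁ h₂

lemma IsJointlyAnisotropic.addVal_sum_cubeTrace (ht : IsJointlyAnisotropic K w₁ w₂ w₃ t₁ t₂ t₃)
    (hO : ¬ 3 ∣ finrank K (ResidueField O))
    {a : (Fin k₁ → Fin 3) ⊕ (Fin k₂ → Fin 3) ⊕ (Fin k₃ → Fin 3) → O}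
    (hlin : w₁ * a (.inl 0) + w₂ * a (.inr (.inl 0)) + w₃ * a (.inr (.inr 0)) = 0) :
    addVal O (w₁ * cubeTrace (algebraMap K O ∘ t₁) (a ∘ .inl) +
      w₂ * cubeTrace (algebraMap K O ∘ t₂) (a ∘ .inr ∘ .inl) +
      w₃ * cubeTrace (algebraMap K O ∘ t₃) (a ∘ .inr ∘ .inr)) = 3 * ⨅ i, addVal O (a i) := by
  let f (a : (Fin k₁ → Fin 3) ⊕ (Fin k₂ → Fin 3) ⊕ (Fin k₃ → Fin 3) → O) : O :=
    w₁ * cubeTrace (algebraMap K O ∘ t₁) (a ∘ .inl) +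
      w₂ * cubeTrace (algebraMap K O ∘ t₂) (a ∘ .inr ∘ .inl) +
      w₃ * cubeTrace (algebraMap K O ∘ t₃) (a ∘ .inr ∘ .inr)
  have hf (r : O) b : f (r • b) = r ^ 3 * f b := by
    simp only [f, Pi.smul_comp, cubeTrace_smul]
    ring
  refine addVal_eq_mul_iInf_addVal (f := f) three_ne_zero hf fun r b hr hab hb ↦
    ht.isUnit_sum_cubeTrace hO (mul_left_cancel₀ hr ?_) hb
  simp only [hab, Pi.smul_apply, smul_eq_mul] at hlin
  linear_combination hlin

lemma IsJointlyAnisotropic.eq_zero_of_cubeTrace_cons [CharZero K]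
    (ht : IsJointlyAnisotropic K w₁ w₂ w₃ t₁ t₂ t₃) (ht₁ : IsAnisotropic K t₁) (hw₁ : w₁ ≠ 0)
    (hO : ¬ 3 ∣ finrank K (ResidueField O)) {x : O} {e : ℕ} (hx : addVal O x = e) (he : ¬ 3 ∣ e)
    {c₁ : (Fin (k₁ + 1) → Fin 3) → O} {c₂ : (Fin k₂ → Fin 3) → O} {c₃ : (Fin k₃ → Fin 3) → O}
    (hlin : w₁ * c₁ 0 + w₂ * c₂ 0 + w₃ * c₃ 0 = 0)
    (hcube : w₁ * cubeTrace (Fin.cons x (algebraMap K O ∘ t₁)) c₁ +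
      w₂ * cubeTrace (algebraMap K O ∘ t₂) c₂ + w₃ * cubeTrace (algebraMap K O ∘ t₃) c₃ = 0) :
    c₁ = 0 ∧ c₂ = 0 ∧ c₃ = 0 := by
  let a := Sum.elim (slice c₁ 0) (Sum.elim c₂ c₃)
  rw [← slice_zero_zero c₁] at hlin
  rw [cubeTrace_cons] at hcube
  obtain ⟨h₀, h₁, h₂⟩ := eq_zero_of_add_unit_mul_eq_zero hx he
    (fun _ hb ↦ ht₁.isUnit_cubeTrace hO hb) (isUnit_natCast_of_algebra K hw₁)
    (ht.addVal_sum_cubeTrace hO (a := a) hlin)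
    (le_iInf fun i ↦ iInf_le (fun i ↦ addVal O (a i)) (.inl i)) (c₀ := slice c₁ 0)
    (c₁ := slice c₁ 1) (c₂ := slice c₁ 2) (by
      simp only [a, Sum.elim_comp_inl, ← Function.comp_assoc, Sum.elim_comp_inr]
      linear_combination hcube)
  have ha : a = 0 := iInf_addVal_eq_top_iff.mp h₀
  exact ⟨eq_zero_of_slice_eq_zero (funext fun i ↦ congrFun ha (.inl i)) h₁ h₂,
    funext fun i ↦ congrFun ha (.inr (.inl i)), funext fun i ↦ congrFun ha (.inr (.inr i))⟩

end Residue

end Anisotropy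

section AdjoinVariables

open Module (finrank)

universe u

lemma exists_algebraMap_comp_eq_smul (R : Type*) {F : Type*} [CommRing R] [IsDomain R] [Field F]
    [Algebra R F] [IsFractionRing R F] {ι : Type*} [Finite ι] (c : ι → F) :
    ∃ (s : F) (u : ι → R), s ≠ 0 ∧ algebraMap R F ∘ u = s • c := by
  obtain ⟨b, hb⟩ := IsLocalization.exist_integer_multiples_of_finite (nonZeroDivisors R) c
  choose u hu using hb
  refine ⟨algebraMap R F b, u, IsFractionRing.to_map_ne_zero_of_mem_nonZeroDivisors b.2, ?_⟩
  ext i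
  rw [Function.comp_apply, hu i, Algebra.smul_def, Pi.smul_apply, smul_eq_mul]

lemma eq_zero_of_algebraMap_comp_eq_smul {R F : Type*} [CommRing R] [Field F] [Algebra R F]
    {ι : Type*} {s : F} (hs : s ≠ 0) {u : ι → R} {c : ι → F} (h : algebraMap R F ∘ u = s • c)
    (hu : u = 0) : c = 0 := by
  subst hu
  exact (smul_eq_zero_iff_right hs).mp (h.symm.trans (funext fun _ ↦ map_zero _))

variable {K : Type u} [Field K] [CharZero K] {w₁ w₂ w₃ k k₁ k₂ k₃ : ℕ} {t : Fin k → K}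
  {t₁ : Fin k₁ → K} {t₂ : Fin k₂ → K} {t₃ : Fin k₃ → K}

instance charZero_ratFunc : CharZero (RatFunc K) :=
  charZero_of_injective_algebraMap (algebraMap K (RatFunc K)).injective

theorem IsAnisotropic.cons_X (ht : IsAnisotropic K t) :
    IsAnisotropic (RatFunc K) (Fin.cons RatFunc.X (algebraMap K (RatFunc K) ∘ t)) := by
  intro K' _ _ _ hK' c hc
  let : Algebra K K' := .compHom K' (algebraMap K (RatFunc K))
  have : IsScalarTower K (RatFunc K) K' := .of_algebraMap_eq fun _ ↦ rfl
  obtain ⟨O, _, _, _, hO, x, e, hx, hxe, he⟩ :=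
    exists_subalgebra_isDiscreteValuationRing K K' hK'
  obtain ⟨s, u, hs, hu⟩ := exists_algebraMap_comp_eq_smul O c
  refine eq_zero_of_algebraMap_comp_eq_smul hs hu (ht.eq_zero_of_cubeTrace_cons hO hxe he ?_)
  apply FaithfulSMul.algebraMap_injective O K'
  rw [map_zero, map_cubeTrace, hu, cubeTrace_smul, Fin.comp_cons, hx]
  rw [Fin.comp_cons] at hc
  exact mul_eq_zero_of_right _ hc

theorem IsJointlyAnisotropic.cons_X (ht : IsJointlyAnisotropic K w₁ w₂ w₃ t₁ t₂ t₃)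
    (ht₁ : IsAnisotropic K t₁) (hw₁ : w₁ ≠ 0) :
    IsJointlyAnisotropic (RatFunc K) w₁ w₂ w₃
      (Fin.cons RatFunc.X (algebraMap K (RatFunc K) ∘ t₁) : Fin (k₁ + 1) → RatFunc K)
      (algebraMap K (RatFunc K) ∘ t₂) (algebraMap K (RatFunc K) ∘ t₃) := by
  intro K' _ _ _ hK' c₁ c₂ c₃ hlin hcube
  let : Algebra K K' := .compHom K' (algebraMap K (RatFunc K))
  have : IsScalarTower K (RatFunc K) K' := .of_algebraMap_eq fun _ ↦ rfl
  obtain ⟨O, _, _, _, hO, x, e, hx, hxe, he⟩ :=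
    exists_subalgebra_isDiscreteValuationRing K K' hK'
  obtain ⟨s, u, hs, hu⟩ := exists_algebraMap_comp_eq_smul O (Sum.elim c₁ (Sum.elim c₂ c₃))
  have hu₁ : algebraMap O K' ∘ (u ∘ .inl) = s • c₁ := funext fun i ↦ congrFun hu (.inl i)
  have hu₂ : algebraMap O K' ∘ (u ∘ .inr ∘ .inl) = s • c₂ :=
    funext fun i ↦ congrFun hu (.inr (.inl i))
  have hu₃ : algebraMap O K' ∘ (u ∘ .inr ∘ .inr) = s • c₃ :=
    funext fun i ↦ congrFun hu (.inr (.inr i))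
  have hinj : Function.Injective (algebraMap O K') := FaithfulSMul.algebraMap_injective O K'
  have hlin' : w₁ * u (.inl 0) + w₂ * u (.inr (.inl 0)) + w₃ * u (.inr (.inr 0)) = 0 := by
    apply hinj
    simp only [map_add, map_mul, map_natCast, map_zero]
    have h₁ : algebraMap O K' (u (.inl 0)) = s * c₁ 0 := congrFun hu₁ 0
    have h₂ : algebraMap O K' (u (.inr (.inl 0))) = s * c₂ 0 := congrFun hu₂ 0
    have h₃ : algebraMap O K' (u (.inr (.inr 0))) = s * c₃ 0 := congrFun hu₃ 0
    rw [h₁, h₂, h₃]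
    linear_combination s * hlin
  have hcube' : w₁ * cubeTrace (Fin.cons x (algebraMap K O ∘ t₁)) (u ∘ .inl) +
      w₂ * cubeTrace (algebraMap K O ∘ t₂) (u ∘ .inr ∘ .inl) +
      w₃ * cubeTrace (algebraMap K O ∘ t₃) (u ∘ .inr ∘ .inr) = 0 := by
    have halg {k : ℕ} (t : Fin k → K) : algebraMap O K' ∘ algebraMap K O ∘ t =
      algebraMap (RatFunc K) K' ∘ algebraMap K (RatFunc K) ∘ t := rfl
    apply hinj
    rw [Fin.comp_cons] at hcube
    simp only [map_add, map_mul, map_natCast, map_zero, map_cubeTrace, hu₁, hu₂, hu₃,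
      cubeTrace_smul, Fin.comp_cons, hx, halg]
    linear_combination s ^ 3 * hcube
  obtain ⟨h₁, h₂, h₃⟩ := ht.eq_zero_of_cubeTrace_cons ht₁ hw₁ hO hxe he hlin' hcube'
  exact ⟨eq_zero_of_algebraMap_comp_eq_smul hs hu₁ h₁, eq_zero_of_algebraMap_comp_eq_smul hs hu₂ h₂,
    eq_zero_of_algebraMap_comp_eq_smul hs hu₃ h₃⟩

theorem IsAnisotropic.ratFunc (ht : IsAnisotropic K t) :
    IsAnisotropic (RatFunc K) (algebraMap K (RatFunc K) ∘ t) := by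
  intro K' _ _ _ hK' c hc
  obtain ⟨c', rfl, hc'⟩ := exists_slice_zero_eq c
  rw [ht.cons_X K' hK' c' (by rw [Fin.comp_cons, hc', hc])]
  rfl

theorem IsJointlyAnisotropic.ratFunc (ht : IsJointlyAnisotropic K w₁ w₂ w₃ t₁ t₂ t₃)
    (ht₁ : IsAnisotropic K t₁) (hw₁ : w₁ ≠ 0) :
    IsJointlyAnisotropic (RatFunc K) w₁ w₂ w₃ (algebraMap K (RatFunc K) ∘ t₁)
      (algebraMap K (RatFunc K) ∘ t₂) (algebraMap K (RatFunc K) ∘ t₃) := by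
  intro K' _ _ _ hK' c₁ c₂ c₃ hlin hcube
  obtain ⟨c', rfl, hc'⟩ := exists_slice_zero_eq c₁
  obtain ⟨rfl, h₂, h₃⟩ := ht.cons_X ht₁ hw₁ K' hK' c' c₂ c₃ (by rw [← slice_zero_zero c', hlin])
    (by rw [Fin.comp_cons, hc', hcube])
  exact ⟨rfl, h₂, h₃⟩

theorem exists_algebraicIndependent_isJointlyAnisotropic
    (ht : IsJointlyAnisotropic K w₁ w₂ w₃ t₁ t₂ t₃) (ht₁ : IsAnisotropic K t₁) (hw₁ : w₁ ≠ 0)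
    (n : ℕ) :
    ∃ (M : Type u) (_ : Field M) (_ : CharZero M) (_ : Algebra K M) (y : Fin n → M),
      AlgebraicIndependent K y ∧ IsAnisotropic M (algebraMap K M ∘ t₁) ∧
      IsJointlyAnisotropic M w₁ w₂ w₃ (algebraMap K M ∘ t₁) (algebraMap K M ∘ t₂)
        (algebraMap K M ∘ t₃) := by
  induction n with
  | zero =>
    exact ⟨K, inferInstance, inferInstance, inferInstance, Fin.elim0,
      algebraicIndependent_empty_type_iff.mpr (algebraMap K K).injective, ht₁, ht⟩
  | succ n ih =>
    obtain ⟨M, _, _, _, y, hy, hM₁, hM⟩ := ih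
    have hX : AlgebraicIndependent M fun _ : Unit ↦ (RatFunc.X : RatFunc M) :=
      algebraicIndependent_unique_type_iff.mpr RatFunc.transcendental_X
    let e : Fin (n + 1) ≃ Unit ⊕ Fin n := Fintype.equivOfCardEq (by simp; lia)
    exact ⟨RatFunc M, inferInstance, inferInstance, inferInstance, _,
      (algebraicIndependent_equiv' e rfl).mpr (hy.sumElim_comp hX), hM₁.ratFunc,
      hM.ratFunc hM₁ hw₁⟩

end AdjoinVariables

section Tower

open Polynomial
open Module (finrank)

section PrimeToThree

variable {K K' : Type*} [Field K] [Field K'] [Algebra K K'] [FiniteDimensional K K']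

lemma exists_isRoot_of_natDegree_eq_three {P : K[X]} (hP : P.natDegree = 3)
    (hK' : ¬ 3 ∣ finrank K K') {r : K'} (hr : aeval r P = 0) : ∃ q, P.IsRoot q := by
  have hintegral : IsIntegral K r := .of_finite K r
  obtain ⟨Q, rfl⟩ := minpoly.dvd K r hr
  have hQ : Q ≠ 0 := by
    rintro rfl
    simp at hP
  rw [natDegree_mul (minpoly.ne_zero hintegral) hQ] at hP
  have hthree : (minpoly K r).natDegree ≠ 3 := fun h ↦ hK' (h ▸ minpoly.degree_dvd hintegral)
  have hpos := minpoly.natDegree_pos hintegral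
  obtain hlin | hlin : (minpoly K r).natDegree = 1 ∨ Q.natDegree = 1 := by lia
  · obtain ⟨q, hq⟩ := exists_root_of_degree_eq_one
      ((degree_eq_iff_natDegree_eq_of_pos one_pos).2 hlin)
    exact ⟨q, root_mul_right_of_isRoot Q hq⟩
  · obtain ⟨q, hq⟩ := exists_root_of_degree_eq_one
      ((degree_eq_iff_natDegree_eq_of_pos one_pos).2 hlin)
    exact ⟨q, root_mul_left_of_isRoot _ hq⟩

lemma eq_zero_of_binary_cubic_eq_zero {a b c d : K}
    (h : ∀ x y : K, a * x ^ 3 + b * x ^ 2 * y + c * x * y ^ 2 + d * y ^ 3 = 0 → x = 0 ∧ y = 0)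
    (hK' : ¬ 3 ∣ finrank K K') {x y : K'}
    (hxy : algebraMap K K' a * x ^ 3 + algebraMap K K' b * x ^ 2 * y +
      algebraMap K K' c * x * y ^ 2 + algebraMap K K' d * y ^ 3 = 0) :
    x = 0 ∧ y = 0 := by
  have ha : a ≠ 0 := by
    rintro rfl
    exact one_ne_zero (h 1 0 (by ring)).1
  have hy : y = 0 := by
    by_contra hy
    obtain ⟨q, hq⟩ := exists_isRoot_of_natDegree_eq_three
        (natDegree_cubic (b := b) (c := c) (d := d) ha) hK' (r := x / y) (by
      simp only [map_add, map_mul, map_pow, aeval_C, aeval_X]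
      field_simp
      linear_combination hxy)
    refine one_ne_zero (h q 1 ?_).2
    simp only [IsRoot.def, eval_add, eval_mul, eval_pow, eval_C, eval_X] at hq
    linear_combination hq
  subst hy
  refine ⟨?_, rfl⟩
  simpa [ha] using hxy

lemma eq_zero_of_linear_cubic_eq_zero {w₁ w₂ w₃ : K}
    (h : ∀ y₁ y₂ y₃ : K, w₁ * y₁ + w₂ * y₂ + w₃ * y₃ = 0 →
      w₁ * y₁ ^ 3 + w₂ * y₂ ^ 3 + w₃ * y₃ ^ 3 = 0 → y₁ = 0 ∧ y₂ = 0 ∧ y₃ = 0)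
    (hK' : ¬ 3 ∣ finrank K K') {y₁ y₂ y₃ : K'}
    (hlin : algebraMap K K' w₁ * y₁ + algebraMap K K' w₂ * y₂ + algebraMap K K' w₃ * y₃ = 0)
    (hcube : algebraMap K K' w₁ * y₁ ^ 3 + algebraMap K K' w₂ * y₂ ^ 3 +
      algebraMap K K' w₃ * y₃ ^ 3 = 0) :
    y₁ = 0 ∧ y₂ = 0 ∧ y₃ = 0 := by
  have hw₃ : w₃ ≠ 0 := by
    rintro rfl
    exact one_ne_zero (h 0 0 1 (by ring) (by ring)).2.2
  obtain ⟨rfl, rfl⟩ : y₁ = 0 ∧ y₂ = 0 := by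
    -- The cubic obtained by eliminating `y₃`.
    refine eq_zero_of_binary_cubic_eq_zero (a := w₃ ^ 2 * w₁ - w₁ ^ 3) (b := -(3 * w₁ ^ 2 * w₂))
      (c := -(3 * w₁ * w₂ ^ 2)) (d := w₃ ^ 2 * w₂ - w₂ ^ 3) (fun x y hxy ↦ ?_) hK' ?_
    · obtain ⟨hx, hy, -⟩ := h x y (-(w₁ * x + w₂ * y) / w₃) (by field_simp; ring)
        (by field_simp; linear_combination hxy)
      exact ⟨hx, hy⟩
    · simp only [map_sub, map_neg, map_mul, map_pow, map_ofNat]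
      have hcubed : (algebraMap K K' w₁ * y₁ + algebraMap K K' w₂ * y₂) ^ 3 =
          (-(algebraMap K K' w₃ * y₃)) ^ 3 := by rw [eq_neg_of_add_eq_zero_left hlin]
      linear_combination algebraMap K K' w₃ ^ 2 * hcube - hcubed
  simpa [hw₃] using hlin

end PrimeToThree

lemma isAnisotropic_fin_zero (K : Type*) [Field K] (t : Fin 0 → K) : IsAnisotropic K t := by
  intro K' _ _ _ _ c hc
  rw [cubeTrace_fin_zero] at hc
  ext i
  rw [Subsingleton.elim i 0, eq_zero_of_pow_eq_zero hc, Pi.zero_apply]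

lemma isJointlyAnisotropic_fin_zero {k₁ k₂ k₃ : ℕ} (h₂₁ : k₂ < k₁) (h₃₂ : k₃ < k₂)
    (t₁ t₂ t₃ : Fin 0 → ℚ) :
    IsJointlyAnisotropic ℚ (3 ^ k₁) (3 ^ k₂) (3 ^ k₃) t₁ t₂ t₃ := by
  intro K' _ _ _ hK' c₁ c₂ c₃ hlin hcube
  simp only [cubeTrace_fin_zero] at hcube
  have hc : c₁ 0 = 0 ∧ c₂ 0 = 0 ∧ c₃ 0 = 0 :=
    eq_zero_of_linear_cubic_eq_zero (fun _ _ _ ↦ eq_zero_of_weighted_sums_eq_zero h₂₁ h₃₂) hK'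
      (by simpa using hlin) (by simpa using hcube)
  have hzero {c : (Fin 0 → Fin 3) → K'} (h : c 0 = 0) : c = 0 :=
    funext fun i ↦ Subsingleton.elim i 0 ▸ h
  exact ⟨hzero hc.1, hzero hc.2.1, hzero hc.2.2⟩

/-- Some field carries three towers of `k₁`, `k₂` and `k₃` cube roots of nonzero elements, each of
them anisotropic, which are moreover jointly anisotropic for the weights `w₁`, `w₂`, `w₃`. -/
def ExistsAnisotropicTowers (w₁ w₂ w₃ k₁ k₂ k₃ : ℕ) : Prop :=
  ∃ (K : Type) (_ : Field K) (_ : CharZero K) (t₁ : Fin k₁ → K) (t₂ : Fin k₂ → K) (t₃ : Fin k₃ → K),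
    ((∀ i, t₁ i ≠ 0) ∧ (∀ i, t₂ i ≠ 0) ∧ ∀ i, t₃ i ≠ 0) ∧
    (IsAnisotropic K t₁ ∧ IsAnisotropic K t₂ ∧ IsAnisotropic K t₃) ∧
    IsJointlyAnisotropic K w₁ w₂ w₃ t₁ t₂ t₃

namespace ExistsAnisotropicTowers

variable {w₁ w₂ w₃ k₁ k₂ k₃ : ℕ}

lemma rotate (h : ExistsAnisotropicTowers w₁ w₂ w₃ k₁ k₂ k₃) :
    ExistsAnisotropicTowers w₂ w₃ w₁ k₂ k₃ k₁ := by
  obtain ⟨K, _, _, t₁, t₂, t₃, ⟨hne₁, hne₂, hne₃⟩, ⟨ht₁, ht₂, ht₃⟩, ht⟩ := h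
  exact ⟨K, _, ‹_›, t₂, t₃, t₁, ⟨hne₂, hne₃, hne₁⟩, ⟨ht₂, ht₃, ht₁⟩, ht.rotate⟩

lemma succ (hw₁ : w₁ ≠ 0) (h : ExistsAnisotropicTowers w₁ w₂ w₃ k₁ k₂ k₃) :
    ExistsAnisotropicTowers w₁ w₂ w₃ (k₁ + 1) k₂ k₃ := by
  obtain ⟨K, _, _, t₁, t₂, t₃, ⟨hne₁, hne₂, hne₃⟩, ⟨ht₁, ht₂, ht₃⟩, ht⟩ := h
  have hne {k : ℕ} {t : Fin k → K} (ht : ∀ i, t i ≠ 0) (i : Fin k) :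
      (algebraMap K (RatFunc K) ∘ t) i ≠ 0 := by simp [ht i]
  exact ⟨RatFunc K, inferInstance, inferInstance, _, _, _,
    ⟨Fin.cases RatFunc.X_ne_zero (hne hne₁), hne hne₂, hne hne₃⟩,
    ⟨ht₁.cons_X, ht₂.ratFunc, ht₃.ratFunc⟩, ht.cons_X ht₁ hw₁⟩

lemma of_zero (hw₁ : w₁ ≠ 0) (h : ExistsAnisotropicTowers w₁ w₂ w₃ 0 k₂ k₃) (k : ℕ) :
    ExistsAnisotropicTowers w₁ w₂ w₃ k k₂ k₃ := by
  induction k with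
  | zero => exact h
  | succ k ih => exact ih.succ hw₁

end ExistsAnisotropicTowers

theorem existsAnisotropicTowers {k₁ k₂ k₃ : ℕ} (h₂₁ : k₂ < k₁) (h₃₂ : k₃ < k₂) :
    ExistsAnisotropicTowers (3 ^ k₁) (3 ^ k₂) (3 ^ k₃) k₁ k₂ k₃ := by
  have hw (k : ℕ) : 3 ^ k ≠ 0 := by positivity
  have hbase : ExistsAnisotropicTowers (3 ^ k₁) (3 ^ k₂) (3 ^ k₃) 0 0 0 :=
    ⟨ℚ, inferInstance, inferInstance, Fin.elim0, Fin.elim0, Fin.elim0,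
      ⟨Fin.rec0, Fin.rec0, Fin.rec0⟩,
      ⟨isAnisotropic_fin_zero ℚ _, isAnisotropic_fin_zero ℚ _, isAnisotropic_fin_zero ℚ _⟩,
      isJointlyAnisotropic_fin_zero h₂₁ h₃₂ _ _ _⟩
  have h₁ := (hbase.of_zero (hw k₁) k₁).rotate
  have h₂ := (h₁.of_zero (hw k₂) k₂).rotate
  exact (h₂.of_zero (hw k₃) k₃).rotate

end Tower

/-! ### Conjugates of elements of towers of cube roots -/

section CubeRoots

open Polynomial

variable {Ω : Type*} [Field Ω]

/-- `β` lists the cube roots of `t` with multiplicity. -/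
def IsCubeRoots (t : Ω) (β : Fin 3 → Ω) : Prop :=
  ∀ z, z ^ 3 - t = ∏ i, (z - β i)

lemma exists_isCubeRoots [IsAlgClosed Ω] (t : Ω) : ∃ β, IsCubeRoots t β := by
  obtain ⟨α, rfl⟩ := IsAlgClosed.exists_pow_nat_eq t three_pos
  obtain ⟨ω, hω⟩ : ∃ ω : Ω, ω ^ 2 + ω + 1 = 0 := by
    obtain ⟨ω, hω⟩ := IsAlgClosed.exists_root (cyclotomic 3 Ω)
      (by rw [degree_cyclotomic, Nat.totient_prime Nat.prime_three]; decide)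
    exact ⟨ω, by simpa [cyclotomic_three] using hω⟩
  refine ⟨![α, α * ω, α * ω ^ 2], fun z ↦ ?_⟩
  simp only [Fin.prod_univ_three, Matrix.cons_val]
  linear_combination (z ^ 2 * α - z * α ^ 2 * ω + α ^ 3 * (ω - 1)) * hω

namespace IsCubeRoots

variable {t : Ω} {β : Fin 3 → Ω}

lemma pow_three (h : IsCubeRoots t β) (i : Fin 3) : β i ^ 3 = t :=
  sub_eq_zero.mp ((h _).trans (Finset.prod_eq_zero (Finset.mem_univ i) (sub_self _)))

lemma exists_eq (h : IsCubeRoots t β) {z : Ω} (hz : z ^ 3 = t) : ∃ i, β i = z := by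
  obtain ⟨i, -, hi⟩ := Finset.prod_eq_zero_iff.mp ((h z).symm.trans (sub_eq_zero.mpr hz))
  exact ⟨i, (sub_eq_zero.mp hi).symm⟩

lemma ne_zero (h : IsCubeRoots t β) (ht : t ≠ 0) (i : Fin 3) : β i ≠ 0 :=
  ne_zero_pow three_ne_zero (by rwa [h.pow_three])

lemma pow_eq (h : IsCubeRoots t β) (i : Fin 3) (N : ℕ) :
    β i ^ N = t ^ (N / 3) * β i ^ (N % 3) := by
  conv_lhs => rw [← Nat.div_add_mod N 3, pow_add, pow_mul, h.pow_three]

variable [CharZero Ω]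

lemma sum_eq_zero (h : IsCubeRoots t β) : ∑ i, β i = 0 := by
  have h₀ := h 0
  have h₁ := h 1
  have h₂ := h (-1)
  simp only [Fin.prod_univ_three] at h₀ h₁ h₂
  rw [Fin.sum_univ_three]
  linear_combination (1 / 2) * h₁ + (1 / 2) * h₂ - h₀

lemma sum_sq_eq_zero (h : IsCubeRoots t β) : ∑ i, β i ^ 2 = 0 := by
  have h₀ := h 0
  have h₁ := h 1
  have hsum := h.sum_eq_zero
  simp only [Fin.prod_univ_three, Fin.sum_univ_three] at h₀ h₁ hsum ⊢
  linear_combination (β 0 + β 1 + β 2 - 2) * hsum - 2 * h₀ + 2 * h₁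

lemma sum_pow (h : IsCubeRoots t β) (N : ℕ) : ∑ i, β i ^ N = 3 * cubeRootTrace t N := by
  simp only [h.pow_eq _ N, ← Finset.mul_sum, cubeRootTrace]
  have hN : N % 3 < 3 := Nat.mod_lt _ three_pos
  interval_cases hmod : N % 3
  · simp [Nat.dvd_of_mod_eq_zero hmod, mul_comm]
  · simp [Nat.dvd_iff_mod_eq_zero, hmod, h.sum_eq_zero]
  · simp [Nat.dvd_iff_mod_eq_zero, hmod, h.sum_sq_eq_zero]

lemma sq_add_mul_add_sq (h : IsCubeRoots t β) {i j : Fin 3} (hij : i ≠ j) :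
    β i ^ 2 + β i * β j + β j ^ 2 = 0 := by
  obtain ⟨l, hil, hjl, huniv⟩ : ∃ l, i ≠ l ∧ j ≠ l ∧ Finset.univ = {i, j, l} := by
    revert i j
    decide
  have hsum := h.sum_eq_zero
  have hsq := h.sum_sq_eq_zero
  rw [huniv, Finset.sum_insert (by simp [hij, hil]), Finset.sum_pair hjl] at hsum hsq
  linear_combination (1 / 2) * hsq + (1 / 2) * (β i + β j - β l) * hsum

lemma sum_pow_mul_inv (h : IsCubeRoots t β) (ht : t ≠ 0) (i j : Fin 3) :
    ∑ e : Fin 3, β i ^ (e : ℕ) * (β j ^ (e : ℕ))⁻¹ = if i = j then 3 else 0 := by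
  have hj := h.ne_zero ht j
  split_ifs with hij
  · simp [hij, hj]
  · simp only [Fin.sum_univ_three, Fin.val_zero, Fin.val_one, Fin.val_two]
    field_simp
    linear_combination h.sq_add_mul_add_sq hij

end IsCubeRoots

variable {k : ℕ} {β : Fin k → Fin 3 → Ω}

/-- The image of the monomial `∏ j, θ j ^ (e j : ℕ)` in the cube roots `θ j` of `t j` under the
embedding that sends `θ j` to `β j (m j)`. -/
def rootMonomial (β : Fin k → Fin 3 → Ω) (e m : Fin k → Fin 3) : Ω :=
  ∏ j, β j (m j) ^ (e j : ℕ)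

/-- The image of the element with coordinates `c` of a tower of cube roots `θ j` of `t j` under the
embedding that sends `θ j` to `β j (m j)`; see `triTrace`. -/
def conjugate (β : Fin k → Fin 3 → Ω) (c : (Fin k → Fin 3) → Ω) (m : Fin k → Fin 3) : Ω :=
  ∑ e, c e * rootMonomial β e m

section PowerSums

variable [CharZero Ω] {t : Fin k → Ω}

lemma sum_rootMonomial_mul_inv (h : ∀ j, IsCubeRoots (t j) (β j)) (ht : ∀ j, t j ≠ 0)
    (m m' : Fin k → Fin 3) :
    ∑ e, rootMonomial β e m * (rootMonomial β e m')⁻¹ = if m = m' then 3 ^ k else 0 := by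
  simp only [rootMonomial, ← Finset.prod_inv_distrib, ← Finset.prod_mul_distrib]
  rw [← Fintype.piFinset_univ, ← Finset.prod_univ_sum (fun _ ↦ Finset.univ)
    fun j (i : Fin 3) ↦ β j (m j) ^ (i : ℕ) * (β j (m' j) ^ (i : ℕ))⁻¹]
  simp only [fun j ↦ (h j).sum_pow_mul_inv (ht j), Finset.prod_ite_zero]
  simp [funext_iff]

lemma sum_prod_pow (h : ∀ j, IsCubeRoots (t j) (β j)) (N : Fin k → ℕ) :
    ∑ m : Fin k → Fin 3, ∏ j, β j (m j) ^ N j = 3 ^ k * ∏ j, cubeRootTrace (t j) (N j) := by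
  rw [← Fintype.piFinset_univ, ← Finset.prod_univ_sum (fun _ ↦ Finset.univ) fun j i ↦ β j i ^ N j]
  simp [fun j ↦ (h j).sum_pow, Finset.prod_mul_distrib]

lemma sum_conjugate (h : ∀ j, IsCubeRoots (t j) (β j)) (c : (Fin k → Fin 3) → Ω) :
    ∑ m, conjugate β c m = 3 ^ k * c 0 := by
  simp only [conjugate, rootMonomial]
  rw [Finset.sum_comm]
  simp only [← Finset.mul_sum, sum_prod_pow h]
  rw [Finset.sum_eq_single 0 (fun e _ he ↦ ?_) (by simp)]
  · simp [cubeRootTrace, mul_comm]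
  · obtain ⟨j, hj⟩ := Function.ne_iff.mp he
    have hdvd : ¬ 3 ∣ (e j : ℕ) := by
      rw [Pi.zero_apply, ne_eq, Fin.ext_iff, Fin.val_zero] at hj
      lia
    rw [Finset.prod_eq_zero (Finset.mem_univ j) (if_neg hdvd), mul_zero, mul_zero]

lemma sum_conjugate_pow_three (h : ∀ j, IsCubeRoots (t j) (β j)) (c : (Fin k → Fin 3) → Ω) :
    ∑ m, conjugate β c m ^ 3 = 3 ^ k * cubeTrace t c := by
  have hexpand (m : Fin k → Fin 3) : conjugate β c m ^ 3 = ∑ e, ∑ e', ∑ e'',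
      (∏ j, β j (m j) ^ (e j + e' j + e'' j : ℕ)) * (c e * c e' * c e'') := by
    rw [_root_.pow_three, conjugate, Finset.sum_mul_sum, Finset.sum_mul_sum]
    refine Finset.sum_congr rfl fun e _ ↦ Finset.sum_congr rfl fun e' _ ↦ ?_
    rw [Finset.mul_sum]
    refine Finset.sum_congr rfl fun e'' _ ↦ ?_
    simp only [pow_add, Finset.prod_mul_distrib, rootMonomial]
    ring
  simp only [hexpand, cubeTrace, triTrace, Finset.mul_sum]
  rw [Finset.sum_comm]
  refine Finset.sum_congr rfl fun e _ ↦ ?_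
  rw [Finset.sum_comm]
  refine Finset.sum_congr rfl fun e' _ ↦ ?_
  rw [Finset.sum_comm]
  refine Finset.sum_congr rfl fun e'' _ ↦ ?_
  rw [← Finset.sum_mul, sum_prod_pow h, mul_assoc]

end PowerSums

section Subfield

variable {K : Type*} [Field K] [Algebra K Ω] {t : Fin k → K}

lemma mem_span_range_rootMonomial_iff {f : (Fin k → Fin 3) → Ω} :
    f ∈ Submodule.span K (Set.range (rootMonomial β)) ↔
      ∃ c : (Fin k → Fin 3) → K, conjugate β (algebraMap K Ω ∘ c) = f := by
  rw [Submodule.mem_span_range_iff_exists_fun]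
  refine exists_congr fun c ↦ Eq.congr_left ?_
  ext m
  simp [conjugate, Algebra.smul_def]

lemma prod_pow_mem_span_range_rootMonomial (h : ∀ j, IsCubeRoots (algebraMap K Ω (t j)) (β j))
    (N : Fin k → ℕ) :
    (fun m ↦ ∏ j, β j (m j) ^ N j) ∈ Submodule.span K (Set.range (rootMonomial β)) := by
  have hsmul : (fun m ↦ ∏ j, β j (m j) ^ N j) =
      (∏ j, t j ^ (N j / 3)) • rootMonomial β fun j ↦ ⟨N j % 3, Nat.mod_lt _ three_pos⟩ := by
    ext m
    rw [Pi.smul_apply, Algebra.smul_def, map_prod, rootMonomial, ← Finset.prod_mul_distrib]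
    exact Finset.prod_congr rfl fun j _ ↦ by rw [(h j).pow_eq, map_pow]
  exact hsmul ▸ Submodule.smul_mem _ _ (Submodule.subset_span ⟨_, rfl⟩)

lemma exists_conjugate_eq_aeval (h : ∀ j, IsCubeRoots (algebraMap K Ω (t j)) (β j))
    (c : (Fin k → Fin 3) → K) (P : K[X]) :
    ∃ c' : (Fin k → Fin 3) → K, ∀ m,
      aeval (conjugate β (algebraMap K Ω ∘ c) m) P = conjugate β (algebraMap K Ω ∘ c') m := by
  let S : Subalgebra K ((Fin k → Fin 3) → Ω) :=
    (Submodule.span K (Set.range (rootMonomial β))).toSubalgebra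
      (by simpa [Pi.one_def] using prod_pow_mem_span_range_rootMonomial h 0) fun f g hf hg ↦ by
        have hfg := Submodule.mul_mem_mul hf hg
        rw [Submodule.span_mul_span] at hfg
        refine Submodule.span_le.mpr ?_ hfg
        rintro _ ⟨_, ⟨e, rfl⟩, _, ⟨e', rfl⟩, rfl⟩
        have hmul := prod_pow_mem_span_range_rootMonomial h fun j ↦ (e j + e' j : ℕ)
        simp only [pow_add, Finset.prod_mul_distrib] at hmul
        exact hmul
  have hS : aeval (conjugate β (algebraMap K Ω ∘ c)) P ∈ S :=
    Algebra.adjoin_singleton_le (S := S) (mem_span_range_rootMonomial_iff.mpr ⟨c, rfl⟩)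
      (aeval_mem_adjoin_singleton K _)
  obtain ⟨c', hc'⟩ := mem_span_range_rootMonomial_iff.mp hS
  exact ⟨c', fun m ↦ by rw [hc', aeval_pi_apply₂]⟩

lemma isAlgebraic_rootMonomial (h : ∀ j, IsCubeRoots (algebraMap K Ω (t j)) (β j))
    (e m : Fin k → Fin 3) : IsAlgebraic K (rootMonomial β e m) := by
  rw [← mem_algebraicClosure_iff]
  refine prod_mem fun j _ ↦ pow_mem (mem_algebraicClosure_iff.mpr (.of_pow three_pos ?_)) _
  rw [(h j).pow_three]
  exact isAlgebraic_algebraMap _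

lemma map_conjugate_mem_range (h : ∀ j, IsCubeRoots (algebraMap K Ω (t j)) (β j))
    (c : (Fin k → Fin 3) → K) (τ : Ω →ₐ[K] Ω) (m : Fin k → Fin 3) :
    τ (conjugate β (algebraMap K Ω ∘ c) m) ∈ Set.range (conjugate β (algebraMap K Ω ∘ c)) := by
  have hroot (j : Fin k) : ∃ i, β j i = τ (β j (m j)) :=
    (h j).exists_eq (by rw [← map_pow, (h j).pow_three, τ.commutes])
  choose m' hm' using hroot
  exact ⟨m', by simp [conjugate, rootMonomial, hm']⟩

end Subfield

end CubeRoots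

/-! ### An anisotropic family of algebraically independent elements -/

section LinearSubstitution

open Matrix

variable {K Ω J : Type*} [Field K] [Field Ω] [Algebra K Ω] [Fintype J] {y : J → Ω}

lemma aeval_map_C_mulVec_X {S : Type*} [CommRing S] [Algebra K S] (A : Matrix J J K) (z : J → S)
    (i : J) :
    MvPolynomial.aeval z ((A.map MvPolynomial.C *ᵥ MvPolynomial.X) i) =
      (A.map (algebraMap K S) *ᵥ z) i := by
  simp [mulVec, dotProduct]

variable [DecidableEq J]

lemma algebraicIndependent_map_C_mulVec_X {A : Matrix J J K} (hA : IsUnit A) :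
    AlgebraicIndependent K (A.map MvPolynomial.C *ᵥ (MvPolynomial.X : J → MvPolynomial J K)) := by
  obtain ⟨B, hAB⟩ := hA.exists_right_inv
  let invSubst := MvPolynomial.aeval (R := K)
    (B.map MvPolynomial.C *ᵥ (MvPolynomial.X : J → MvPolynomial J K))
  refine Function.LeftInverse.injective (g := invSubst) fun p ↦ ?_
  have hid : invSubst.comp (MvPolynomial.aeval (A.map MvPolynomial.C *ᵥ MvPolynomial.X)) =
      AlgHom.id K _ := by
    refine MvPolynomial.algHom_ext fun i ↦ ?_
    rw [AlgHom.comp_apply, MvPolynomial.aeval_X, aeval_map_C_mulVec_X, MvPolynomial.algebraMap_eq,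
      mulVec_mulVec, ← Matrix.map_mul, hAB, Matrix.map_one _ (map_zero _) (map_one _), one_mulVec,
      AlgHom.id_apply]
  exact DFunLike.congr_fun hid p

lemma algebraicIndependent_map_mulVec (hy : AlgebraicIndependent K y) {A : Matrix J J K}
    (hA : IsUnit A) : AlgebraicIndependent K (A.map (algebraMap K Ω) *ᵥ y) := by
  convert hy.aeval_of_algebraicIndependent (algebraicIndependent_map_C_mulVec_X hA) using 2 with i
  exact (aeval_map_C_mulVec_X A y i).symm

lemma algebraicIndependent_mulVec (hy : AlgebraicIndependent K y) {A : Matrix J J Ω}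
    (hA : IsUnit A) (halg : ∀ i j, IsAlgebraic K (A i j)) : AlgebraicIndependent K (A *ᵥ y) := by
  let A' : Matrix J J (algebraicClosure K Ω) :=
    .of fun i j ↦ ⟨A i j, mem_algebraicClosure_iff.mpr (halg i j)⟩
  have hA' : IsUnit A' := by
    rw [isUnit_iff_isUnit_det, isUnit_iff_ne_zero] at hA ⊢
    refine ne_of_apply_ne (algebraMap (algebraicClosure K Ω) Ω) ?_
    rwa [RingHom.map_det, map_zero]
  exact (algebraicIndependent_map_mulVec (hy.extendScalars (algebraicClosure K Ω)) hA'
    ).restrictScalars (algebraMap K (algebraicClosure K Ω)).injective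

end LinearSubstitution

section Blocks

open Matrix Polynomial
open Module (finrank)

universe u

variable {Ω : Type*} [Field Ω] {k k₁ k₂ k₃ : ℕ}

lemma conjugate_eq_mulVec (β : Fin k → Fin 3 → Ω) (c : (Fin k → Fin 3) → Ω) :
    conjugate β c = (Matrix.of (rootMonomial β))ᵀ *ᵥ c := by
  ext m
  simp [conjugate, mulVec, dotProduct, mul_comm]

lemma isUnit_of_rootMonomial [CharZero Ω] {t : Fin k → Ω} {β : Fin k → Fin 3 → Ω}
    (h : ∀ j, IsCubeRoots (t j) (β j)) (ht : ∀ j, t j ≠ 0) :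
    IsUnit (Matrix.of (rootMonomial β))ᵀ := by
  refine (Matrix.isUnit_iff_isUnit_det _).mpr (Matrix.isUnit_det_of_right_inverse
    (B := (3 ^ k : Ω)⁻¹ • .of fun e m ↦ (rootMonomial β e m)⁻¹) ?_)
  rw [Matrix.mul_smul]
  ext m m'
  simp [Matrix.mul_apply, sum_rootMonomial_mul_inv h ht, Matrix.one_apply]

/-- Index set of the union of the conjugates in three towers of `k₁`, `k₂`, `k₃` cube roots. -/
abbrev Blocks (k₁ k₂ k₃ : ℕ) : Type :=
  (Fin k₁ → Fin 3) ⊕ (Fin k₂ → Fin 3) ⊕ (Fin k₃ → Fin 3)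

/-- The conjugates of the element with coordinates `c` of a product of three towers of cube
roots. -/
def blockConjugate (β₁ : Fin k₁ → Fin 3 → Ω) (β₂ : Fin k₂ → Fin 3 → Ω) (β₃ : Fin k₃ → Fin 3 → Ω)
    (c : Blocks k₁ k₂ k₃ → Ω) : Blocks k₁ k₂ k₃ → Ω :=
  Sum.elim (conjugate β₁ (c ∘ .inl))
    (Sum.elim (conjugate β₂ (c ∘ .inr ∘ .inl)) (conjugate β₃ (c ∘ .inr ∘ .inr)))

section

variable {K : Type*} [Field K] [Algebra K Ω] {t₁ : Fin k₁ → K} {t₂ : Fin k₂ → K} {t₃ : Fin k₃ → K}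
  {β₁ : Fin k₁ → Fin 3 → Ω} {β₂ : Fin k₂ → Fin 3 → Ω} {β₃ : Fin k₃ → Fin 3 → Ω}

lemma algebraicIndependent_blockConjugate [CharZero Ω]
    (h₁ : ∀ j, IsCubeRoots (algebraMap K Ω (t₁ j)) (β₁ j))
    (h₂ : ∀ j, IsCubeRoots (algebraMap K Ω (t₂ j)) (β₂ j))
    (h₃ : ∀ j, IsCubeRoots (algebraMap K Ω (t₃ j)) (β₃ j))
    (hne₁ : ∀ j, t₁ j ≠ 0) (hne₂ : ∀ j, t₂ j ≠ 0) (hne₃ : ∀ j, t₃ j ≠ 0)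
    {y : Blocks k₁ k₂ k₃ → Ω} (hy : AlgebraicIndependent K y) :
    AlgebraicIndependent K (blockConjugate β₁ β₂ β₃ y) := by
  have hunit : IsUnit (fromBlocks (Matrix.of (rootMonomial β₁))ᵀ 0 0
      (fromBlocks (Matrix.of (rootMonomial β₂))ᵀ 0 0 (Matrix.of (rootMonomial β₃))ᵀ)) := by
    simp only [isUnit_fromBlocks_zero₁₂]
    exact ⟨isUnit_of_rootMonomial h₁ (by simpa using hne₁),
      isUnit_of_rootMonomial h₂ (by simpa using hne₂),
      isUnit_of_rootMonomial h₃ (by simpa using hne₃)⟩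
  convert algebraicIndependent_mulVec hy hunit ?_ using 1
  · simp [blockConjugate, conjugate_eq_mulVec, fromBlocks_mulVec, Function.comp_assoc]
  · rintro (i | i | i) (j | j | j) <;>
      simp [isAlgebraic_rootMonomial h₁, isAlgebraic_rootMonomial h₂, isAlgebraic_rootMonomial h₃,
        isAlgebraic_zero]

lemma map_blockConjugate_mem_range (h₁ : ∀ j, IsCubeRoots (algebraMap K Ω (t₁ j)) (β₁ j))
    (h₂ : ∀ j, IsCubeRoots (algebraMap K Ω (t₂ j)) (β₂ j))
    (h₃ : ∀ j, IsCubeRoots (algebraMap K Ω (t₃ j)) (β₃ j)) (c : Blocks k₁ k₂ k₃ → K)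
    (τ : Ω →ₐ[K] Ω) (p : Blocks k₁ k₂ k₃) :
    τ (blockConjugate β₁ β₂ β₃ (algebraMap K Ω ∘ c) p) ∈
      Set.range (blockConjugate β₁ β₂ β₃ (algebraMap K Ω ∘ c)) := by
  simp only [blockConjugate, Set.Sum.elim_range, Function.comp_assoc]
  rcases p with m | m | m
  · exact .inl (map_conjugate_mem_range h₁ _ τ m)
  · exact .inr (.inl (map_conjugate_mem_range h₂ _ τ m))
  · exact .inr (.inr (map_conjugate_mem_range h₃ _ τ m))

lemma exists_blockConjugate_eq_aeval (h₁ : ∀ j, IsCubeRoots (algebraMap K Ω (t₁ j)) (β₁ j))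
    (h₂ : ∀ j, IsCubeRoots (algebraMap K Ω (t₂ j)) (β₂ j))
    (h₃ : ∀ j, IsCubeRoots (algebraMap K Ω (t₃ j)) (β₃ j)) (c : Blocks k₁ k₂ k₃ → K) (P : K[X]) :
    ∃ c' : Blocks k₁ k₂ k₃ → K, ∀ p,
      aeval (blockConjugate β₁ β₂ β₃ (algebraMap K Ω ∘ c) p) P =
        blockConjugate β₁ β₂ β₃ (algebraMap K Ω ∘ c') p := by
  obtain ⟨c₁, hc₁⟩ := exists_conjugate_eq_aeval h₁ (c ∘ .inl) P
  obtain ⟨c₂, hc₂⟩ := exists_conjugate_eq_aeval h₂ (c ∘ .inr ∘ .inl) P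
  obtain ⟨c₃, hc₃⟩ := exists_conjugate_eq_aeval h₃ (c ∘ .inr ∘ .inr) P
  refine ⟨Sum.elim c₁ (Sum.elim c₂ c₃), ?_⟩
  rintro (m | m | m)
  exacts [hc₁ m, hc₂ m, hc₃ m]

end

lemma IsJointlyAnisotropic.blockConjugate_eq_zero [CharZero Ω] {M : Type u} [Field M]
    {t₁ : Fin k₁ → M} {t₂ : Fin k₂ → M} {t₃ : Fin k₃ → M}
    (ht : IsJointlyAnisotropic M (3 ^ k₁) (3 ^ k₂) (3 ^ k₃) t₁ t₂ t₃)
    {M' : Type u} [Field M'] [Algebra M M'] [FiniteDimensional M M'] (hM' : ¬ 3 ∣ finrank M M')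
    [Algebra M' Ω] {β₁ : Fin k₁ → Fin 3 → Ω} {β₂ : Fin k₂ → Fin 3 → Ω} {β₃ : Fin k₃ → Fin 3 → Ω}
    (h₁ : ∀ j, IsCubeRoots (algebraMap M' Ω (algebraMap M M' (t₁ j))) (β₁ j))
    (h₂ : ∀ j, IsCubeRoots (algebraMap M' Ω (algebraMap M M' (t₂ j))) (β₂ j))
    (h₃ : ∀ j, IsCubeRoots (algebraMap M' Ω (algebraMap M M' (t₃ j))) (β₃ j))
    {c : Blocks k₁ k₂ k₃ → M'}
    (hlin : ∑ p, blockConjugate β₁ β₂ β₃ (algebraMap M' Ω ∘ c) p = 0)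
    (hcube : ∑ p, blockConjugate β₁ β₂ β₃ (algebraMap M' Ω ∘ c) p ^ 3 = 0) :
    blockConjugate β₁ β₂ β₃ (algebraMap M' Ω ∘ c) = 0 := by
  have hinj := (algebraMap M' Ω).injective
  obtain ⟨hc₁, hc₂, hc₃⟩ : c ∘ .inl = 0 ∧ c ∘ .inr ∘ .inl = 0 ∧ c ∘ .inr ∘ .inr = 0 := by
    refine ht M' hM' _ _ _ (hinj ?_) (hinj ?_)
    · simp only [blockConjugate, Fintype.sum_sum_type, Sum.elim_inl, Sum.elim_inr,
        sum_conjugate h₁, sum_conjugate h₂, sum_conjugate h₃] at hlin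
      simp only [map_add, map_mul, map_pow, map_ofNat, Nat.cast_pow, Nat.cast_ofNat, map_zero,
        add_assoc]
      exact hlin
    · simp only [blockConjugate, Fintype.sum_sum_type, Sum.elim_inl, Sum.elim_inr,
        sum_conjugate_pow_three h₁, sum_conjugate_pow_three h₂, sum_conjugate_pow_three h₃] at hcube
      simp only [map_add, map_mul, map_pow, map_cubeTrace, map_ofNat, Nat.cast_pow,
        Nat.cast_ofNat, map_zero, add_assoc]
      exact hcube
  have hzero : c = 0 := by
    ext (m | m | m)
    exacts [congrFun hc₁ m, congrFun hc₂ m, congrFun hc₃ m]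
  ext (m | m | m) <;> simp [hzero, blockConjugate, conjugate]

/-- A Galois-stable family of algebraically independent elements of `Ω` such that, for every
intermediate field `M'` of degree prime to `3` over `M`, the values of a polynomial over `M'` at the
family vanish as soon as their sum and the sum of their cubes do. -/
structure IsAnisotropicGeneric (M : Type u) [Field M] {Ω : Type*} [Field Ω] [CharZero Ω]
    [Algebra M Ω] {J : Type*} [Fintype J] (x : J → Ω) : Prop where
  algebraicIndependent : AlgebraicIndependent ℚ x
  map_mem_range (τ : Ω →ₐ[M] Ω) (p : J) : τ (x p) ∈ Set.range x
  aeval_eq_zero (M' : Type u) [Field M'] [Algebra M M'] [Algebra M' Ω] [IsScalarTower M M' Ω]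
    [FiniteDimensional M M'] (hM' : ¬ 3 ∣ finrank M M') (f : M'[X])
    (hsum : ∑ p, aeval (x p) f = 0) (hcube : ∑ p, aeval (x p) f ^ 3 = 0) (p : J) :
    aeval (x p) f = 0

theorem exists_isAnisotropicGeneric {k₁ k₂ k₃ : ℕ} (h₂₁ : k₂ < k₁) (h₃₂ : k₃ < k₂) :
    ∃ (M Ω : Type) (_ : Field M) (_ : Field Ω) (_ : CharZero Ω) (_ : Algebra M Ω)
      (_ : IsAlgClosure M Ω) (x : Blocks k₁ k₂ k₃ → Ω), IsAnisotropicGeneric M x := by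
  obtain ⟨K, _, _, t₁, t₂, t₃, ⟨hne₁, hne₂, hne₃⟩, ⟨ht₁, -, -⟩, ht⟩ :=
    existsAnisotropicTowers h₂₁ h₃₂
  obtain ⟨M, _, _, _, y₀, hy₀, -, hM⟩ := exists_algebraicIndependent_isJointlyAnisotropic ht ht₁
    (by positivity) (Fintype.card (Blocks k₁ k₂ k₃))
  obtain ⟨y, hy⟩ : ∃ y : Blocks k₁ k₂ k₃ → M, AlgebraicIndependent K y :=
    ⟨_, (algebraicIndependent_equiv' (Fintype.equivFin _) rfl).mpr hy₀⟩
  let Ω := AlgebraicClosure M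
  have : CharZero Ω := charZero_of_injective_algebraMap (algebraMap M Ω).injective
  choose β₁ hβ₁ using fun j ↦ exists_isCubeRoots (algebraMap M Ω (algebraMap K M (t₁ j)))
  choose β₂ hβ₂ using fun j ↦ exists_isCubeRoots (algebraMap M Ω (algebraMap K M (t₂ j)))
  choose β₃ hβ₃ using fun j ↦ exists_isCubeRoots (algebraMap M Ω (algebraMap K M (t₃ j)))
  refine ⟨M, Ω, inferInstance, inferInstance, this, inferInstance, inferInstance,
    blockConjugate β₁ β₂ β₃ (algebraMap M Ω ∘ y), ⟨?_, ?_, ?_⟩⟩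
  · have hyΩ : AlgebraicIndependent K (algebraMap M Ω ∘ y) :=
      hy.map' (f := IsScalarTower.toAlgHom K M Ω) (algebraMap M Ω).injective
    simp only [← IsScalarTower.algebraMap_apply] at hβ₁ hβ₂ hβ₃
    exact (algebraicIndependent_blockConjugate hβ₁ hβ₂ hβ₃ hne₁ hne₂ hne₃ hyΩ).restrictScalars
      (algebraMap ℚ K).injective
  · exact map_blockConjugate_mem_range hβ₁ hβ₂ hβ₃ y
  · intro M' _ _ _ _ _ hM' f hsum hcube p
    have htower : algebraMap M Ω ∘ y = algebraMap M' Ω ∘ algebraMap M M' ∘ y := by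
      rw [IsScalarTower.algebraMap_eq M M' Ω, RingHom.coe_comp, Function.comp_assoc]
    simp only [IsScalarTower.algebraMap_apply M M' Ω] at hβ₁ hβ₂ hβ₃
    obtain ⟨c, hc⟩ := exists_blockConjugate_eq_aeval hβ₁ hβ₂ hβ₃ (algebraMap M M' ∘ y) f
    simp only [htower, hc] at hsum hcube ⊢
    rw [hM.blockConjugate_eq_zero hM' hβ₁ hβ₂ hβ₃ hsum hcube, Pi.zero_apply]

end Blocks

/-! ### Descent of anisotropy along a specialization -/

section PrimeToLift

open Polynomial
open Module (finrank)

universe u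

lemma exists_irreducible_dvd_not_dvd_natDegree {M : Type*} [Field M] {l : ℕ} {P : M[X]}
    (hP : ¬ l ∣ P.natDegree) : ∃ q, Irreducible q ∧ q ∣ P ∧ ¬ l ∣ q.natDegree := by
  induction P using WfDvdMonoid.induction_on_irreducible with
  | zero => simp at hP
  | unit P hunit => simp [natDegree_eq_zero_of_isUnit hunit] at hP
  | mul P q hP₀ hq ih =>
    by_cases hlq : l ∣ q.natDegree
    · rw [natDegree_mul hq.ne_zero hP₀, Nat.dvd_add_right hlq] at hP
      obtain ⟨q', hq', hdvd, hlq'⟩ := ih hP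
      exact ⟨q', hq', hdvd.mul_left q, hlq'⟩
    · exact ⟨q, hq, dvd_mul_right q P, hlq⟩

lemma exists_algHom_not_dvd_finrank {F F' : Type*} [Field F] [Field F'] [Algebra F F']
    [FiniteDimensional F F'] [Algebra.IsSeparable F F'] {l : ℕ} (hl : ¬ l ∣ finrank F F')
    (M : Type u) [Field M] [Algebra F M] :
    ∃ (M' : Type u) (_ : Field M') (_ : Algebra M M') (_ : Algebra F M')
      (_ : IsScalarTower F M M') (_ : FiniteDimensional M M'),
      ¬ l ∣ finrank M M' ∧ Nonempty (F' →ₐ[F] M') := by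
  let pb := Field.powerBasisOfFiniteOfSeparable F F'
  obtain ⟨q, hq, hdvd, hlq⟩ := exists_irreducible_dvd_not_dvd_natDegree (l := l)
    (P := (minpoly F pb.gen).map (algebraMap F M))
    (by rwa [natDegree_map, pb.natDegree_minpoly, ← pb.finrank])
  have : Fact (Irreducible q) := ⟨hq⟩
  have hroot : aeval (AdjoinRoot.root q) (minpoly F pb.gen) = 0 := by
    rw [← aeval_map_algebraMap M, AdjoinRoot.aeval_eq, AdjoinRoot.mk_eq_zero]
    exact hdvd
  refine ⟨AdjoinRoot q, inferInstance, inferInstance, inferInstance, inferInstance,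
    (AdjoinRoot.powerBasis hq.ne_zero).finite, ?_, ⟨pb.lift _ hroot⟩⟩
  rwa [(AdjoinRoot.powerBasis hq.ne_zero).finrank, AdjoinRoot.powerBasis_dim]

end PrimeToLift

section TensorProduct

open Polynomial
open Module (finrank)
open Algebra.TensorProduct (productMap)

lemma trace_tmul {R A B : Type*} [CommRing R] [CommRing A] [Algebra R A] [CommRing B] [Algebra R B]
    [Module.Free R B] [Module.Finite R B] (a : A) (b : B) :
    Algebra.trace A (A ⊗[R] B) (a ⊗ₜ b) = a * algebraMap R A (Algebra.trace R B b) := by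
  have hsmul : a ⊗ₜ[R] b = a • ((1 : A) ⊗ₜ[R] b) := by
    rw [TensorProduct.smul_tmul', smul_eq_mul, mul_one]
  rw [hsmul, map_smul, smul_eq_mul, Algebra.trace_apply, Algebra.trace_apply,
    ← LinearMap.trace_baseChange, Algebra.baseChange_lmul]

variable {F E F' Ω : Type*} [Field F] [Field E] [Field F'] [Field Ω] [Algebra F E] [Algebra F F']
  [Algebra F Ω]

lemma map_trace_eq_sum_productMap [FiniteDimensional F E] [Algebra.IsSeparable F E] [IsAlgClosed Ω]
    (ρ : F' →ₐ[F] Ω) (z : F' ⊗[F] E) :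
    ρ (Algebra.trace F' (F' ⊗[F] E) z) = ∑ ψ : E →ₐ[F] Ω, productMap ρ ψ z := by
  induction z using TensorProduct.induction_on with
  | zero => simp
  | add z z' hz hz' => simp only [map_add, hz, hz', Finset.sum_add_distrib]
  | tmul a b =>
    rw [trace_tmul, map_mul, AlgHom.commutes, trace_eq_sum_embeddings Ω, Finset.mul_sum]
    simp

lemma productMap_aeval_one_tmul (ρ : F' →ₐ[F] Ω) (ψ : E →ₐ[F] Ω) (a : E) (f : F'[X]) :
    productMap ρ ψ (aeval ((1 : F') ⊗ₜ[F] a) f) = f.eval₂ (ρ : F' →+* Ω) (ψ a) := by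
  induction f using Polynomial.induction_on' with
  | add f g hf hg => simp only [map_add, hf, hg, eval₂_add]
  | monomial n c => simp [aeval_monomial, Algebra.TensorProduct.algebraMap_apply]

lemma exists_natDegree_lt_aeval_one_tmul_eq [FiniteDimensional F E] {a : E}
    (ha : Algebra.adjoin F {a} = ⊤) (z : F' ⊗[F] E) :
    ∃ f : F'[X], f.natDegree < finrank F E ∧ aeval ((1 : F') ⊗ₜ[F] a) f = z := by
  have hz : z ∈ Algebra.adjoin F' {(1 : F') ⊗ₜ[F] a} := by
    rw [← Set.image_singleton (f := ((1 : F') ⊗ₜ[F] ·)),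
      Algebra.TensorProduct.adjoin_one_tmul_image_eq_top _ ha]
    trivial
  rw [Algebra.adjoin_singleton_eq_range_aeval] at hz
  obtain ⟨f, rfl⟩ := hz
  have hintegral : IsIntegral F a := .of_finite F a
  let m := (minpoly F a).map (algebraMap F F')
  have hm : m.Monic := (minpoly.monic hintegral).map _
  have hmdeg : m.natDegree = (minpoly F a).natDegree := natDegree_map _
  have hmroot : aeval ((1 : F') ⊗ₜ[F] a) m = 0 := by
    rw [aeval_map_algebraMap, ← Algebra.TensorProduct.includeRight_apply, aeval_algHom_apply,
      minpoly.aeval, map_zero]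
  refine ⟨f %ₘ m, ?_, ?_⟩
  · refine (natDegree_modByMonic_lt f hm fun hm₁ ↦ ?_).trans_le
      (hmdeg.trans_le (minpoly.natDegree_le a))
    exact (minpoly.natDegree_pos hintegral).ne' (by rw [← hmdeg, hm₁, natDegree_one])
  · exact aeval_modByMonic_eq_self_of_root hmroot

end TensorProduct

section Descent

open Polynomial
open Module (finrank)
open Algebra.TensorProduct (productMap)

universe u

variable {F E F' Ω J : Type*} {M : Type u} [Field F] [Field E] [Field F'] [Field M] [Field Ω]
  [CharZero Ω] [Algebra F E] [FiniteDimensional F E] [Algebra F F'] [FiniteDimensional F F']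
  [Algebra F M] [Algebra M Ω] [Algebra F Ω] [IsScalarTower F M Ω] [IsAlgClosed Ω] [Fintype J]

theorem IsAnisotropicGeneric.eq_zero_of_trace_eq_zero {a : E} {ψ : J → E →ₐ[F] Ω}
    (hx : IsAnisotropicGeneric M fun p ↦ ψ p a) (ha : Algebra.adjoin F {a} = ⊤)
    (hcard : finrank F E ≤ Fintype.card J) (hF' : ¬ 3 ∣ finrank F F') {δ : F' ⊗[F] E}
    (htrace : Algebra.trace F' (F' ⊗[F] E) δ = 0)
    (htrace_cube : Algebra.trace F' (F' ⊗[F] E) (δ ^ 3) = 0) : δ = 0 := by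
  have hinj : Function.Injective fun p ↦ ψ p a := hx.algebraicIndependent.injective
  have : CharZero F := (algebraMap F Ω).charZero
  have hψ : Function.Bijective ψ := by
    have hψinj : Function.Injective ψ := fun p q hpq ↦ hinj congr($hpq a)
    refine hψinj.bijective_of_nat_card_le ?_
    rwa [Nat.card_eq_fintype_card, Nat.card_eq_fintype_card, AlgHom.card]
  obtain ⟨M', _, _, _, _, _, hM', ⟨ρ⟩⟩ := exists_algHom_not_dvd_finrank hF' M
  let _ : Algebra M' Ω := (IsAlgClosed.lift : M' →ₐ[M] Ω).toAlgebra
  have : IsScalarTower M M' Ω := .of_algebraMap_eq' (AlgHom.comp_algebraMap _).symm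
  have : IsScalarTower F M' Ω := .to₁₃₄ F M M' Ω
  obtain ⟨f, hf, rfl⟩ := exists_natDegree_lt_aeval_one_tmul_eq ha δ
  let ρΩ : F' →ₐ[F] Ω := (IsScalarTower.toAlgHom F M' Ω).comp ρ
  have hvalue (p : J) : productMap ρΩ (ψ p) (aeval ((1 : F') ⊗ₜ[F] a) f) =
      aeval (ψ p a) (f.map (ρ : F' →+* M')) := by
    rw [productMap_aeval_one_tmul, aeval_def, eval₂_map]
    rfl
  have htrace_eq (z : F' ⊗[F] E) :
      ρΩ (Algebra.trace F' (F' ⊗[F] E) z) = ∑ p, productMap ρΩ (ψ p) z := by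
    rw [map_trace_eq_sum_productMap]
    exact (hψ.sum_comp fun φ ↦ productMap ρΩ φ z).symm
  have hzero := hx.aeval_eq_zero M' hM' (f.map (ρ : F' →+* M'))
    (by simp only [← hvalue, ← htrace_eq, htrace, map_zero])
    (by simp only [← hvalue, ← map_pow (productMap ρΩ _), ← htrace_eq, htrace_cube, map_zero])
  have hf₀ : f.map (ρΩ : F' →+* Ω) = 0 := by
    refine eq_zero_of_natDegree_lt_card_of_eval_eq_zero _ hinj (fun p ↦ ?_)
      ((natDegree_map _).trans_lt (hf.trans_le hcard))
    rw [eval_map, ← productMap_aeval_one_tmul, hvalue, hzero]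
  rw [(Polynomial.map_eq_zero _).mp hf₀, map_zero]

end Descent

/-! ### The general field extension -/

section GeneralExtension

open GenExt Polynomial
open Module (finrank)
open IntermediateField (adjoin)

/-- The variable `xᵢ₊₁` as an element of `Lₙ` (the index `i : Fin n` starts at `0`). -/
abbrev genVar (n : ℕ) (i : Fin n) : L n :=
  algebraMap (MvPolynomial (Fin n) ℚ) (L n) (MvPolynomial.X i)

lemma permAut_genVar {n : ℕ} (σ : Equiv.Perm (Fin n)) (i : Fin n) :
    permAut n σ (genVar n i) = genVar n (σ i) := by
  simp [permAut, genVar]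

lemma genVar_injective (n : ℕ) : Function.Injective (genVar n) :=
  (IsFractionRing.injective (MvPolynomial (Fin n) ℚ) (L n)).comp MvPolynomial.X_injective

lemma ringHom_ext_genVar {n : ℕ} {R : Type*} [CommRing R] {f g : L n →+* R}
    (h : ∀ i, f (genVar n i) = g (genVar n i)) : f = g := by
  refine IsLocalization.ringHom_ext (nonZeroDivisors (MvPolynomial (Fin n) ℚ))
    (MvPolynomial.ringHom_ext (fun r ↦ ?_) h)
  exact congr($(Subsingleton.elim
    ((f.comp (algebraMap (MvPolynomial (Fin n) ℚ) (L n))).comp MvPolynomial.C)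
    ((g.comp (algebraMap (MvPolynomial (Fin n) ℚ) (L n))).comp MvPolynomial.C)) r)

lemma permAut_one {n : ℕ} (a : L n) : permAut n 1 a = a :=
  congr($(ringHom_ext_genVar (f := (permAut n 1 : L n →+* L n)) (g := .id _)
    fun i ↦ permAut_genVar 1 i) a)

lemma permAut_permAut {n : ℕ} (σ τ : Equiv.Perm (Fin n)) (a : L n) :
    permAut n σ (permAut n τ a) = permAut n (σ * τ) a := by
  have hcomp : (permAut n σ : L n →+* L n).comp (permAut n τ : L n →+* L n) = permAut n (σ * τ) :=
    ringHom_ext_genVar fun i ↦ by simp [permAut_genVar]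
  exact congr($hcomp a)

lemma exists_map_algebraMap_eq_of_map_permAut {n : ℕ} {p : (L n)[X]}
    (hp : ∀ σ, p.map (permAut n σ : L n →+* L n) = p) :
    ∃ q : (F n)[X], q.map (algebraMap (F n) (L n)) = p := by
  refine (mem_lifts p).mp ((lifts_iff_coeff_lifts p).mpr fun k ↦ ⟨⟨p.coeff k, fun σ _ ↦ ?_⟩, rfl⟩)
  have hcoeff := congr(coeff $(hp σ) k)
  rwa [coeff_map] at hcoeff

instance (n : ℕ) : IsScalarTower (F n) (E n) (L n) := .of_algebraMap_eq fun _ ↦ rfl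

variable {n : ℕ} [NeZero n]

lemma genVar_zero_mem_E : genVar n 0 ∈ E n :=
  fun σ hσ ↦ by rw [permAut_genVar, hσ 0 rfl]

/-- The variable `x₁` as an element of `Eₙ`. -/
def firstVar (n : ℕ) [NeZero n] : E n := ⟨genVar n 0, genVar_zero_mem_E⟩

lemma coe_aeval_firstVar (q : (F n)[X]) :
    (aeval (firstVar n) q : L n) = (q.map (algebraMap (F n) (L n))).eval (genVar n 0) := by
  rw [eval_map_algebraMap]
  exact (aeval_algebraMap_apply (L n) (firstVar n) q).symm

lemma permAut_eq_of_mem_E {a : L n} (ha : a ∈ E n) {σ τ : Equiv.Perm (Fin n)} (h : σ 0 = τ 0) :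
    permAut n σ a = permAut n τ a := by
  have hfix : permAut n (τ⁻¹ * σ) a = a := ha _ fun i hi ↦ by
    obtain rfl : i = 0 := Fin.ext hi
    simp [h]
  rw [← congr(permAut n τ $hfix), permAut_permAut, mul_inv_cancel_left]

/-- The Lagrange interpolant with value `aᵢ ∏_{j ≠ i} (xᵢ - xⱼ)` at each `xᵢ`, where the `aᵢ` are
the conjugates of `a ∈ Eₙ`. Unlike the interpolant with values `aᵢ`, it is defined without division;
being symmetric, it has coefficients in `Fₙ`. -/
def interpolant (a : L n) : (L n)[X] :=
  ∑ i, C (permAut n (Equiv.swap 0 i) a) * ∏ j ∈ Finset.univ.erase i, (X - C (genVar n j))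

lemma map_permAut_interpolant {a : L n} (ha : a ∈ E n) (σ : Equiv.Perm (Fin n)) :
    (interpolant a).map (permAut n σ : L n →+* L n) = interpolant a := by
  rw [interpolant, Polynomial.map_sum]
  refine Fintype.sum_equiv σ _ _ fun i ↦ ?_
  rw [Polynomial.map_mul, Polynomial.map_prod, map_C, RingHom.coe_coe, permAut_permAut,
    permAut_eq_of_mem_E ha (τ := Equiv.swap 0 (σ i)) (by simp)]
  congr 1
  exact Finset.prod_equiv σ (by simp) fun j _ ↦ by simp [permAut_genVar]

lemma eval_interpolant_genVar_zero (a : L n) : (interpolant a).eval (genVar n 0) =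
    a * ∏ j ∈ Finset.univ.erase 0, (genVar n 0 - genVar n j) := by
  rw [interpolant, eval_finsetSum, Finset.sum_eq_single 0]
  · rw [Equiv.swap_self, ← Equiv.Perm.one_def, permAut_one]
    simp [eval_prod]
  · intro i _ hi
    rw [eval_mul, eval_prod, Finset.prod_eq_zero (i := 0) (by simp [hi.symm]) (by simp), mul_zero]
  · simp

lemma adjoin_firstVar : adjoin (F n) {firstVar n} = ⊤ := by
  rw [eq_top_iff]
  rintro ⟨a, ha⟩ -
  obtain ⟨q, hq⟩ := exists_map_algebraMap_eq_of_map_permAut (map_permAut_interpolant ha)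
  obtain ⟨r, hr⟩ := exists_map_algebraMap_eq_of_map_permAut
    (map_permAut_interpolant (one_mem (E n)))
  have hprod : ∏ j ∈ Finset.univ.erase 0, (genVar n 0 - genVar n j) ≠ 0 :=
    Finset.prod_ne_zero_iff.mpr fun j hj ↦
      sub_ne_zero.mpr ((genVar_injective n).ne (Finset.ne_of_mem_erase hj).symm)
  have hquot : (⟨a, ha⟩ : E n) = aeval (firstVar n) q / aeval (firstVar n) r := by
    refine Subtype.ext ?_
    rw [Subfield.coe_div, coe_aeval_firstVar, coe_aeval_firstVar, hq, hr,
      eval_interpolant_genVar_zero, eval_interpolant_genVar_zero]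
    field_simp
  have hmem (q : (F n)[X]) : aeval (firstVar n) q ∈ adjoin (F n) {firstVar n} :=
    IntermediateField.algebra_adjoin_le_adjoin _ _ (aeval_mem_adjoin_singleton _ _)
  exact hquot ▸ div_mem (hmem q) (hmem r)

lemma exists_monic_natDegree_eq_aeval_firstVar :
    ∃ q : (F n)[X], q.Monic ∧ q.natDegree = n ∧ aeval (firstVar n) q = 0 := by
  have hmonic : (∏ j, (X - C (genVar n j))).Monic :=
    monic_prod_of_monic _ _ fun j _ ↦ monic_X_sub_C _
  obtain ⟨q, hq⟩ := exists_map_algebraMap_eq_of_map_permAut (n := n)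
      (p := ∏ j, (X - C (genVar n j))) fun σ ↦ by
    rw [Polynomial.map_prod]
    exact Fintype.prod_equiv σ _ _ fun i ↦ by simp [permAut_genVar]
  refine ⟨q, monic_of_injective (algebraMap (F n) (L n)).injective (hq ▸ hmonic), ?_, ?_⟩
  · rw [← natDegree_map (algebraMap (F n) (L n)), hq,
      natDegree_prod_of_monic _ _ fun j _ ↦ monic_X_sub_C _]
    simp
  · refine Subtype.ext ?_
    rw [coe_aeval_firstVar, hq, eval_prod]
    exact Finset.prod_eq_zero (Finset.mem_univ 0) (by simp)

lemma isIntegral_firstVar : IsIntegral (F n) (firstVar n) :=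
  let ⟨q, hmonic, _, hroot⟩ := exists_monic_natDegree_eq_aeval_firstVar (n := n)
  ⟨q, hmonic, hroot⟩

lemma algebra_adjoin_firstVar : Algebra.adjoin (F n) {firstVar n} = ⊤ := by
  rw [← IntermediateField.adjoin_simple_toSubalgebra_of_isAlgebraic isIntegral_firstVar.isAlgebraic,
    adjoin_firstVar, IntermediateField.top_toSubalgebra]

instance : FiniteDimensional (F n) (E n) := by
  have hfinite := IntermediateField.adjoin.finiteDimensional (isIntegral_firstVar (n := n))
  rw [adjoin_firstVar] at hfinite
  exact Module.Finite.equiv IntermediateField.topEquiv.toLinearEquiv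

lemma finrank_F_E_le : finrank (F n) (E n) ≤ n := by
  obtain ⟨q, hmonic, hdeg, hroot⟩ := exists_monic_natDegree_eq_aeval_firstVar (n := n)
  have hfinrank := IntermediateField.adjoin.finrank (isIntegral_firstVar (n := n))
  rw [adjoin_firstVar, IntermediateField.finrank_top'] at hfinrank
  rw [hfinrank]
  exact (natDegree_le_natDegree (minpoly.min _ _ hmonic hroot)).trans_eq hdeg

end GeneralExtension

/-! ### Specialization of the general extension -/

section Specialization

open GenExt
open Module (finrank)

lemma exists_ringHom_genVar_eq {n : ℕ} {Ω : Type*} [Field Ω] [CharZero Ω] {x : Fin n → Ω}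
    (hx : AlgebraicIndependent ℚ x) : ∃ φ : L n →+* Ω, ∀ i, φ (genVar n i) = x i := by
  have hinj : Function.Injective (MvPolynomial.aeval (R := ℚ) x).toRingHom := hx
  exact ⟨IsFractionRing.lift hinj, fun i ↦ by simp [genVar, IsFractionRing.lift_algebraMap]⟩

lemma map_mem_fieldRange_of_mem_F {n : ℕ} {M Ω : Type*} [Field M] [Field Ω] [Algebra M Ω]
    [IsGalois M Ω] {φ : L n →+* Ω}
    (hφ : ∀ (τ : Ω →ₐ[M] Ω) i, τ (φ (genVar n i)) ∈ Set.range fun j ↦ φ (genVar n j))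
    {a : L n} (ha : a ∈ F n) : φ a ∈ (algebraMap M Ω).fieldRange := by
  suffices φ a ∈ (⊥ : IntermediateField M Ω) from IntermediateField.mem_bot.mp this
  refine (InfiniteGalois.mem_bot_iff_fixed _).mpr fun τ ↦ ?_
  choose s hs using hφ τ
  have hs_inj : Function.Injective s := fun i j hij ↦
    genVar_injective n (φ.injective (τ.injective ((hs i).symm.trans (hij ▸ hs j))))
  let σ : Equiv.Perm (Fin n) := .ofBijective s (Finite.injective_iff_bijective.mp hs_inj)
  have hcomm : ((τ : Ω ≃+* Ω) : Ω →+* Ω).comp φ = φ.comp (permAut n σ : L n →+* L n) :=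
    ringHom_ext_genVar fun i ↦ (hs i).symm.trans congr(φ $(permAut_genVar σ i)).symm
  exact congr($hcomm a).trans congr(φ $(ha σ (Set.mem_univ σ)))

lemma exists_algHom_firstVar_eq {n : ℕ} [NeZero n] {Ω : Type*} [Field Ω] [Algebra (F n) Ω]
    (φ : L n →ₐ[F n] Ω) (i : Fin n) :
    ∃ ψ : E n →ₐ[F n] Ω, ψ (firstVar n) = φ (genVar n i) := by
  let permAlgHom : L n →ₐ[F n] L n :=
    { (permAut n (Equiv.swap 0 i) : L n →+* L n) with
      commutes' := fun a ↦ a.2 _ (Set.mem_univ _) }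
  have hvar : permAlgHom (genVar n 0) = genVar n i := by
    rw [← Equiv.swap_apply_left 0 i]
    exact permAut_genVar _ 0
  exact ⟨(φ.comp permAlgHom).comp (IsScalarTower.toAlgHom (F n) (E n) (L n)), congr(φ $hvar)⟩

theorem IsAnisotropicGeneric.eq_zero_of_trace_eq_zero_of_generalExtension {M Ω J : Type*} [Field M]
    [Field Ω] [CharZero Ω] [Algebra M Ω] [IsAlgClosed Ω] [IsGalois M Ω] [Fintype J] {x : J → Ω}
    (hx : IsAnisotropicGeneric M x) {n : ℕ} [NeZero n] (hn : Fintype.card J = n) {F' : Type*}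
    [Field F'] [Algebra (F n) F'] [FiniteDimensional (F n) F'] (hF' : ¬ 3 ∣ finrank (F n) F')
    {δ : F' ⊗[F n] E n} (htrace : Algebra.trace F' (F' ⊗[F n] E n) δ = 0)
    (htrace_cube : Algebra.trace F' (F' ⊗[F n] E n) (δ ^ 3) = 0) : δ = 0 := by
  let e : Fin n ≃ J := Fintype.equivOfCardEq (by simp [hn])
  obtain ⟨φ, hφ⟩ := exists_ringHom_genVar_eq ((algebraicIndependent_equiv e).mpr
    hx.algebraicIndependent)
  have hrange : ∀ a : F n, φ a ∈ (algebraMap M Ω).fieldRange := fun a ↦ by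
    refine map_mem_fieldRange_of_mem_F (fun τ i ↦ ?_) a.2
    simp only [hφ]
    exact (e.surjective.range_comp x).symm ▸ hx.map_mem_range τ (e i)
  let specialize : F n →+* M := (algebraMap M Ω).rangeRestrictFieldEquiv.symm.toRingHom.comp
    ((φ.comp (F n).subtype).codRestrict _ hrange)
  let _ : Algebra (F n) M := specialize.toAlgebra
  let _ : Algebra (F n) Ω := (φ.comp (F n).subtype).toAlgebra
  have : IsScalarTower (F n) M Ω := .of_algebraMap_eq fun a ↦
    ((algebraMap M Ω).rangeRestrictFieldEquiv_apply_symm_apply ⟨φ a, hrange a⟩).symm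
  choose ψ hψ using fun p ↦
    exists_algHom_firstVar_eq { φ with commutes' := fun _ ↦ rfl } (e.symm p)
  have hψx : (fun p ↦ ψ p (firstVar n)) = x := funext fun p ↦
    (hψ p).trans ((hφ _).trans congr(x $(e.apply_symm_apply p)))
  exact (hψx.symm ▸ hx).eq_zero_of_trace_eq_zero algebra_adjoin_firstVar
    (finrank_F_E_le.trans_eq hn.symm) hF' htrace htrace_cube

end Specialization

end HermiteJoubert

/-- **Theorem 3.1 (Theorem `thm:precise 1` of the paper):** for `n = 3^k₁ + 3^k₂ + 3^k₃`
with `k₁ > k₂ > k₃ ≥ 0` and every finite field extension `F′/Fₙ` of degree prime to `3`,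
the `F′`-algebra `E′ = F′ ⊗_{Fₙ} Eₙ` contains no nonzero element `δ` with
`Tr_{E′/F′}(δ) = Tr_{E′/F′}(δ³) = 0`. -/
theorem no_traceZero_cube_traceZero_in_prime_to_three_extension
    (k₁ k₂ k₃ : ℕ) (h₁ : k₁ > k₂) (h₂ : k₂ > k₃) (n : ℕ)
    (hn : n = 3 ^ k₁ + 3 ^ k₂ + 3 ^ k₃)
    (F' : Type) [Field F'] [Algebra (GenExt.F n) F']
    [FiniteDimensional (GenExt.F n) F']
    (hdeg : Nat.Coprime (Module.finrank (GenExt.F n) F') 3) :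
    ¬ ∃ δ : F' ⊗[GenExt.F n] (GenExt.E n), δ ≠ 0 ∧
      Algebra.trace F' (F' ⊗[GenExt.F n] (GenExt.E n)) δ = 0 ∧
      Algebra.trace F' (F' ⊗[GenExt.F n] (GenExt.E n)) (δ ^ 3) = 0 := by
  rintro ⟨δ, hδ, htrace, htrace_cube⟩
  have : NeZero n := ⟨by rw [hn]; positivity⟩
  have hnot_dvd : ¬ 3 ∣ Module.finrank (GenExt.F n) F' :=
    (Nat.Prime.coprime_iff_not_dvd Nat.prime_three).mp hdeg.symm
  obtain ⟨M, Ω, _, _, _, _, _, x, hx⟩ := HermiteJoubert.exists_isAnisotropicGeneric h₁ h₂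
  have : CharZero M := (algebraMap M Ω).charZero
  have : IsAlgClosed Ω := IsAlgClosure.isAlgClosed M
  have hcard : Fintype.card (HermiteJoubert.Blocks k₁ k₂ k₃) = n := by simp [hn, add_assoc]
  exact hδ (hx.eq_zero_of_trace_eq_zero_of_generalExtension hcard hnot_dvd htrace htrace_cube)

end
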